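/- Every discounted stochastic game with a decomposable coarser transition kernel on the atomless part has a stationary Markov perfect equilibrium; that is, there exists a stationary Markov strategy profile f = (f_1,...,f_m) whose continuation values v_i(.,f) satisfy, for every player i and every state s, v_i(s,f) = max over x_i in A_i(s) of the integral over X_{-i} of [(1-beta_i) u_i(s, x_i, x_{-i}) + beta_i * integral over S of v_i(s_1,f) Q(ds_1 | s, x_i, x_{-i})] with respect to f_{-i}(dx_{-i} | s). -/

import Mathlib

open MeasureTheory Filter

/-- `D` is a `G`-atom for the measure `lam`: it has positive measure and every
measurable subset of `D` agrees modulo null sets with `D₁ ∩ D` for some `G`-measurable `D₁`. -/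
def IsGAtom {S : Type*} (mS : MeasurableSpace S) (G : MeasurableSpace S)
    (lam : @Measure S mS) (D : Set S) : Prop :=
  0 < lam D ∧ ∀ D₀ ⊆ D, MeasurableSet[mS] D₀ →
    ∃ D₁ : Set S, MeasurableSet[G] D₁ ∧ lam (symmDiff D₀ (D₁ ∩ D)) = 0

/-!
Partition the state space into finitely many cells. Replacing the transition densities by their
averages over the cells gives a finite stochastic game, which has approximate stationary equilibria
by Brouwer's theorem. Refine the partitions so that the densities become measurable in the limit;
this needs only countably many sets since the densities are sections of jointly measurable
functions on `S₁`. Along a subsequence the continuation values converge weakly to some `w`, and by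
Mazur's lemma `w` is pointwise a limit of convex combinations of the values of the approximating
equilibria. By Carathéodory's theorem and compactness `w(s)` is thus a mixture of equilibrium
payoffs `y k s` of the one-shot games with continuation values `w`.

It remains to replace the mixture by a selection. Because there are no `G`-atoms on `S₁`, a
Lyapunov-type theorem yields a measurable choice `κ(s)` of one of these equilibria for which the
`G`-conditional expectations of `y (κ s) s * ρ j s` and `w(s) * ρ j s` agree. Since the `qj j` are
`G`-measurable, `y (κ s) s` and `w(s)` then have the same integral against every transition
density, so the one-shot games are unchanged and the selected strategies with the values
`y (κ s) s` form a stationary equilibrium. At the atoms of positive mass weak convergence is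
pointwise convergence, so there the values `y k s` already coincide with `w(s)`.
-/

/-! ### Brouwer's fixed point theorem -/

section Determinant

open Metric Set
open scoped Topology NNReal

theorem det_one_add_smul_eq_sum_lagrange {K V : Type*} [Field K] [DecidableEq K] [AddCommGroup V]
    [Module K V] [FiniteDimensional K V] (f : V →ₗ[K] V) {s : Finset K}
    (hs : Module.finrank K V < s.card) (t : K) :
    LinearMap.det (1 + t • f) =
      ∑ c ∈ s, (Lagrange.basis s id c).eval t * LinearMap.det (1 + c • f) := by
  let M := LinearMap.toMatrix (Module.finBasis K V) (Module.finBasis K V) f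
  let P : Polynomial K := Matrix.det
    ((Polynomial.X : Polynomial K) • M.map Polynomial.C + (1 : Matrix _ _ K).map Polynomial.C)
  have eval_P (c : K) : P.eval c = LinearMap.det (1 + c • f) := by
    rw [← LinearMap.det_toMatrix (Module.finBasis K V), map_add, map_smul,
      Module.End.one_eq_id, LinearMap.toMatrix_id, ← Polynomial.coe_evalRingHom, RingHom.map_det]
    congr 1
    ext i j
    simp only [map_zero, map_one, Matrix.map_one, RingHom.mapMatrix_apply,
      Polynomial.coe_evalRingHom, Matrix.map_apply, Matrix.add_apply, Matrix.smul_apply,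
      smul_eq_mul, Polynomial.X_mul_C, Polynomial.eval_add, Polynomial.eval_mul, Polynomial.eval_C,
      Polynomial.eval_X, M, Matrix.one_apply, apply_ite (Polynomial.eval c), Polynomial.eval_one,
      Polynomial.eval_zero]
    ring
  have hdeg : P.degree < s.card := by
    refine Polynomial.degree_le_natDegree.trans_lt (Nat.cast_lt.2 (lt_of_le_of_lt ?_ hs))
    simpa only [Fintype.card_fin] using Polynomial.natDegree_det_X_add_C_le M 1
  rw [← eval_P, Lagrange.eq_interpolate (s := s) (v := id) Function.injective_id.injOn hdeg,
    Lagrange.interpolate_apply, Polynomial.eval_finsetSum]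
  refine Finset.sum_congr rfl fun c _ => ?_
  rw [Polynomial.eval_mul, Polynomial.eval_C, id, eval_P, mul_comm]

variable {E : Type*} [NormedAddCommGroup E] [NormedSpace ℝ E] [FiniteDimensional ℝ E]

theorem det_one_add_pos_of_norm_lt_one {A : E →L[ℝ] E} (hA : ‖A‖ < 1) : 0 < (1 + A).det := by
  have := FiniteDimensional.complete ℝ E
  have det_ne (t : ℝ) (ht : t ∈ Icc (0 : ℝ) 1) : (1 + t • A).det ≠ 0 := by
    have hlt : ‖-(t • A)‖ < 1 := by
      rw [norm_neg, norm_smul, Real.norm_of_nonneg ht.1]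
      exact (mul_le_of_le_one_left (norm_nonneg A) ht.2).trans_lt hA
    have hunit : IsUnit (1 + t • A) := by
      simpa only [sub_neg_eq_add] using isUnit_one_sub_of_norm_lt_one hlt
    exact ((hunit.map (ContinuousLinearMap.toLinearMapRingHom (R₁ := ℝ) (M₁ := E))).map
      LinearMap.det).ne_zero
  have hcont : ContinuousOn (fun t : ℝ => (1 + t • A).det) (Icc 0 1) :=
    (ContinuousLinearMap.continuous_det.comp (by fun_prop)).continuousOn
  by_contra! hneg
  obtain ⟨t, ht, h0⟩ := intermediate_value_Icc' zero_le_one hcont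
    (show (0 : ℝ) ∈ _ by simpa [ContinuousLinearMap.det] using hneg)
  exact det_ne t ht h0

theorem nonempty_inter_frontier_of_isPreconnected {Y : Type*} [TopologicalSpace Y] {s t : Set Y}
    (ht : IsPreconnected t) (hts : (t ∩ s).Nonempty) (hts' : (t ∩ sᶜ).Nonempty) :
    (t ∩ frontier s).Nonempty := by
  rw [frontier_eq_closure_inter_closure]
  refine isPreconnected_closed_iff.1 ht _ _ isClosed_closure isClosed_closure ?_
    (hts.mono <| inter_subset_inter_right t subset_closure)
    (hts'.mono <| inter_subset_inter_right t subset_closure)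
  exact (subset_univ t).trans <| (union_compl_self s).symm.subset.trans <|
    union_subset_union subset_closure subset_closure

theorem lipschitzWith_indicator_of_eqOn_frontier {E F : Type*} [NormedAddCommGroup E]
    [NormedSpace ℝ E] [NormedAddCommGroup F] {s : Set E} (hs : IsClosed s) {g : E → F} {L : ℝ≥0}
    (hg : LipschitzOnWith L g s) (hg0 : EqOn g 0 (frontier s)) :
    LipschitzWith L (s.indicator g) := by
  have across {x y : E} (hx : x ∈ s) (hy : y ∉ s) : dist (g x) 0 ≤ L * dist x y := by
    obtain ⟨z, hz, hzs⟩ := nonempty_inter_frontier_of_isPreconnected (s := s)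
      (convex_segment x y).isPreconnected ⟨x, left_mem_segment ℝ x y, hx⟩
      ⟨y, right_mem_segment ℝ x y, hy⟩
    have hxz : dist x z ≤ dist x y := by
      linarith [dist_add_dist_of_mem_segment hz, dist_nonneg (x := z) (y := y)]
    calc dist (g x) 0 = dist (g x) (g z) := by rw [hg0 hzs, Pi.zero_apply]
      _ ≤ L * dist x z := hg.dist_le_mul x hx z (hs.frontier_subset hzs)
      _ ≤ L * dist x y := by gcongr
  refine LipschitzWith.of_dist_le_mul fun x y => ?_
  by_cases hx : x ∈ s <;> by_cases hy : y ∈ s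
  · simpa only [indicator_of_mem hx, indicator_of_mem hy] using hg.dist_le_mul x hx y hy
  · simpa only [indicator_of_mem hx, indicator_of_notMem hy] using across hx hy
  · simpa only [indicator_of_notMem hx, indicator_of_mem hy, dist_comm] using across hy hx
  · simp only [indicator_of_notMem hx, indicator_of_notMem hy, dist_self]
    positivity

theorem bijective_id_add_of_lipschitzWith {E : Type*} [NormedAddCommGroup E] [CompleteSpace E]
    {g : E → E} {L : ℝ≥0} (hL : L < 1) (hg : LipschitzWith L g) :
    Function.Bijective fun x => x + g x := by
  refine Function.bijective_iff_existsUnique _ |>.2 fun y => ?_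
  have hc : ContractingWith L fun x => y - g x := ⟨hL, LipschitzWith.of_dist_le_mul fun a b => by
    simpa only [dist_sub_left] using hg.dist_le_mul a b⟩
  have fixed_iff (x : E) : x + g x = y ↔ Function.IsFixedPt (fun x => y - g x) x := by
    rw [Function.IsFixedPt, sub_eq_iff_eq_add, eq_comm]
  exact ⟨hc.fixedPoint, (fixed_iff _).2 hc.fixedPoint_isFixedPt,
    fun x hx => hc.fixedPoint_unique ((fixed_iff x).1 hx)⟩

variable [MeasurableSpace E] [BorelSpace E] (μ : Measure E) [μ.IsAddHaarMeasure]
  {s : Set E} {g : E → E} {g' : E → E →L[ℝ] E}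

theorem setIntegral_det_one_add_smul_fderivWithin {L : ℝ≥0} (hs : IsClosed s) (hconv : Convex ℝ s)
    (hg : ∀ x ∈ s, HasFDerivWithinAt g (g' x) s x) (hL : ∀ x ∈ s, ‖g' x‖ ≤ L)
    (hg0 : EqOn g 0 (frontier s)) {t : ℝ≥0} (ht : t * L < 1) :
    ∫ x in s, (1 + (t : ℝ) • g' x).det ∂μ = μ.real s := by
  have := FiniteDimensional.complete ℝ E
  let h : E → E := fun x => x + s.indicator ((t : ℝ) • g) x
  have hlip : LipschitzWith (t * L) (s.indicator ((t : ℝ) • g)) := by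
    refine lipschitzWith_indicator_of_eqOn_frontier hs ?_ fun x hx => by simp [hg0 hx]
    refine hconv.lipschitzOnWith_of_nnnorm_hasFDerivWithin_le
      (fun x hx => (hg x hx).const_smul (t : ℝ)) fun x hx => ?_
    rw [← NNReal.coe_le_coe, coe_nnnorm, norm_smul, NNReal.norm_eq, NNReal.coe_mul]
    exact mul_le_mul_of_nonneg_left (hL x hx) t.coe_nonneg
  have hbij : h.Bijective := bijective_id_add_of_lipschitzWith ht hlip
  have himage : h '' s = s := by
    have hcompl : h '' sᶜ = sᶜ := by
      have : EqOn h id sᶜ := fun x hx => by simp [h, indicator_of_notMem hx]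
      rw [this.image_eq, image_id]
    rwa [image_compl_eq hbij, compl_inj_iff] at hcompl
  have hderiv (x) (hx : x ∈ s) : HasFDerivWithinAt h (1 + (t : ℝ) • g' x) s x :=
    ((hasFDerivWithinAt_id x s).add ((hg x hx).const_smul (t : ℝ))).congr
      (fun y hy => by simp [h, indicator_of_mem hy]) (by simp [h, indicator_of_mem hx])
  have det_pos (x) (hx : x ∈ s) : 0 < (1 + (t : ℝ) • g' x).det := by
    refine det_one_add_pos_of_norm_lt_one (lt_of_le_of_lt ?_ (NNReal.coe_lt_coe.2 ht))
    rw [norm_smul, NNReal.norm_eq, NNReal.coe_mul]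
    exact mul_le_mul_of_nonneg_left (hL x hx) t.coe_nonneg
  have hvol := integral_image_eq_integral_abs_det_fderiv_smul μ hs.measurableSet hderiv
    hbij.injective.injOn fun _ => (1 : ℝ)
  rw [himage, setIntegral_const, smul_eq_mul, mul_one] at hvol
  rw [hvol]
  refine setIntegral_congr_fun hs.measurableSet fun x hx => ?_
  simp only [abs_of_pos (det_pos x hx), smul_eq_mul, mul_one]

-- Both sides are polynomials in the factor `t` of the previous lemma that agree for small `t`.
theorem setIntegral_det_one_add_fderivWithin (hs : IsCompact s) (hconv : Convex ℝ s)
    (hg : ∀ x ∈ s, HasFDerivWithinAt g (g' x) s x) (hg' : ContinuousOn g' s)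
    (hg0 : EqOn g 0 (frontier s)) :
    ∫ x in s, (1 + g' x).det ∂μ = μ.real s := by
  obtain ⟨L, hL0, hL⟩ : ∃ L : ℝ≥0, 0 < L ∧ ∀ x ∈ s, ‖g' x‖ ≤ L := by
    obtain ⟨L, hL⟩ := hs.exists_bound_of_continuousOn hg'
    exact ⟨L.toNNReal + 1, by positivity, fun x hx => (hL x hx).trans <|
      (Real.le_coe_toNNReal L).trans (by simp)⟩
  obtain ⟨T, hT, hTcard⟩ := (Ioo_infinite (a := (0 : ℝ)) (b := (L : ℝ)⁻¹)
    (by positivity)).exists_subset_card_eq (Module.finrank ℝ E + 1)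
  have hcard : Module.finrank ℝ E < T.card := by rw [hTcard]; exact Nat.lt_succ_self _
  have hnode (c) (hc : c ∈ T) : ∫ x in s, (1 + c • g' x).det ∂μ = μ.real s := by
    have hc0 : 0 < c := (hT hc).1
    lift c to ℝ≥0 using hc0.le
    refine setIntegral_det_one_add_smul_fderivWithin μ hs.isClosed hconv hg hL hg0 ?_
    rw [← lt_inv_mul_iff₀' hL0, mul_one]
    exact_mod_cast (hT hc).2
  have hint (c : ℝ) : IntegrableOn (fun x => (1 + c • g' x).det) s μ :=
    ContinuousOn.integrableOn_compact hs <| ContinuousLinearMap.continuous_det.comp_continuousOn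
      (continuousOn_const.add (hg'.const_smul c))
  have sum_basis : ∑ c ∈ T, (Lagrange.basis T id c).eval 1 = (1 : ℝ) := by
    rw [← Polynomial.eval_finsetSum, Lagrange.sum_basis Function.injective_id.injOn
      (Finset.card_pos.1 (Nat.zero_lt_of_lt hcard)), Polynomial.eval_one]
  calc ∫ x in s, (1 + g' x).det ∂μ
      = ∫ x in s, ∑ c ∈ T, (Lagrange.basis T id c).eval 1 * (1 + c • g' x).det ∂μ := by
        refine integral_congr_ae (.of_forall fun x => ?_)
        have := det_one_add_smul_eq_sum_lagrange (g' x : E →ₗ[ℝ] E) hcard 1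
        rwa [one_smul] at this
    _ = ∑ c ∈ T, (Lagrange.basis T id c).eval 1 * μ.real s := by
        rw [integral_finsetSum _ fun c _ => (hint c).const_mul _]
        exact Finset.sum_congr rfl fun c hc => by rw [integral_const_mul, hnode c hc]
    _ = μ.real s := by rw [← Finset.sum_mul, sum_basis, one_mul]

end Determinant

section Brouwer

open Metric Set
open scoped Topology RealInnerProductSpace

variable {E : Type*} [NormedAddCommGroup E] [InnerProductSpace ℝ E]

theorem det_eq_zero_of_norm_eq_on [FiniteDimensional ℝ E] {s : Set E} {x : E} {r : E → E}
    {r' : E →L[ℝ] E} (hs : UniqueDiffWithinAt ℝ s x) (hr : HasFDerivWithinAt r r' s x)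
    (hnorm : ∀ y ∈ s, ‖r y‖ = ‖r x‖) (hrx : r x ≠ 0) : r'.det = 0 := by
  have horth (v : E) : ⟪r x, r' v⟫ = 0 := by
    have hsq := hr.norm_sq
    have hconst : HasFDerivWithinAt (fun y => ‖r y‖ ^ 2) (0 : E →L[ℝ] ℝ) s x :=
      (hasFDerivWithinAt_const (‖r x‖ ^ 2) x s).congr (fun y hy => by rw [hnorm y hy]) rfl
    simpa using congrArg (· v) (hs.eq hsq hconst)
  by_contra hdet
  have hunit : IsUnit (r' : E →ₗ[ℝ] E) :=
    (LinearMap.isUnit_iff_isUnit_det _).2 (isUnit_iff_ne_zero.2 hdet)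
  obtain ⟨v, hv⟩ := (Module.End.isUnit_iff _ |>.1 hunit).2 (r x)
  have := horth v
  rw [show r' v = r x from hv, inner_self_eq_zero] at this
  exact hrx this

theorem not_exists_contDiffOn_retraction [FiniteDimensional ℝ E] :
    ¬ ∃ r : E → E, ContDiffOn ℝ 1 r (closedBall 0 1) ∧ MapsTo r (closedBall 0 1) (sphere 0 1) ∧
      EqOn r id (sphere 0 1) := by
  rintro ⟨r, hr, hmaps, hfix⟩
  borelize E
  set B := closedBall (0 : E) 1
  have hB : UniqueDiffOn ℝ B := uniqueDiffOn_convex (convex_closedBall 0 1)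
    ⟨0, ball_subset_interior_closedBall (mem_ball_self one_pos)⟩
  have hderiv (x) (hx : x ∈ B) : HasFDerivWithinAt r (fderivWithin ℝ r B x) B x :=
    (hr.differentiableOn one_ne_zero x hx).hasFDerivWithinAt
  have hdet (x) (hx : x ∈ B) :
      (1 + (fderivWithin ℝ r B x - ContinuousLinearMap.id ℝ E)).det = 0 := by
    rw [← ContinuousLinearMap.one_def, add_sub_cancel]
    have hnorm (y) (hy : y ∈ B) : ‖r y‖ = 1 := mem_sphere_zero_iff_norm.1 (hmaps hy)
    exact det_eq_zero_of_norm_eq_on (hB x hx) (hderiv x hx)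
      (fun y hy => by rw [hnorm y hy, hnorm x hx]) (norm_ne_zero_iff.1 (by simp [hnorm x hx]))
  have hvol := setIntegral_det_one_add_fderivWithin (volume : Measure E) (isCompact_closedBall 0 1)
    (convex_closedBall 0 1) (fun x hx => (hderiv x hx).sub (hasFDerivWithinAt_id x B))
    ((hr.continuousOn_fderivWithin hB le_rfl).sub continuousOn_const) fun x hx => by
      have hx' : x ∈ sphere (0 : E) 1 := frontier_closedBall_subset_sphere hx
      simp [hfix hx']
  rw [setIntegral_congr_fun measurableSet_closedBall hdet, integral_zero] at hvol
  exact (ENNReal.toReal_pos (measure_closedBall_pos volume (0 : E) one_pos).ne'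
    measure_closedBall_lt_top.ne).ne hvol

/-- The parameter at which the ray from `x` in direction `w` leaves the unit ball: the larger root
`t` of `‖x + t • w‖ ^ 2 = 1`, for `‖x‖ ≤ 1` and `w ≠ 0`. -/
noncomputable def rayParam (x w : E) : ℝ :=
  (-⟪x, w⟫ + √(⟪x, w⟫ ^ 2 + ‖w‖ ^ 2 * (1 - ‖x‖ ^ 2))) / ‖w‖ ^ 2

theorem norm_add_rayParam_smul {x w : E} (hx : ‖x‖ ≤ 1) (hw : w ≠ 0) :
    ‖x + rayParam x w • w‖ = 1 := by
  have hw2 : 0 < ‖w‖ ^ 2 := by positivity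
  have hx2 : ‖x‖ ^ 2 ≤ 1 := pow_le_one₀ (norm_nonneg x) hx
  have hroot : (rayParam x w * ‖w‖ ^ 2 + ⟪x, w⟫) ^ 2 = ⟪x, w⟫ ^ 2 + ‖w‖ ^ 2 * (1 - ‖x‖ ^ 2) := by
    rw [rayParam, div_mul_cancel₀ _ hw2.ne', neg_add_cancel_comm,
      Real.sq_sqrt (by nlinarith [sq_nonneg ⟪x, w⟫])]
  have hsq : ‖x + rayParam x w • w‖ ^ 2 = 1 := by
    rw [norm_add_sq_real, inner_smul_right, norm_smul, mul_pow, Real.norm_eq_abs, sq_abs]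
    refine mul_left_cancel₀ hw2.ne' ?_
    linear_combination hroot
  exact (pow_eq_one_iff_of_nonneg (norm_nonneg _) two_ne_zero).1 hsq

theorem rayParam_eq_zero {x w : E} (hx : ‖x‖ = 1) (hw : 0 ≤ ⟪x, w⟫) : rayParam x w = 0 := by
  simp [rayParam, hx, Real.sqrt_sq hw]

theorem inner_self_sub_pos {x y : E} (hx : ‖x‖ = 1) (hy : ‖y‖ ≤ 1) (hxy : y ≠ x) :
    0 < ⟪x, x - y⟫ := by
  have hpos : 0 < ‖x - y‖ ^ 2 := by
    have := norm_sub_pos_iff.2 hxy.symm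
    positivity
  rw [norm_sub_sq_real, hx] at hpos
  rw [inner_sub_right, real_inner_self_eq_norm_sq, hx]
  nlinarith [norm_nonneg y]

theorem exists_fixedPoint_of_contDiffOn_closedBall [FiniteDimensional ℝ E] {F : E → E}
    (hF : ContDiffOn ℝ 1 F (closedBall 0 1)) (hmaps : MapsTo F (closedBall 0 1) (closedBall 0 1)) :
    ∃ x ∈ closedBall 0 1, F x = x := by
  by_contra! hno
  set B := closedBall (0 : E) 1
  have hw (x) (hx : x ∈ B) : x - F x ≠ 0 := sub_ne_zero.2 (hno x hx).symm
  have hwC : ContDiffOn ℝ 1 (fun x => x - F x) B := contDiffOn_id.sub hF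
  have hinner (x) (hx : ‖x‖ = 1) : 0 < ⟪x, x - F x⟫ := by
    have hxB : x ∈ B := mem_closedBall_zero_iff.2 hx.le
    exact inner_self_sub_pos hx (mem_closedBall_zero_iff.1 (hmaps hxB)) (hno x hxB)
  have hdisc (x) (hx : x ∈ B) :
      ⟪x, x - F x⟫ ^ 2 + ‖x - F x‖ ^ 2 * (1 - ‖x‖ ^ 2) ≠ 0 := by
    have hpos : 0 < ‖x - F x‖ ^ 2 := by
      have := norm_pos_iff.2 (hw x hx)
      positivity
    rcases (mem_closedBall_zero_iff.1 hx).lt_or_eq with h | h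
    · have : ‖x‖ ^ 2 < 1 := pow_lt_one₀ (norm_nonneg x) h two_ne_zero
      nlinarith [sq_nonneg ⟪x, x - F x⟫, mul_pos hpos (sub_pos.2 this)]
    · have := hinner x h
      simp only [h, one_pow, sub_self, mul_zero, add_zero]
      positivity
  refine not_exists_contDiffOn_retraction (E := E)
    ⟨fun x => x + rayParam x (x - F x) • (x - F x), ?_, fun x hx => ?_, fun x hx => ?_⟩
  · refine contDiffOn_id.add (ContDiffOn.smul (ContDiffOn.div ?_ (hwC.norm_sq ℝ) fun x hx =>
      (pow_pos (norm_pos_iff.2 (hw x hx)) 2).ne') hwC)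
    have hin := contDiffOn_id.inner ℝ hwC
    exact hin.neg.add (((hin.pow 2).add ((hwC.norm_sq ℝ).mul
      (contDiffOn_const.sub (contDiffOn_id.norm_sq ℝ)))).sqrt hdisc)
  · exact mem_sphere_zero_iff_norm.2
      (norm_add_rayParam_smul (mem_closedBall_zero_iff.1 hx) (hw x hx))
  · have hx1 := mem_sphere_zero_iff_norm.1 hx
    simp [rayParam_eq_zero hx1 (hinner x hx1).le]

theorem exists_fixedPoint_of_contDiff_of_norm_le [FiniteDimensional ℝ E] {F : E → E} {R : ℝ}
    (hF : ContDiff ℝ 1 F) (hR : 0 < R) (hb : ∀ x, ‖F x‖ ≤ R) : ∃ x, F x = x := by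
  obtain ⟨x, -, hx⟩ := exists_fixedPoint_of_contDiffOn_closedBall
    (F := fun x => R⁻¹ • F (R • x))
    (((hF.comp (contDiff_id.const_smul R)).const_smul R⁻¹).contDiffOn)
    fun x _ => by
      rw [mem_closedBall_zero_iff, norm_smul, Real.norm_of_nonneg (by positivity),
        inv_mul_le_one₀ hR]
      exact hb _
  exact ⟨R • x, by rwa [inv_smul_eq_iff₀ hR.ne'] at hx⟩

theorem exists_fixedPoint_of_continuous_of_norm_le_of_inner [FiniteDimensional ℝ E]
    {F : E → E} {R : ℝ} (hF : Continuous F) (hb : ∀ x, ‖F x‖ ≤ R) : ∃ x, F x = x := by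
  by_contra! hno
  have hR : 0 ≤ R := (norm_nonneg _).trans (hb 0)
  obtain ⟨y, -, hy⟩ := (isCompact_closedBall (0 : E) (R + 1)).exists_isMinOn
    ⟨0, mem_closedBall_self (by positivity)⟩ (hF.dist continuous_id).continuousOn
  obtain ⟨g, hg, hgF, -⟩ := hF.exists_contDiff_approx 1 (ε := fun _ => min (dist (F y) y) 1)
    continuous_const fun _ => lt_min (dist_pos.2 (hno y)) one_pos
  have hgb (x : E) : ‖g x‖ ≤ R + 1 := by
    have := dist_triangle_right (g x) 0 (F x)
    rw [dist_zero_right, dist_zero_left] at this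
    linarith [hb x, (hgF x).trans_le (min_le_right _ _)]
  obtain ⟨x, hx⟩ := exists_fixedPoint_of_contDiff_of_norm_le hg (by positivity) hgb
  have hxy : dist (F y) y ≤ dist (F x) x := hy (mem_closedBall_zero_iff.2 (hx ▸ hgb x))
  have hlt : dist x (F x) < dist (F y) y := by
    simpa only [hx] using (hgF x).trans_le (min_le_left _ _)
  exact (hlt.trans_le hxy).ne (dist_comm _ _)

end Brouwer

theorem exists_fixedPoint_of_continuous_of_norm_le {V : Type*} [NormedAddCommGroup V]
    [NormedSpace ℝ V] [FiniteDimensional ℝ V] {F : V → V} {R : ℝ} (hF : Continuous F)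
    (hb : ∀ x, ‖F x‖ ≤ R) : ∃ x, F x = x := by
  obtain ⟨x, hx⟩ := exists_fixedPoint_of_continuous_of_norm_le_of_inner
    (F := fun x => toEuclidean (F (toEuclidean.symm x))) (by fun_prop)
    (R := ‖(toEuclidean : V ≃L[ℝ] _).toContinuousLinearMap‖ * R) fun x =>
      (toEuclidean : V ≃L[ℝ] _).toContinuousLinearMap.le_opNorm_of_le (hb _)
  exact ⟨toEuclidean.symm x, by rw [← ContinuousLinearEquiv.symm_apply_apply toEuclidean (F _), hx]⟩

/-! ### Approximate equilibria of finite stochastic games -/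

section FiniteGame

variable {A : Type*}

/-- The logit choice probabilities over the feasible set `F` for the payoffs `z` at
temperature `τ`. -/
noncomputable def logit (τ : ℝ) (F : Finset A) (z : A → ℝ) (a : A) : ℝ :=
  (F : Set A).indicator (fun a => Real.exp (z a / τ) / ∑ a' ∈ F, Real.exp (z a' / τ)) a

theorem logit_nonneg (τ : ℝ) (F : Finset A) (z : A → ℝ) (a : A) : 0 ≤ logit τ F z a :=
  Set.indicator_nonneg (fun _ _ => by positivity) a

theorem logit_eq_zero_of_notMem {τ : ℝ} {F : Finset A} {z : A → ℝ} {a : A} (ha : a ∉ F) :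
    logit τ F z a = 0 :=
  Set.indicator_of_notMem (by simpa using ha) _

theorem sum_logit [Fintype A] (τ : ℝ) {F : Finset A} (hF : F.Nonempty) (z : A → ℝ) :
    ∑ a, logit τ F z a = 1 := by
  have hpos : 0 < ∑ a ∈ F, Real.exp (z a / τ) := Finset.sum_pos (fun _ _ => Real.exp_pos _) hF
  simp only [logit, Finset.sum_indicator_subset _ (Finset.subset_univ F), ← Finset.sum_div,
    div_self hpos.ne']

theorem continuous_logit (τ : ℝ) {F : Finset A} (hF : F.Nonempty) (a : A) :
    Continuous fun z => logit τ F z a := by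
  by_cases ha : a ∈ F
  · simp only [logit, Set.indicator_of_mem (Finset.mem_coe.2 ha)]
    exact (by fun_prop : Continuous fun z : A → ℝ => Real.exp (z a / τ)).div (by fun_prop)
      fun z => (Finset.sum_pos (fun _ _ => Real.exp_pos _) hF).ne'
  · simpa only [logit_eq_zero_of_notMem ha] using continuous_const

theorem logit_mul_sub_le {τ : ℝ} (hτ : 0 < τ) {F : Finset A} (z : A → ℝ) {a₀ : A} (ha₀ : a₀ ∈ F)
    (a : A) : logit τ F z a * (z a₀ - z a) ≤ τ := by
  rcases le_or_gt (z a₀ - z a) 0 with hle | hgt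
  · exact (mul_nonpos_of_nonneg_of_nonpos (logit_nonneg τ F z a) hle).trans hτ.le
  by_cases ha : a ∈ F
  · have hexp : (z a₀ - z a) / τ ≤ Real.exp ((z a₀ - z a) / τ) := by
      linarith [Real.add_one_le_exp ((z a₀ - z a) / τ)]
    calc logit τ F z a * (z a₀ - z a)
        ≤ Real.exp (z a / τ) / Real.exp (z a₀ / τ) * (z a₀ - z a) := by
          rw [logit, Set.indicator_of_mem (Finset.mem_coe.2 ha)]
          gcongr
          exact Finset.single_le_sum (f := fun a => Real.exp (z a / τ))
            (fun _ _ => (Real.exp_pos _).le) ha₀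
      _ = (Real.exp ((z a₀ - z a) / τ))⁻¹ * (z a₀ - z a) := by
          rw [← Real.exp_sub, ← Real.exp_neg, ← sub_div, ← neg_div, neg_sub]
      _ ≤ τ := by rwa [inv_mul_le_iff₀ (Real.exp_pos _), ← div_le_iff₀ hτ]
  · rw [logit_eq_zero_of_notMem ha, zero_mul]
    exact hτ.le

theorem le_sum_logit_mul_add [Fintype A] {τ : ℝ} (hτ : 0 < τ) {F : Finset A} (z : A → ℝ) {a₀ : A}
    (ha₀ : a₀ ∈ F) : z a₀ ≤ ∑ a, logit τ F z a * z a + Fintype.card A * τ := by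
  have hsum : ∑ a, logit τ F z a * (z a₀ - z a) ≤ Fintype.card A * τ := by
    simpa using Finset.sum_le_sum fun a (_ : a ∈ Finset.univ) => logit_mul_sub_le hτ z ha₀ a
  simp only [mul_sub, Finset.sum_sub_distrib, ← Finset.sum_mul, sum_logit τ ⟨a₀, ha₀⟩ z] at hsum
  linarith

theorem abs_sum_mul_le_sum_mul {K : Type*} [Fintype K] {w z : K → ℝ} {C : ℝ}
    (hw : ∀ k, 0 ≤ w k) (hz : ∀ k, |z k| ≤ C) : |∑ k, w k * z k| ≤ (∑ k, w k) * C := by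
  rw [Finset.sum_mul]
  refine (Finset.abs_sum_le_sum_abs _ _).trans (Finset.sum_le_sum fun k _ => ?_)
  rw [abs_mul, abs_of_nonneg (hw k)]
  exact mul_le_mul_of_nonneg_left (hz k) (hw k)

variable {ι : Type*} {A : ι → Type*} {T : Type*} [Fintype T]

/-- The payoff of player `i` at state `c` of a finite stochastic game when the action profile `b`
is played and the continuation values are `v`. -/
def finitePayoff (β : ι → ℝ) (u : ι → T → (∀ j, A j) → ℝ) (κ : T → (∀ j, A j) → T → ℝ)
    (v : ι → T → ℝ) (i : ι) (c : T) (b : ∀ j, A j) : ℝ :=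
  (1 - β i) * u i c b + β i * ∑ c', κ c b c' * v i c'

variable {β : ι → ℝ} {u : ι → T → (∀ j, A j) → ℝ} {κ : T → (∀ j, A j) → T → ℝ} {C : ℝ}

theorem abs_finitePayoff_le (hβ : ∀ i, β i ∈ Set.Icc (0 : ℝ) 1) (hC : 0 ≤ C)
    (hu : ∀ i c b, |u i c b| ≤ C) (hκ₀ : ∀ c b c', 0 ≤ κ c b c') (hκ₁ : ∀ c b, ∑ c', κ c b c' ≤ 1)
    {v : ι → T → ℝ} (hv : ∀ i c, |v i c| ≤ C) (i : ι) (c : T) (b : ∀ j, A j) :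
    |finitePayoff β u κ v i c b| ≤ C := by
  have hcont : |∑ c', κ c b c' * v i c'| ≤ C :=
    (abs_sum_mul_le_sum_mul (hκ₀ c b) (hv i)).trans (mul_le_of_le_one_left hC (hκ₁ c b))
  have hmem := convex_Icc (-C) C (abs_le.1 (hu i c b)) (abs_le.1 hcont)
    (sub_nonneg.2 (hβ i).2) (hβ i).1 (sub_add_cancel _ _)
  exact abs_le.2 hmem

variable [Fintype ι] [DecidableEq ι] [∀ i, Fintype (A i)]

/-- The expected value of `U` when each player `j` plays `a : A j` with probability `p j a`,
independently of the others. -/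
def mixedPayoff (p : ∀ j, A j → ℝ) (U : (∀ j, A j) → ℝ) : ℝ :=
  ∑ b, (∏ j, p j (b j)) * U b

theorem abs_mixedPayoff_le {p : ∀ j, A j → ℝ} (hp₀ : ∀ i a, 0 ≤ p i a) (hp₁ : ∀ i, ∑ a, p i a = 1)
    {U : (∀ j, A j) → ℝ} {M : ℝ} (hU : ∀ b, |U b| ≤ M) : |mixedPayoff p U| ≤ M := by
  have hprod (b : ∀ j, A j) : 0 ≤ ∏ j, p j (b j) := Finset.prod_nonneg fun j _ => hp₀ j (b j)
  refine (abs_sum_mul_le_sum_mul hprod hU).trans_eq ?_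
  rw [← Fintype.prod_sum, Finset.prod_congr rfl fun i _ => hp₁ i, Finset.prod_const_one, one_mul]

theorem sum_mul_mixedPayoff_update {p : ∀ j, A j → ℝ} {i : ι}
    (hp : ∑ a, p i a = 1) (U : (∀ j, A j) → ℝ) :
    ∑ a, p i a * mixedPayoff p (fun b => U (Function.update b i a)) = mixedPayoff p U := by
  have hprod (b : ∀ j, A j) : ∏ j, p j (b j) = p i (b i) * ∏ j ∈ Finset.univ.erase i, p j (b j) :=
    (Finset.mul_prod_erase Finset.univ (fun j => p j (b j)) (Finset.mem_univ i)).symm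
  have herase (b : ∀ j, A j) (a) : ∏ j ∈ Finset.univ.erase i, p j (Function.update b i a j) =
      ∏ j ∈ Finset.univ.erase i, p j (b j) := Finset.prod_congr rfl fun j hj => by
    rw [Function.update_of_ne (Finset.ne_of_mem_erase hj)]
  simp only [mixedPayoff, Finset.mul_sum]
  calc ∑ a, ∑ b, p i a * ((∏ j, p j (b j)) * U (Function.update b i a))
      = ∑ x : A i × ∀ j, A j, p i x.1 * ((∏ j, p j (x.2 j)) * U (Function.update x.2 i x.1)) :=
        Fintype.sum_prod_type' _ |>.symm
    _ = ∑ x : A i × ∀ j, A j, p i x.1 * ((∏ j, p j (x.2 j)) * U x.2) := by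
        refine Finset.sum_nbij' (fun x => (x.2 i, Function.update x.2 i x.1))
          (fun x => (x.2 i, Function.update x.2 i x.1)) (by simp) (by simp) (by simp) (by simp)
          fun x _ => ?_
        rw [hprod x.2, hprod (Function.update x.2 i x.1), herase, Function.update_self]
        ring
    _ = ∑ b, (∏ j, p j (b j)) * U b := by
        rw [Fintype.sum_prod_type]
        simp only [← Finset.mul_sum, ← Finset.sum_mul, hp, one_mul]

theorem continuous_mixedPayoff {Y : Type*} [TopologicalSpace Y] {p : Y → ∀ j, A j → ℝ}
    {U : Y → (∀ j, A j) → ℝ} (hp : ∀ i a, Continuous fun y => p y i a)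
    (hU : ∀ b, Continuous fun y => U y b) : Continuous fun y => mixedPayoff (p y) (U y) :=
  continuous_finsetSum _ fun b _ => (continuous_finsetProd _ fun j _ => hp j (b j)).mul (hU b)

theorem exists_logit_equilibrium (hβ : ∀ i, β i ∈ Set.Icc (0 : ℝ) 1) (hC : 0 ≤ C)
    (hu : ∀ i c b, |u i c b| ≤ C) (hκ₀ : ∀ c b c', 0 ≤ κ c b c') (hκ₁ : ∀ c b, ∑ c', κ c b c' ≤ 1)
    {F : T → ∀ i, Finset (A i)} (hF : ∀ c i, (F c i).Nonempty) (τ : ℝ) :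
    ∃ (z : T → ∀ i, A i → ℝ) (v : ι → T → ℝ), (∀ i c, |v i c| ≤ C) ∧
      (∀ i c, v i c = mixedPayoff (fun j => logit τ (F c j) (z c j)) (finitePayoff β u κ v i c)) ∧
      ∀ c i a, z c i a = mixedPayoff (fun j => logit τ (F c j) (z c j))
        fun b => finitePayoff β u κ v i c (Function.update b i a) := by
  let p (z : T → ∀ i, A i → ℝ) (c : T) (i : ι) : A i → ℝ := logit τ (F c i) (z c i)
  have hp₀ (z c i a) : 0 ≤ p z c i a := logit_nonneg _ _ _ _
  have hp₁ (z c i) : ∑ a, p z c i a = 1 := sum_logit τ (hF c i) _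
  let clip (v : ι → T → ℝ) (i : ι) (c : T) : ℝ := max (-C) (min C (v i c))
  have abs_clip_le (v i c) : |clip v i c| ≤ C :=
    abs_le.2 ⟨le_max_left _ _, max_le (by linarith) (min_le_left _ _)⟩
  let U (v : ι → T → ℝ) (i : ι) (c : T) : (∀ j, A j) → ℝ := finitePayoff β u κ (clip v) i c
  have abs_U_le (v i c b) : |U v i c b| ≤ C :=
    abs_finitePayoff_le hβ hC hu hκ₀ hκ₁ (abs_clip_le v) i c b
  let Φ (x : (T → ∀ i, A i → ℝ) × (ι → T → ℝ)) : (T → ∀ i, A i → ℝ) × (ι → T → ℝ) :=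
    (fun c i a => mixedPayoff (p x.1 c) fun b => U x.2 i c (Function.update b i a),
      fun i c => mixedPayoff (p x.1 c) (U x.2 i c))
  have hp_cont (c i a) : Continuous fun x : (T → ∀ i, A i → ℝ) × (ι → T → ℝ) => p x.1 c i a :=
    (continuous_logit τ (hF c i) a).comp (by fun_prop)
  have hU_cont (i c b) : Continuous fun x : (T → ∀ i, A i → ℝ) × (ι → T → ℝ) => U x.2 i c b := by
    simp only [U, finitePayoff, clip]
    fun_prop
  have hΦ : Continuous Φ := .prodMk
    (continuous_pi fun c => continuous_pi fun i => continuous_pi fun _ =>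
      continuous_mixedPayoff (hp_cont c) fun _ => hU_cont i c _)
    (continuous_pi fun i => continuous_pi fun c => continuous_mixedPayoff (hp_cont c) (hU_cont i c))
  obtain ⟨⟨z, v⟩, hx⟩ := exists_fixedPoint_of_continuous_of_norm_le hΦ (R := C) fun x => by
    simp only [Φ, Prod.norm_def, max_le_iff, pi_norm_le_iff_of_nonneg hC, Real.norm_eq_abs]
    exact ⟨fun c i a => abs_mixedPayoff_le (hp₀ _ c) (hp₁ _ c) fun b => abs_U_le _ _ _ _,
      fun i c => abs_mixedPayoff_le (hp₀ _ c) (hp₁ _ c) (abs_U_le _ _ _)⟩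
  have hz (c i a) : mixedPayoff (p z c) (fun b => U v i c (Function.update b i a)) = z c i a :=
    congrArg (fun x => x.1 c i a) hx
  have hv (i c) : mixedPayoff (p z c) (U v i c) = v i c := congrArg (fun x => x.2 i c) hx
  have hvC (i c) : |v i c| ≤ C := by
    rw [← hv]
    exact abs_mixedPayoff_le (hp₀ _ c) (hp₁ _ c) (abs_U_le _ _ _)
  have hclip : clip v = v := by
    funext i c
    simp only [clip, min_eq_right (abs_le.1 (hvC i c)).2, max_eq_right (abs_le.1 (hvC i c)).1]
  simp only [U, hclip] at hz hv
  exact ⟨z, v, hvC, fun i c => (hv i c).symm, fun c i a => (hz c i a).symm⟩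

theorem exists_approx_equilibrium (hβ : ∀ i, β i ∈ Set.Icc (0 : ℝ) 1) (hC : 0 ≤ C)
    (hu : ∀ i c b, |u i c b| ≤ C) (hκ₀ : ∀ c b c', 0 ≤ κ c b c') (hκ₁ : ∀ c b, ∑ c', κ c b c' ≤ 1)
    {F : T → ∀ i, Finset (A i)} (hF : ∀ c i, (F c i).Nonempty) {ε : ℝ} (hε : 0 < ε) :
    ∃ (p : T → ∀ i, A i → ℝ) (v : ι → T → ℝ),
      (∀ c i a, 0 ≤ p c i a) ∧ (∀ c i, ∑ a, p c i a = 1) ∧ (∀ c i, ∀ a ∉ F c i, p c i a = 0) ∧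
      (∀ i c, |v i c| ≤ C) ∧ (∀ i c, v i c = mixedPayoff (p c) (finitePayoff β u κ v i c)) ∧
      ∀ i c, ∀ a ∈ F c i,
        mixedPayoff (p c) (fun b => finitePayoff β u κ v i c (Function.update b i a)) ≤
          v i c + ε := by
  obtain ⟨τ, hτ, hτε⟩ : ∃ τ > 0, ∀ i, Fintype.card (A i) * τ ≤ ε := by
    refine ⟨ε / (1 + ∑ i, (Fintype.card (A i) : ℝ)), by positivity, fun i => ?_⟩
    rw [mul_div_assoc', div_le_iff₀ (by positivity), mul_comm]
    gcongr
    have := Finset.single_le_sum (f := fun i => (Fintype.card (A i) : ℝ))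
      (fun _ _ => by positivity) (Finset.mem_univ i)
    linarith
  obtain ⟨z, v, hvC, hv, hz⟩ := exists_logit_equilibrium hβ hC hu hκ₀ hκ₁ hF τ
  refine ⟨fun c i => logit τ (F c i) (z c i), v, fun c i a => logit_nonneg _ _ _ _,
    fun c i => sum_logit τ (hF c i) _, fun c i a ha => logit_eq_zero_of_notMem ha, hvC, hv,
    fun i c a ha => ?_⟩
  have hmean : ∑ a, logit τ (F c i) (z c i) a * z c i a = v i c := by
    rw [hv, ← sum_mul_mixedPayoff_update (i := i) (sum_logit τ (hF c i) _)]
    exact Finset.sum_congr rfl fun a _ => by rw [← hz]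
  rw [← hz, ← hmean]
  exact (le_sum_logit_mul_add hτ _ ha).trans (by gcongr; exact hτε i)

end FiniteGame

/-! ### Purification relative to a σ-algebra without atoms -/

section Purification

variable {S ι : Type*} {G mS : MeasurableSpace S} {μ : Measure S}

theorem exists_measurableSet_hull [IsFiniteMeasure μ] (hG : G ≤ mS) {D : Set S}
    (hD : MeasurableSet D) :
    ∃ H, MeasurableSet[G] H ∧ μ (D \ H) = 0 ∧
      ∀ C, MeasurableSet[G] C → C ⊆ H → μ (C ∩ D) = 0 → μ C = 0 := by
  set f : S → ℝ := μ[D.indicator 1|G]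
  have hf {C : Set S} (hC : MeasurableSet[G] C) : ∫ x in C, f x ∂μ = μ.real (D ∩ C) := by
    rw [setIntegral_condExp hG ((integrable_const 1).indicator hD) hC,
      integral_indicator_one hD, measureReal_restrict_apply hD]
  have hfm : Measurable[G] f := stronglyMeasurable_condExp.measurable
  have hH : MeasurableSet[G] {x | 0 < f x} := hfm measurableSet_Ioi
  refine ⟨{x | 0 < f x}, hH, ?_, fun C hC hCH hCD => ?_⟩
  · have hle : μ.real (D ∩ {x | 0 < f x}ᶜ) ≤ 0 := by
      rw [← hf hH.compl]
      exact setIntegral_nonpos (hG _ hH.compl) fun x hx => not_lt.1 hx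
    exact (measureReal_eq_zero_iff).1 (hle.antisymm measureReal_nonneg)
  · have hint : ∫ x in C, f x ∂μ = 0 := by
      rw [hf hC, Set.inter_comm, measureReal_def, hCD, ENNReal.toReal_zero]
    have hpos : ∀ᵐ x ∂μ.restrict C, 0 < f x :=
      ae_restrict_of_forall_mem (hG _ hC) fun x hx => hCH hx
    have hzero := (integral_eq_zero_iff_of_nonneg_ae (hpos.mono fun _ h => h.le)
      integrable_condExp.integrableOn).1 hint
    rw [← Measure.restrict_eq_zero, ← ae_eq_bot, ← eventually_false_iff_eq_bot]
    filter_upwards [hpos, hzero] with x hx hx0 using hx.ne' hx0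

theorem exists_disjoint_subsets_of_not_isGAtom [IsFiniteMeasure μ] (hG : G ≤ mS) {D : Set S}
    (hD : MeasurableSet D) (hpos : 0 < μ D) (hatom : ¬ IsGAtom mS G μ D) :
    ∃ D' D'', MeasurableSet D' ∧ MeasurableSet D'' ∧ D' ⊆ D ∧ D'' ⊆ D ∧ Disjoint D' D'' ∧
      0 < μ D' ∧ ∀ C, MeasurableSet[G] C → μ (C ∩ D'') = 0 → μ (C ∩ D') = 0 := by
  simp only [IsGAtom, not_and, not_forall, not_exists] at hatom
  obtain ⟨D₀, hD₀D, hD₀, hne⟩ := hatom hpos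
  obtain ⟨H₀, hH₀, hDH₀, hnull₀⟩ := exists_measurableSet_hull (μ := μ) hG hD₀
  obtain ⟨H₁, hH₁, hDH₁, hnull₁⟩ := exists_measurableSet_hull (μ := μ) hG (hD.diff hD₀)
  have hH := hH₀.inter hH₁
  refine ⟨H₀ ∩ H₁ ∩ D₀, H₀ ∩ H₁ ∩ (D \ D₀), (hG _ hH).inter hD₀,
    (hG _ hH).inter (hD.diff hD₀), fun x hx => hD₀D hx.2, fun x hx => hx.2.1,
    Set.disjoint_left.2 fun x hx hx' => hx'.2.2 hx.2, ?_, fun C hC hCD => ?_⟩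
  · refine pos_iff_ne_zero.2 fun h0 => hne H₀ hH₀ ?_
    have hHnull := hnull₀ _ hH Set.inter_subset_left h0
    refine measure_mono_null (t := (D₀ \ H₀) ∪ ((D \ D₀) \ H₁) ∪ (H₀ ∩ H₁)) ?_
      (measure_union_null (measure_union_null hDH₀ hDH₁) hHnull)
    intro x hx
    simp only [Set.mem_symmDiff, Set.mem_inter_iff, Set.mem_union, Set.mem_sdiff] at hx ⊢
    have := @hD₀D x
    tauto
  · have hCH : μ (C ∩ (H₀ ∩ H₁)) = 0 := hnull₁ _ (hC.inter hH) (fun x hx => hx.2.2) (by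
      rwa [Set.inter_assoc])
    exact measure_mono_null (Set.inter_subset_inter_right C Set.inter_subset_left) hCH

theorem condExp_add_mul_of_abs_le_one (hG : G ≤ mS) {a b f g : S → ℝ} (ha : Measurable[G] a)
    (hb : Measurable[G] b) (ha₁ : ∀ x, |a x| ≤ 1) (hb₁ : ∀ x, |b x| ≤ 1) (hf : Integrable f μ)
    (hg : Integrable g μ) :
    μ[a * f + b * g|G] =ᵐ[μ] a * μ[f|G] + b * μ[g|G] := by
  have hmul {a f : S → ℝ} (ha : Measurable[G] a) (ha₁ : ∀ x, |a x| ≤ 1) (hf : Integrable f μ) :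
      Integrable (a * f) μ :=
    hf.bdd_mul (c := 1) (ha.mono hG le_rfl).aestronglyMeasurable (ae_of_all _ ha₁)
  have haf := hmul ha ha₁ hf
  have hbg := hmul hb hb₁ hg
  exact (condExp_add haf hbg G).trans
    ((condExp_mul_of_stronglyMeasurable_left ha.stronglyMeasurable haf hf).add
      (condExp_mul_of_stronglyMeasurable_left hb.stronglyMeasurable hbg hg))

/-- `r` is a nonzero function supported in `D`, bounded by one, whose products with the
functions `g l`, `l ∈ s`, all have vanishing conditional expectation given `G`. Moving mass along
`r` does not change the `G`-conditional moments against `g`. -/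
structure IsPerturbation (G : MeasurableSpace S) {mS : MeasurableSpace S} (μ : Measure S)
    (g : ι → S → ℝ) (s : Finset ι) (D : Set S) (r : S → ℝ) : Prop where
  measurable : Measurable r
  abs_le_one : ∀ x, |r x| ≤ 1
  eq_zero_of_notMem : ∀ x ∉ D, r x = 0
  ne_zero : ¬ r =ᵐ[μ] 0
  condExp_mul_eq_zero : ∀ l ∈ s, μ[r * g l|G] =ᵐ[μ] 0

variable {g : ι → S → ℝ} {s : Finset ι}

theorem IsPerturbation.mono {D D' : Set S} {r : S → ℝ} (hr : IsPerturbation G μ g s D r)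
    (hD : D ⊆ D') : IsPerturbation G μ g s D' r :=
  { hr with eq_zero_of_notMem := fun x hx => hr.eq_zero_of_notMem x fun h => hx (hD h) }

theorem isPerturbation_empty_indicator {D : Set S} (hD : MeasurableSet D) (hpos : 0 < μ D) :
    IsPerturbation G μ g ∅ D (D.indicator 1) where
  measurable := measurable_one.indicator hD
  abs_le_one x := by by_cases hx : x ∈ D <;> simp [hx]
  eq_zero_of_notMem x hx := Set.indicator_of_notMem hx 1
  ne_zero h := hpos.ne' <| by
    rw [measure_eq_zero_iff_ae_notMem]
    filter_upwards [h] with x hx hxD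
    simp [hxD] at hx
  condExp_mul_eq_zero := by simp

theorem IsPerturbation.integrable_mul {D : Set S} {r f : S → ℝ} (hr : IsPerturbation G μ g s D r)
    (hf : Integrable f μ) : Integrable (r * f) μ :=
  hf.bdd_mul (c := 1) hr.measurable.aestronglyMeasurable (ae_of_all _ hr.abs_le_one)

theorem IsPerturbation.setIntegral_mul_eq_zero [IsFiniteMeasure μ] (hG : G ≤ mS) {D B : Set S}
    {r : S → ℝ} (hr : IsPerturbation G μ g s D r) {i : ι} (hi : i ∈ s) (hg : Integrable (g i) μ)
    (hB : MeasurableSet[G] B) : ∫ x in B, (r * g i) x ∂μ = 0 := by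
  rw [← setIntegral_condExp hG (hr.integrable_mul hg) hB]
  exact integral_eq_zero_of_ae (ae_restrict_of_ae (hr.condExp_mul_eq_zero i hi))

theorem exists_measurable_mul_add_mul_eq_zero {α γ : S → ℝ} (hα : Measurable α)
    (hγ : Measurable γ) :
    ∃ a b : S → ℝ, Measurable a ∧ Measurable b ∧ (∀ x, |a x| + |b x| ≤ 1) ∧
      (∀ x, a x * α x + b x * γ x = 0) ∧ (∀ x, γ x ≠ 0 → a x ≠ 0) ∧ ∀ x, γ x = 0 → b x = 1 := by
  have hden (x : S) : 0 < 1 + |α x| + |γ x| := by positivity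
  refine ⟨fun x => γ x / (1 + |α x| + |γ x|),
    fun x => if γ x = 0 then 1 else -α x / (1 + |α x| + |γ x|), by fun_prop,
    Measurable.ite (hγ (measurableSet_singleton 0)) (by fun_prop) (by fun_prop), fun x => ?_,
    fun x => ?_, fun x hx => div_ne_zero hx (hden x).ne', fun x hx => if_pos hx⟩
  · by_cases hx : γ x = 0
    · simp [hx]
    · simp only [if_neg hx]
      rw [abs_div, abs_div, abs_neg, ← add_div, abs_of_pos (hden x),
        div_le_one (hden x)]
      linarith
  · by_cases hx : γ x = 0
    · simp [hx]
    · simp only [if_neg hx]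
      ring

theorem IsPerturbation.exists_insert [DecidableEq ι] (hG : G ≤ mS) (hg : ∀ l, Integrable (g l) μ)
    {l₀ : ι} {D' D'' B : Set S} {r' r'' : S → ℝ} (hr' : IsPerturbation G μ g s D' r')
    (hr'' : IsPerturbation G μ g s (B ∩ D'') r'') (hdisj : Disjoint D' D'')
    (hB : MeasurableSet[G] B)
    (hBr' : ∀ C, MeasurableSet[G] C → C ⊆ B → μ (C ∩ {x | r' x ≠ 0}) = 0 → μ C = 0) :
    ∃ r, IsPerturbation G μ g (insert l₀ s) (D' ∪ D'') r := by
  set α : S → ℝ := μ[r' * g l₀|G]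
  set γ : S → ℝ := μ[r'' * g l₀|G]
  have hα : Measurable[G] α := stronglyMeasurable_condExp.measurable
  have hγ : Measurable[G] γ := stronglyMeasurable_condExp.measurable
  obtain ⟨a, b, ha, hb, hab₁, hab₀, ha₀, hb₀⟩ := exists_measurable_mul_add_mul_eq_zero hα hγ
  have ha₁ (x : S) : |a x| ≤ 1 := by linarith [hab₁ x, abs_nonneg (b x)]
  have hb₁ (x : S) : |b x| ≤ 1 := by linarith [hab₁ x, abs_nonneg (a x)]
  refine ⟨a * r' + b * r'', ?_, fun x => ?_, fun x hx => ?_, fun hzero => hr''.ne_zero ?_,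
    fun l hl => ?_⟩
  · exact ((ha.mono hG le_rfl).mul hr'.measurable).add ((hb.mono hG le_rfl).mul hr''.measurable)
  · calc |a x * r' x + b x * r'' x| ≤ |a x| * |r' x| + |b x| * |r'' x| := by
          simpa only [abs_mul] using abs_add_le (a x * r' x) (b x * r'' x)
      _ ≤ |a x| * 1 + |b x| * 1 := by gcongr; exacts [hr'.abs_le_one x, hr''.abs_le_one x]
      _ ≤ 1 := by simpa only [mul_one] using hab₁ x
  · have h' := hr'.eq_zero_of_notMem x fun h => hx (Or.inl h)
    have h'' := hr''.eq_zero_of_notMem x fun h => hx (Or.inr h.2)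
    simp [h', h'']
  · have hzero' : ∀ᵐ x ∂μ, a x * r' x = 0 ∧ b x * r'' x = 0 := by
      filter_upwards [hzero] with x hx
      by_cases hxD : x ∈ D'
      · have h'' := hr''.eq_zero_of_notMem x fun h => Set.disjoint_left.1 hdisj hxD h.2
        simpa [h''] using hx
      · simpa [hr'.eq_zero_of_notMem x hxD] using hx
    have hnull : μ ({x | γ x ≠ 0} ∩ B) = 0 := by
      refine hBr' _ ((hγ (measurableSet_singleton 0)).compl.inter hB) Set.inter_subset_right ?_
      rw [measure_eq_zero_iff_ae_notMem]
      filter_upwards [hzero'] with x hx hmem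
      exact (mul_ne_zero (ha₀ x hmem.1.1) hmem.2) hx.1
    filter_upwards [hzero', measure_eq_zero_iff_ae_notMem.1 hnull] with x hx hxn
    by_cases hxB : x ∈ B
    · have hγx : γ x = 0 := by_contra fun h => hxn ⟨h, hxB⟩
      simpa [hb₀ x hγx] using hx.2
    · exact hr''.eq_zero_of_notMem x fun h => hxB h.1
  · have hcond := condExp_add_mul_of_abs_le_one hG ha hb ha₁ hb₁
      (hr'.integrable_mul (hg l)) (hr''.integrable_mul (hg l))
    rw [add_mul, mul_assoc, mul_assoc]
    rcases Finset.mem_insert.1 hl with rfl | hl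
    · filter_upwards [hcond] with x hx
      exact hx.trans (hab₀ x)
    · filter_upwards [hcond, hr'.condExp_mul_eq_zero l hl, hr''.condExp_mul_eq_zero l hl]
        with x hx h' h''
      simp [hx, h', h'']

theorem exists_isPerturbation [IsFiniteMeasure μ] (hG : G ≤ mS)
    (hatom : ∀ D, MeasurableSet D → ¬ IsGAtom mS G μ D) (hg : ∀ l, Integrable (g l) μ)
    (s : Finset ι) {D : Set S} (hD : MeasurableSet D) (hpos : 0 < μ D) :
    ∃ r, IsPerturbation G μ g s D r := by
  classical
  induction s using Finset.induction_on generalizing D with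
  | empty => exact ⟨_, isPerturbation_empty_indicator hD hpos⟩
  | insert l₀ s _ ih =>
    obtain ⟨D', D'', hD', hD'', hD'D, hD''D, hdisj, hpos', hdom⟩ :=
      exists_disjoint_subsets_of_not_isGAtom hG hD hpos (hatom D hD)
    obtain ⟨r', hr'⟩ := ih hD' hpos'
    have hsupp : MeasurableSet {x | r' x ≠ 0} := (hr'.measurable (measurableSet_singleton 0)).compl
    obtain ⟨B, hB, hsuppB, hBnull⟩ := exists_measurableSet_hull (μ := μ) hG hsupp
    have hposB : 0 < μ (B ∩ D'') := by
      refine pos_iff_ne_zero.2 fun h0 => hr'.ne_zero ?_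
      filter_upwards [measure_eq_zero_iff_ae_notMem.1 (hdom B hB h0),
        measure_eq_zero_iff_ae_notMem.1 hsuppB] with x hx hxs
      by_contra hne
      exact hx ⟨by_contra fun h => hxs ⟨hne, h⟩,
        by_contra fun h => hne (hr'.eq_zero_of_notMem x h)⟩
    obtain ⟨r'', hr''⟩ := ih ((hG _ hB).inter hD'') hposB
    obtain ⟨r, hr⟩ := hr'.exists_insert hG hg hr'' hdisj hB hBnull (l₀ := l₀)
    exact ⟨r, hr.mono (Set.union_subset hD'D hD''D)⟩

end Purification

theorem exists_mem_extremePoints_of_isClosed_of_isBounded {H : Type*} [NormedAddCommGroup H]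
    [InnerProductSpace ℝ H] [CompleteSpace H] {s : Set H} (hconv : Convex ℝ s)
    (hclosed : IsClosed s) (hbdd : Bornology.IsBounded s) (hne : s.Nonempty) :
    (s.extremePoints ℝ).Nonempty := by
  let Ψ : H ≃ₗ[ℝ] WeakDual ℝ H :=
    (InnerProductSpace.toDual ℝ H).toLinearEquiv.trans StrongDual.toWeakDual
  have hΨ (φ : WeakDual ℝ H) (y : H) : inner ℝ (Ψ.symm φ) y = φ y :=
    InnerProductSpace.toDual_symm_apply
  have hcont : Continuous fun φ => toWeakSpace ℝ H (Ψ.symm φ) := by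
    refine WeakBilin.continuous_of_continuous_eval _ fun f => ?_
    convert WeakDual.eval_continuous ((InnerProductSpace.toDual ℝ H).symm f) using 2 with φ
    rw [← hΨ, real_inner_comm, InnerProductSpace.toDual_symm_apply]
    rfl
  have hpre : Ψ '' s = (fun φ => toWeakSpace ℝ H (Ψ.symm φ)) ⁻¹' (toWeakSpace ℝ H '' s) := by
    ext φ
    rw [Set.mem_preimage, (toWeakSpace ℝ H).injective.mem_set_image]
    exact Ψ.toEquiv.image_eq_preimage_symm s ▸ Iff.rfl
  have hweak : IsClosed (toWeakSpace ℝ H '' s) := by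
    rw [← hclosed.closure_eq, hconv.toWeakSpace_closure ℝ]
    exact isClosed_closure
  have hcompact : IsCompact (Ψ '' s) := by
    obtain ⟨R, hR⟩ := hbdd.exists_norm_le
    refine WeakDual.isCompact_of_bounded_of_closed
      ((WeakDual.isBounded_closedBall 0 R).subset ?_) (hpre ▸ hweak.preimage hcont)
    rintro - ⟨x, hx, rfl⟩
    exact mem_closedBall_zero_iff.2 ((InnerProductSpace.toDual ℝ H).norm_map x ▸ hR x hx)
  have : LocallyConvexSpace ℝ (WeakDual ℝ H) :=
    inferInstanceAs (LocallyConvexSpace ℝ (WeakBilin (topDualPairing ℝ H)))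
  rw [← Set.image_nonempty (f := Ψ), image_extremePoints]
  exact hcompact.extremePoints_nonempty (hne.image Ψ)

section Purification

variable {S K L : Type*} [Fintype K] {G mS : MeasurableSpace S} {μ : Measure S}

/-- The square-integrable fields `h` of probability vectors over `K` whose integrals
`∫ ∑ k, h k * g k l` over `B` are `c B l` for every `G`-measurable `B`. -/
def momentSet (G : MeasurableSpace S) {_mS : MeasurableSpace S} (μ : Measure S)
    (g : K → L → S → ℝ) (c : Set S → L → ℝ) : Set (Lp (EuclideanSpace ℝ K) 2 μ) :=
  {h | (∀ᵐ x ∂μ, ⇑(h x) ∈ stdSimplex ℝ K) ∧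
    ∀ B, MeasurableSet[G] B → ∀ l, ∫ x in B, ∑ k, h x k * g k l x ∂μ = c B l}

theorem norm_le_one_of_mem_stdSimplex {w : EuclideanSpace ℝ K} (hw : ⇑w ∈ stdSimplex ℝ K) :
    ‖w‖ ≤ 1 := by
  rw [EuclideanSpace.norm_eq, Real.sqrt_le_one]
  calc ∑ k, ‖w k‖ ^ 2 ≤ ∑ k, w k := by
        gcongr with k
        rw [Real.norm_eq_abs, sq_abs, sq]
        exact mul_le_of_le_one_left (hw.1 k) (mem_Icc_of_mem_stdSimplex hw k).2
    _ = 1 := hw.2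

theorem abs_sum_mul_le_of_mem_stdSimplex {w z : K → ℝ} (hw : w ∈ stdSimplex ℝ K) :
    |∑ k, w k * z k| ≤ ∑ k, |z k| := by
  refine (Finset.abs_sum_le_sum_abs _ _).trans (Finset.sum_le_sum fun k _ => ?_)
  rw [abs_mul, abs_of_nonneg (hw.1 k)]
  exact mul_le_of_le_one_left (abs_nonneg _) (mem_Icc_of_mem_stdSimplex hw k).2

theorem integrable_sum_mul_of_mem_stdSimplex {h : S → EuclideanSpace ℝ K} {g : K → S → ℝ}
    (hm : AEStronglyMeasurable h μ) (hh : ∀ᵐ x ∂μ, ⇑(h x) ∈ stdSimplex ℝ K)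
    (hg : ∀ k, Integrable (g k) μ) : Integrable (fun x => ∑ k, h x k * g k x) μ := by
  refine (integrable_finsetSum Finset.univ fun k _ => (hg k).abs).mono' ?_ ?_
  · exact Finset.aestronglyMeasurable_fun_sum _ fun k _ =>
      ((EuclideanSpace.proj k).continuous.comp_aestronglyMeasurable hm).mul (hg k).1
  · exact hh.mono fun x hx => abs_sum_mul_le_of_mem_stdSimplex hx

variable {g : K → L → S → ℝ} {c : Set S → L → ℝ}

theorem convex_momentSet (hg : ∀ k l, Integrable (g k l) μ) : Convex ℝ (momentSet G μ g c) := by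
  intro h₁ hh₁ h₂ hh₂ a b ha hb hab
  have hcoe : ∀ᵐ x ∂μ, (a • h₁ + b • h₂ : Lp (EuclideanSpace ℝ K) 2 μ) x = a • h₁ x + b • h₂ x := by
    filter_upwards [Lp.coeFn_add (a • h₁) (b • h₂), Lp.coeFn_smul a h₁, Lp.coeFn_smul b h₂]
      with x hx h₁x h₂x
    rw [hx, Pi.add_apply, h₁x, h₂x, Pi.smul_apply, Pi.smul_apply]
  refine ⟨?_, fun B hB l => ?_⟩
  · filter_upwards [hcoe, hh₁.1, hh₂.1] with x hx h₁x h₂x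
    rw [hx]
    exact convex_stdSimplex ℝ K h₁x h₂x ha hb hab
  · have hint {h : Lp (EuclideanSpace ℝ K) 2 μ} (hh : h ∈ momentSet G μ g c) :=
      (integrable_sum_mul_of_mem_stdSimplex (Lp.aestronglyMeasurable h) hh.1
        fun k => hg k l).integrableOn (s := B)
    calc ∫ x in B, ∑ k, (a • h₁ + b • h₂ : Lp (EuclideanSpace ℝ K) 2 μ) x k * g k l x ∂μ
        = ∫ x in B, (a * ∑ k, h₁ x k * g k l x + b * ∑ k, h₂ x k * g k l x) ∂μ := by
          refine integral_congr_ae (ae_restrict_of_ae ?_)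
          filter_upwards [hcoe] with x hx
          simp only [hx, PiLp.add_apply, PiLp.smul_apply, smul_eq_mul, add_mul, mul_assoc,
            Finset.sum_add_distrib, Finset.mul_sum]
      _ = c B l := by
          rw [integral_add ((hint hh₁).const_mul a) ((hint hh₂).const_mul b), integral_const_mul,
            integral_const_mul, hh₁.2 B hB l, hh₂.2 B hB l, ← add_mul, hab, one_mul]

theorem isClosed_momentSet (hg : ∀ k l, Integrable (g k l) μ) :
    IsClosed (momentSet G μ g c) := by
  refine IsSeqClosed.isClosed fun h h' hh hlim => ?_
  obtain ⟨φ, -, hφ⟩ := (tendstoInMeasure_of_tendsto_Lp hlim).exists_seq_tendsto_ae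
  have hsimplex : ∀ᵐ x ∂μ, ∀ n, ⇑(h n x) ∈ stdSimplex ℝ K := ae_all_iff.2 fun n => (hh n).1
  have hcoord : ∀ᵐ x ∂μ, Tendsto (fun n => ⇑(h (φ n) x)) atTop (nhds ⇑(h' x)) :=
    hφ.mono fun x hx => ((PiLp.continuous_ofLp 2 fun _ : K => ℝ).tendsto _).comp hx
  refine ⟨?_, fun B hB l => ?_⟩
  · filter_upwards [hcoord, hsimplex] with x hx hxs
    exact (isClosed_stdSimplex ℝ K).mem_of_tendsto hx (.of_forall fun n => hxs (φ n))
  · refine tendsto_nhds_unique (tendsto_integral_of_dominated_convergence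
      (F := fun n x => ∑ k, h (φ n) x k * g k l x) (fun x => ∑ k, |g k l x|) (fun n => ?_) ?_
      (fun n => ?_) ?_) (tendsto_const_nhds.congr fun n => ((hh (φ n)).2 B hB l).symm)
    · exact (integrable_sum_mul_of_mem_stdSimplex (Lp.aestronglyMeasurable _) (hh (φ n)).1
        fun k => hg k l).1.restrict
    · exact (integrable_finsetSum _ fun k _ => (hg k l).abs).integrableOn
    · filter_upwards [ae_restrict_of_ae hsimplex] with x hx
      exact abs_sum_mul_le_of_mem_stdSimplex (hx (φ n))
    · filter_upwards [ae_restrict_of_ae hcoord] with x hx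
      exact tendsto_finsetSum _ fun k _ => (tendsto_pi_nhds.1 hx k).mul_const _

theorem isBounded_momentSet [IsFiniteMeasure μ] : Bornology.IsBounded (momentSet G μ g c) := by
  refine isBounded_iff_forall_norm_le.2 ⟨_, fun h hh => Lp.norm_le_of_ae_bound zero_le_one ?_⟩
  exact hh.1.mono fun x hx => norm_le_one_of_mem_stdSimplex hx

theorem add_smul_single_sub_single_mem_stdSimplex [DecidableEq K] {w : K → ℝ}
    (hw : w ∈ stdSimplex ℝ K) {k k' : K} {t : ℝ} (hk : |t| ≤ w k) (hk' : |t| ≤ w k') :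
    w + t • (Pi.single k 1 - Pi.single k' 1) ∈ stdSimplex ℝ K := by
  refine ⟨fun i => ?_, ?_⟩
  · have := abs_le.1 hk
    have := abs_le.1 hk'
    have := hw.1 i
    simp only [Pi.add_apply, Pi.smul_apply, Pi.sub_apply, smul_eq_mul, Pi.single_apply]
    split_ifs with h h' <;> subst_vars <;> linarith
  · simp [Finset.sum_add_distrib, ← Finset.mul_sum, hw.2]

/-- The direction of a perturbation that moves mass `r` from the coordinate `k'` to `k`. -/
noncomputable def massTransfer [DecidableEq K] (k k' : K) (r : S → ℝ) (x : S) :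
    EuclideanSpace ℝ K :=
  r x • WithLp.toLp 2 (Pi.single k 1 - Pi.single k' 1)

theorem add_smul_massTransfer_mem_momentSet [IsFiniteMeasure μ] [Fintype L] [DecidableEq K]
    (hG : G ≤ mS) (hg : ∀ k l, Integrable (g k l) μ)
    {h p : Lp (EuclideanSpace ℝ K) 2 μ} (hh : h ∈ momentSet G μ g c) {k k' : K} {D : Set S}
    {r : S → ℝ} (hr : IsPerturbation G μ (fun l : K × L => g l.1 l.2) Finset.univ D r)
    (hp : p =ᵐ[μ] massTransfer k k' r) {ε δ : ℝ} (hε : |ε| ≤ δ)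
    (hD : ∀ x ∈ D, δ ≤ h x k ∧ δ ≤ h x k') : h + ε • p ∈ momentSet G μ g c := by
  have hcoe : ∀ᵐ x ∂μ, ⇑((h + ε • p : Lp (EuclideanSpace ℝ K) 2 μ) x)
      = ⇑(h x) + (ε * r x) • (Pi.single k 1 - Pi.single k' 1) := by
    filter_upwards [Lp.coeFn_add h (ε • p), Lp.coeFn_smul ε p, hp] with x hx hεx hpx
    rw [hx, Pi.add_apply, hεx, Pi.smul_apply, hpx, massTransfer, smul_smul]
    rfl
  have hrg (k : K) (l : L) : Integrable (fun x => r x * g k l x) μ :=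
    hr.integrable_mul (hg k l)
  have hzero {B : Set S} (hB : MeasurableSet[G] B) (k : K) (l : L) :
      ∫ x in B, r x * g k l x ∂μ = 0 :=
    hr.setIntegral_mul_eq_zero hG (i := (k, l)) (Finset.mem_univ _) (hg k l) hB
  refine ⟨?_, fun B hB l => ?_⟩
  · filter_upwards [hcoe, hh.1] with x hx hhx
    rw [hx]
    by_cases hxD : x ∈ D
    · have hle : |ε * r x| ≤ δ := by
        rw [abs_mul]
        exact (mul_le_of_le_one_right (abs_nonneg ε) (hr.abs_le_one x)).trans hε
      exact add_smul_single_sub_single_mem_stdSimplex hhx (hle.trans (hD x hxD).1)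
        (hle.trans (hD x hxD).2)
    · rwa [hr.eq_zero_of_notMem x hxD, mul_zero, zero_smul, add_zero]
  · have hint := integrable_sum_mul_of_mem_stdSimplex (Lp.aestronglyMeasurable h) hh.1
      fun k => hg k l
    have hdiff : Integrable (fun x => r x * g k l x - r x * g k' l x) μ :=
      (hrg k l).sub (hrg k' l)
    calc ∫ x in B, ∑ i, (h + ε • p : Lp (EuclideanSpace ℝ K) 2 μ) x i * g i l x ∂μ
        = ∫ x in B, (∑ i, h x i * g i l x)
            + ε * (r x * g k l x - r x * g k' l x) ∂μ := by
          refine integral_congr_ae (ae_restrict_of_ae ?_)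
          filter_upwards [hcoe] with x hx
          simp only [hx, Pi.add_apply, Pi.smul_apply, Pi.sub_apply, smul_eq_mul, add_mul,
            Finset.sum_add_distrib, mul_assoc, ← Finset.mul_sum, sub_mul, Finset.sum_sub_distrib,
            Pi.single_apply, ite_mul, one_mul, zero_mul, Finset.sum_ite_eq', Finset.mem_univ,
            if_true, mul_sub]
      _ = c B l := by
          rw [integral_add hint.integrableOn
            (hdiff.const_mul ε).integrableOn, integral_const_mul,
            integral_sub (hrg k l).integrableOn (hrg k' l).integrableOn, hzero hB, hzero hB,
            sub_zero, mul_zero, add_zero, hh.2 B hB l]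

theorem measurable_coordFn (h : Lp (EuclideanSpace ℝ K) 2 μ) (k : K) :
    Measurable fun x => h x k :=
  (EuclideanSpace.proj (𝕜 := ℝ) k).continuous.measurable.comp (Lp.stronglyMeasurable h).measurable

/-- Otherwise mass could be moved from `k` to `k'` and back without changing any moment. -/
theorem measure_setOf_le_eq_zero_of_mem_extremePoints [IsFiniteMeasure μ] [Finite L]
    (hG : G ≤ mS) (hatom : ∀ D, MeasurableSet D → ¬ IsGAtom mS G μ D)
    (hg : ∀ k l, Integrable (g k l) μ) {h : Lp (EuclideanSpace ℝ K) 2 μ}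
    (hh : h ∈ (momentSet G μ g c).extremePoints ℝ) {k k' : K} (hkk' : k ≠ k') {δ : ℝ}
    (hδ : 0 < δ) : μ {x | δ ≤ h x k ∧ δ ≤ h x k'} = 0 := by
  classical
  have := Fintype.ofFinite L
  by_contra hne
  obtain ⟨r, hr⟩ := exists_isPerturbation hG hatom (fun l : K × L => hg l.1 l.2) Finset.univ
    ((measurableSet_le measurable_const (measurable_coordFn h k)).inter
      (measurableSet_le measurable_const (measurable_coordFn h k'))) (pos_iff_ne_zero.2 hne)
  have hp : MemLp (massTransfer k k' r) 2 μ := by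
    refine MemLp.of_bound (hr.measurable.smul_const _).aestronglyMeasurable
      (1 * ‖WithLp.toLp 2 (Pi.single k 1 - Pi.single k' 1 : K → ℝ)‖) (.of_forall fun x => ?_)
    rw [massTransfer, norm_smul]
    exact mul_le_mul_of_nonneg_right (hr.abs_le_one x) (norm_nonneg _)
  have hmem {ε : ℝ} (hε : |ε| ≤ δ) : h + ε • hp.toLp ∈ momentSet G μ g c :=
    add_smul_massTransfer_mem_momentSet hG hg hh.1 hr hp.coeFn_toLp hε fun x hx => hx
  have hmid : h ∈ openSegment ℝ (h + δ • hp.toLp) (h + (-δ) • hp.toLp) :=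
    ⟨1 / 2, 1 / 2, by norm_num, by norm_num, by norm_num, by module⟩
  have hp₀ : hp.toLp = 0 := by
    have heq := hh.2 (hmem (abs_of_pos hδ).le) (hmem ((abs_neg δ).trans (abs_of_pos hδ)).le) hmid
    exact (smul_eq_zero.1 (add_eq_left.1 heq)).resolve_left hδ.ne'
  refine hr.ne_zero ?_
  filter_upwards [hp.coeFn_toLp, (Lp.eq_zero_iff_ae_eq_zero).1 hp₀] with x hx hx₀
  have hxk : massTransfer k k' r x k = 0 := by rw [← hx, hx₀]; rfl
  simpa [massTransfer, hkk'] using hxk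

theorem exists_eq_one_of_mem_stdSimplex {w : K → ℝ} (hw : w ∈ stdSimplex ℝ K)
    (h : ∀ k k', k ≠ k' → w k = 0 ∨ w k' = 0) : ∃ k, w k = 1 ∧ ∀ k' ≠ k, w k' = 0 := by
  obtain ⟨k, -, hk⟩ := Finset.exists_ne_zero_of_sum_ne_zero (hw.2.trans_ne one_ne_zero)
  have hk' : ∀ k' ≠ k, w k' = 0 := fun k' hne => (h k' k hne).resolve_right hk
  exact ⟨k, (Fintype.sum_eq_single k hk').symm.trans hw.2, hk'⟩

theorem ae_exists_eq_one_of_mem_extremePoints [IsFiniteMeasure μ] [Finite L]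
    (hG : G ≤ mS) (hatom : ∀ D, MeasurableSet D → ¬ IsGAtom mS G μ D)
    (hg : ∀ k l, Integrable (g k l) μ) {h : Lp (EuclideanSpace ℝ K) 2 μ}
    (hh : h ∈ (momentSet G μ g c).extremePoints ℝ) :
    ∀ᵐ x ∂μ, ∃ k, h x k = 1 ∧ ∀ k' ≠ k, h x k' = 0 := by
  have hsmall : ∀ᵐ x ∂μ, ∀ (k k' : K) (n : ℕ), k ≠ k' →
      ¬ (1 / ((n : ℝ) + 1) ≤ h x k ∧ 1 / ((n : ℝ) + 1) ≤ h x k') := by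
    simp only [ae_all_iff]
    exact fun k k' n hkk' => measure_eq_zero_iff_ae_notMem.1
      (measure_setOf_le_eq_zero_of_mem_extremePoints hG hatom hg hh hkk' Nat.one_div_pos_of_nat)
  filter_upwards [hh.1.1, hsmall] with x hx hxs
  refine exists_eq_one_of_mem_stdSimplex hx fun k k' hkk' => ?_
  by_contra! hne
  obtain ⟨n, hn⟩ := exists_nat_one_div_lt
    (lt_min ((hx.1 k).lt_of_ne' hne.1) ((hx.1 k').lt_of_ne' hne.2))
  exact hxs k k' n hkk' ⟨hn.le.trans (min_le_left _ _), hn.le.trans (min_le_right _ _)⟩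

theorem exists_measurable_selection_setIntegral_eq [IsFiniteMeasure μ] [Finite L] [Nonempty K]
    [MeasurableSpace K] (hG : G ≤ mS) (hatom : ∀ D, MeasurableSet D → ¬ IsGAtom mS G μ D)
    (hg : ∀ k l, Integrable (g k l) μ) {a : S → K → ℝ} (ha : Measurable a)
    (ha' : ∀ x, a x ∈ stdSimplex ℝ K) :
    ∃ κ : S → K, Measurable κ ∧ ∀ B, MeasurableSet[G] B → ∀ l,
      ∫ x in B, g (κ x) l x ∂μ = ∫ x in B, ∑ k, a x k * g k l x ∂μ := by
  have hLp : MemLp (fun x => WithLp.toLp 2 (a x)) 2 μ :=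
    MemLp.of_bound ((PiLp.continuous_toLp 2 fun _ : K => ℝ).measurable.comp ha).aestronglyMeasurable
      1 (.of_forall fun x => norm_le_one_of_mem_stdSimplex (ha' x))
  obtain ⟨h, hh⟩ := exists_mem_extremePoints_of_isClosed_of_isBounded
    (convex_momentSet (G := G) (c := fun B l => ∫ x in B, ∑ k, a x k * g k l x ∂μ) hg)
    (isClosed_momentSet hg) isBounded_momentSet ⟨hLp.toLp, by
      refine ⟨hLp.coeFn_toLp.mono fun x hx => hx ▸ ha' x, fun B _ l => ?_⟩
      refine integral_congr_ae (ae_restrict_of_ae (hLp.coeFn_toLp.mono fun x hx => ?_))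
      simp only [hx]⟩
  have hmeas (k : K) : MeasurableSet {x | h x k = 1 ∧ ∀ k' ≠ k, h x k' = 0} := by
    simp only [Set.ofPred_and, Set.ofPred_forall]
    exact (measurable_coordFn h k (measurableSet_singleton 1)).inter <| .iInter fun k' =>
      .iInter fun _ => measurable_coordFn h k' (measurableSet_singleton 0)
  obtain ⟨κ, hκ, hκh⟩ := exists_measurable_piecewise _ hmeas (fun k _ => k)
    (fun _ => measurable_const)
    fun k k' hkk' x hx => absurd (hx.1.1.symm.trans (hx.2.2 k hkk')) one_ne_zero
  refine ⟨κ, hκ, fun B hB l => ?_⟩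
  refine Eq.trans ?_ (hh.1.2 B hB l)
  refine integral_congr_ae (ae_restrict_of_ae ?_)
  filter_upwards [ae_exists_eq_one_of_mem_extremePoints hG hatom hg hh] with x ⟨k, hk⟩
  simp only [hκh k hk]
  rw [Fintype.sum_eq_single k fun k' hk' => by rw [hk.2 k' hk', zero_mul], hk.1, one_mul]

end Purification

section Density

variable {S K L : Type*} {G mS : MeasurableSpace S} {μ : Measure S}

theorem integral_mul_eq_of_setIntegral_eq [IsFiniteMeasure μ] (hG : G ≤ mS) {h₁ h₂ z : S → ℝ}
    (hh₁ : Integrable h₁ μ) (hh₂ : Integrable h₂ μ) (hz : Measurable[G] z)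
    (hh₁z : Integrable (h₁ * z) μ) (hh₂z : Integrable (h₂ * z) μ)
    (h : ∀ B, MeasurableSet[G] B → ∫ x in B, h₁ x ∂μ = ∫ x in B, h₂ x ∂μ) :
    ∫ x, h₁ x * z x ∂μ = ∫ x, h₂ x * z x ∂μ := by
  have hcond : μ[h₁|G] =ᵐ[μ] μ[h₂|G] := by
    refine ae_eq_condExp_of_forall_setIntegral_eq hG hh₂
      (fun B _ _ => integrable_condExp.integrableOn) (fun B hB _ => ?_)
      stronglyMeasurable_condExp.aestronglyMeasurable
    rw [setIntegral_condExp hG hh₁ hB, h B hB]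
  calc ∫ x, h₁ x * z x ∂μ = ∫ x, (μ[h₁ * z|G]) x ∂μ := (integral_condExp hG).symm
    _ = ∫ x, (μ[h₂ * z|G]) x ∂μ := by
      apply integral_congr_ae
      filter_upwards [hcond,
        condExp_mul_of_stronglyMeasurable_right hz.stronglyMeasurable hh₁z hh₁,
        condExp_mul_of_stronglyMeasurable_right hz.stronglyMeasurable hh₂z hh₂] with x hx h₁x h₂x
      rw [h₁x, h₂x, Pi.mul_apply, Pi.mul_apply, hx]
    _ = ∫ x, h₂ x * z x ∂μ := integral_condExp hG

theorem measurable_apply_selection [Countable K] [MeasurableSpace K] [MeasurableSingletonClass K]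
    {R : Type*} [MeasurableSpace R] {y : K → S → R} (hy : ∀ k, Measurable (y k)) {κ : S → K}
    (hκ : Measurable κ) : Measurable fun x => y (κ x) x :=
  (measurable_from_prod_countable_right (f := fun p : K × S => y p.1 p.2) hy).comp
    (hκ.prodMk measurable_id)

theorem abs_sum_mul_le_of_forall_abs_le [Fintype K] {w z : K → ℝ} (hw : w ∈ stdSimplex ℝ K)
    {C : ℝ} (hz : ∀ k, |z k| ≤ C) : |∑ k, w k * z k| ≤ C :=
  (abs_sum_mul_le_sum_mul hw.1 hz).trans_eq (by rw [hw.2, one_mul])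

variable {Θ ι J : Type*}

/-- The density `q θ` is `∑ j, qj j θ * ρ j` with `ρ j` integrable and `qj j θ` measurable with
respect to a `σ`-algebra `G` for which there are no `G`-atoms: this is the notion of a
decomposable coarser transition kernel, the parameter `θ` being the current state and actions. -/
structure IsDecomposableCoarser [Fintype J] (G : MeasurableSpace S) {_mS : MeasurableSpace S}
    (μ : Measure S) (q : Θ → S → ℝ) (qj : J → Θ → S → ℝ) (ρ : J → S → ℝ) : Prop where
  le : G ≤ _mS
  not_isGAtom : ∀ D, MeasurableSet D → ¬ IsGAtom _mS G μ D
  measurable : ∀ j θ, Measurable[G] (qj j θ)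
  integrable : ∀ j, Integrable (ρ j) μ
  nonneg : ∀ j θ x, 0 ≤ qj j θ x
  nonneg' : ∀ j x, 0 ≤ ρ j x
  integrable_density : ∀ θ, Integrable (q θ) μ
  eq_sum : ∀ θ x, q θ x = ∑ j, qj j θ x * ρ j x

variable [Fintype J] {q : Θ → S → ℝ} {qj : J → Θ → S → ℝ} {ρ : J → S → ℝ}

theorem IsDecomposableCoarser.integrable_mul (h : IsDecomposableCoarser G μ q qj ρ) (j : J)
    (θ : Θ) : Integrable (fun x => qj j θ x * ρ j x) μ := by
  have hmeas : AEStronglyMeasurable (qj j θ) μ :=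
    ((h.measurable j θ).mono h.le le_rfl).aestronglyMeasurable
  refine (h.integrable_density θ).mono' (hmeas.mul (h.integrable j).1) (.of_forall fun x => ?_)
  have hnonneg (j : J) : 0 ≤ qj j θ x * ρ j x := mul_nonneg (h.nonneg j θ x) (h.nonneg' j x)
  rw [Real.norm_eq_abs, abs_of_nonneg (hnonneg j), h.eq_sum]
  exact Finset.single_le_sum (fun j _ => hnonneg j) (Finset.mem_univ j)

theorem IsDecomposableCoarser.integral_mul_eq [IsFiniteMeasure μ]
    (h : IsDecomposableCoarser G μ q qj ρ) {y₁ y₂ : S → ℝ} (hy₁ : Measurable y₁)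
    (hy₂ : Measurable y₂) {C : ℝ} (hC₁ : ∀ x, |y₁ x| ≤ C) (hC₂ : ∀ x, |y₂ x| ≤ C)
    (heq : ∀ B, MeasurableSet[G] B → ∀ j, ∫ x in B, y₁ x * ρ j x ∂μ = ∫ x in B, y₂ x * ρ j x ∂μ)
    (θ : Θ) : ∫ x, y₁ x * q θ x ∂μ = ∫ x, y₂ x * q θ x ∂μ := by
  have hbdd {y z : S → ℝ} (hy : Measurable y) (hC : ∀ x, |y x| ≤ C) (hz : Integrable z μ) :
      Integrable (fun x => y x * z x) μ :=
    hz.bdd_mul hy.aestronglyMeasurable (.of_forall hC)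
  have hexpand {y : S → ℝ} (hy : Measurable y) (hC : ∀ x, |y x| ≤ C) :
      ∫ x, y x * q θ x ∂μ = ∑ j, ∫ x, y x * ρ j x * qj j θ x ∂μ := by
    rw [← integral_finsetSum _ fun j _ => ?_]
    · simp only [h.eq_sum, Finset.mul_sum, mul_assoc, mul_comm (ρ _ _)]
    · simpa only [mul_assoc, mul_comm (ρ _ _)] using hbdd hy hC (h.integrable_mul j θ)
  rw [hexpand hy₁ hC₁, hexpand hy₂ hC₂]
  refine Finset.sum_congr rfl fun j _ => integral_mul_eq_of_setIntegral_eq h.le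
    (hbdd hy₁ hC₁ (h.integrable j)) (hbdd hy₂ hC₂ (h.integrable j)) (h.measurable j θ) ?_ ?_
    fun B hB => heq B hB j
  · refine (hbdd hy₁ hC₁ (h.integrable_mul j θ)).congr (.of_forall fun x => ?_)
    simp only [Pi.mul_apply]
    ring
  · refine (hbdd hy₂ hC₂ (h.integrable_mul j θ)).congr (.of_forall fun x => ?_)
    simp only [Pi.mul_apply]
    ring

theorem IsDecomposableCoarser.exists_selection [IsFiniteMeasure μ] [Finite ι] [Fintype K]
    [Nonempty K] [MeasurableSpace K] [MeasurableSingletonClass K]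
    (h : IsDecomposableCoarser G μ q qj ρ) {y : K → ι → S → ℝ} (hy : ∀ k i, Measurable (y k i))
    {C : ℝ} (hC : ∀ k i x, |y k i x| ≤ C) {a : S → K → ℝ} (ha : Measurable a)
    (ha' : ∀ x, a x ∈ stdSimplex ℝ K) : ∃ κ : S → K, Measurable κ ∧ ∀ θ i,
      ∫ x, y (κ x) i x * q θ x ∂μ = ∫ x, (∑ k, a x k * y k i x) * q θ x ∂μ := by
  obtain ⟨κ, hκ, hmoment⟩ := exists_measurable_selection_setIntegral_eq h.le h.not_isGAtom
    (g := fun k (l : ι × J) x => y k l.1 x * ρ l.2 x)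
    (fun k l => (h.integrable l.2).bdd_mul (hy k l.1).aestronglyMeasurable (.of_forall (hC k l.1)))
    ha ha'
  refine ⟨κ, hκ, fun θ i => h.integral_mul_eq
    (measurable_apply_selection (fun k => hy k i) hκ)
    (Finset.measurable_fun_sum _ fun k _ => (measurable_pi_iff.1 ha k).fun_mul (hy k i))
    (fun x => hC _ i x) (fun x => abs_sum_mul_le_of_forall_abs_le (ha' x) fun k => hC k i x)
    (fun B hB j => ?_) θ⟩
  simpa only [Finset.sum_mul, mul_assoc] using hmoment B hB (i, j)

theorem exists_selection_setIntegral_range_eq {W : Type*} {mS : MeasurableSpace S}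
    {lam : Measure S} [IsFiniteMeasure lam] [Finite ι] [Fintype K] [Nonempty K] [MeasurableSpace K]
    [MeasurableSingletonClass K] {G mW : MeasurableSpace W} {e : W → S}
    (he : MeasurableEmbedding e)
    (h : IsDecomposableCoarser G (lam.comap e) (fun θ x => q θ (e x))
      (fun j θ x => qj j θ (e x)) (fun j x => ρ j (e x)))
    {y : K → ι → S → ℝ} (hy : ∀ k i, Measurable (y k i))
    {C : ℝ} (hC : ∀ k i x, |y k i x| ≤ C) {a : S → K → ℝ} (ha : Measurable a)
    (ha' : ∀ x, a x ∈ stdSimplex ℝ K) : ∃ κ : S → K, Measurable κ ∧ ∀ θ i,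
      ∫ x in Set.range e, y (κ x) i x * q θ x ∂lam
        = ∫ x in Set.range e, (∑ k, a x k * y k i x) * q θ x ∂lam := by
  have : IsFiniteMeasure (lam.comap e) := ⟨he.comap_apply lam _ ▸ measure_lt_top _ _⟩
  obtain ⟨κ, hκ, hmoment⟩ := h.exists_selection (y := fun k i x => y k i (e x))
    (fun k i => (hy k i).comp he.measurable) (fun k i x => hC k i (e x)) (ha.comp he.measurable)
    fun x => ha' (e x)
  refine ⟨Function.extend e κ fun _ => Classical.arbitrary K,
    he.measurable_extend hκ measurable_const, fun θ i => ?_⟩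
  rw [← he.map_comap lam, he.integral_map, he.integral_map]
  simpa only [he.injective.extend_apply, Function.comp_apply] using hmoment θ i

end Density

/-! ### Weak compactness and convex combinations -/

section Hilbert

variable {H : Type*} [NormedAddCommGroup H] [InnerProductSpace ℝ H] [CompleteSpace H]

theorem exists_subseq_tendsto_inner {F : ℕ → H} {R : ℝ} (hF : ∀ n, ‖F n‖ ≤ R) :
    ∃ (σ : ℕ → ℕ) (W : H), StrictMono σ ∧
      ∀ y, Tendsto (fun n => inner ℝ (F (σ n)) y) atTop (nhds (inner ℝ W y)) := by
  -- Restricting to the closed span of the sequence makes the space separable.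
  let V : Submodule ℝ H := (Submodule.span ℝ (Set.range F)).topologicalClosure
  have : TopologicalSpace.SeparableSpace V :=
    ((Set.countable_range F).isSeparable.span (R := ℝ)).closure.separableSpace
  have : CompleteSpace V := (Submodule.isClosed_topologicalClosure _).completeSpace_coe
  let F' : ℕ → V := fun n =>
    ⟨F n, Submodule.le_topologicalClosure _ (Submodule.subset_span ⟨n, rfl⟩)⟩
  let x : ℕ → WeakDual ℝ V := fun n => StrongDual.toWeakDual (InnerProductSpace.toDual ℝ V (F' n))
  have hx (n) : x n ∈ WeakDual.toStrongDual ⁻¹' Metric.closedBall (0 : StrongDual ℝ V) R :=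
    mem_closedBall_zero_iff.2 (((InnerProductSpace.toDual ℝ V).norm_map (F' n)).trans_le (hF n))
  obtain ⟨φ, -, σ, hσ, hlim⟩ := WeakDual.isSeqCompact_closedBall ℝ V 0 R hx
  let W : V := (InnerProductSpace.toDual ℝ V).symm (WeakDual.toStrongDual φ)
  refine ⟨σ, W, hσ, fun y => ?_⟩
  have inner_W : φ (V.orthogonalProjectionOnto y) = inner ℝ (W : H) y := by
    rw [← Submodule.inner_orthogonalProjectionOnto_eq_of_mem_left,
      InnerProductSpace.toDual_symm_apply]
    rfl
  have inner_F (n) : x n (V.orthogonalProjectionOnto y) = inner ℝ (F n) y :=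
    InnerProductSpace.toDual_apply_apply.trans
      (Submodule.inner_orthogonalProjectionOnto_eq_of_mem_left (F' n) y)
  simpa only [Function.comp_def, inner_W, inner_F] using
    ((WeakDual.eval_continuous (V.orthogonalProjectionOnto y)).tendsto φ).comp hlim

theorem mem_closure_convexHull_of_tendsto_inner {F : ℕ → H} {W : H} {s : Set H}
    (hF : ∀ y, Tendsto (fun n => inner ℝ (F n) y) atTop (nhds (inner ℝ W y)))
    (hs : ∀ᶠ n in atTop, F n ∈ s) : W ∈ closure (convexHull ℝ s) := by
  by_contra hW
  obtain ⟨f, u, hfu, hu⟩ := geometric_hahn_banach_closed_point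
    (convex_convexHull ℝ s).closure isClosed_closure hW
  have hf (z) : inner ℝ z ((InnerProductSpace.toDual ℝ H).symm f) = f z := by
    rw [real_inner_comm, InnerProductSpace.toDual_symm_apply]
  have hlim := hF ((InnerProductSpace.toDual ℝ H).symm f)
  simp only [hf] at hlim
  exact hu.not_ge (le_of_tendsto hlim (hs.mono fun n hn =>
    (hfu _ (subset_closure (subset_convexHull ℝ s hn))).le))

theorem exists_tendsto_convexCombination_of_tendsto_inner {F : ℕ → H} {W : H}
    (hF : ∀ y, Tendsto (fun n => inner ℝ (F n) y) atTop (nhds (inner ℝ W y))) :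
    ∃ (L : ℕ → ℕ) (a : ∀ N, Fin (L N) → ℝ) (t : ∀ N, Fin (L N) → ℕ),
      (∀ N, a N ∈ stdSimplex ℝ (Fin (L N))) ∧ (∀ N k, N ≤ t N k) ∧
      Tendsto (fun N => ∑ k, a N k • F (t N k)) atTop (nhds W) := by
  have approx (N : ℕ) : ∃ (L : ℕ) (a : Fin L → ℝ) (t : Fin L → ℕ),
      a ∈ stdSimplex ℝ (Fin L) ∧ (∀ k, N ≤ t k) ∧
      ‖∑ k, a k • F (t k) - W‖ ≤ 1 / (N + 1 : ℝ) := by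
    obtain ⟨y, hy, hd⟩ := Metric.mem_closure_iff.1 (mem_closure_convexHull_of_tendsto_inner hF
      ((eventually_ge_atTop N).mono fun n hn => Set.mem_image_of_mem F hn))
      (1 / (N + 1 : ℝ)) (by positivity)
    obtain ⟨ι, _, c, z, hc₀, hc₁, hz, rfl⟩ := mem_convexHull_iff_exists_fintype.1 hy
    choose t ht htz using hz
    let e := (Fintype.equivFin ι).symm
    refine ⟨Fintype.card ι, c ∘ e, t ∘ e, ⟨fun k => hc₀ _, (e.sum_comp c).trans hc₁⟩,
      fun k => ht _, ?_⟩
    rw [dist_comm, dist_eq_norm] at hd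
    simpa only [Function.comp_apply, htz, e.sum_comp fun i => c i • z i] using hd.le
  choose L a t ha ht hd using approx
  exact ⟨L, a, t, ha, ht, tendsto_iff_norm_sub_tendsto_zero.2 (squeeze_zero
    (fun _ => norm_nonneg _) hd tendsto_one_div_add_atTop_nhds_zero_nat)⟩

end Hilbert

section BoundedSequences

variable {Ω : Type*} [MeasurableSpace Ω] {P : Measure Ω}

theorem integrable_mul_of_abs_le {f h : Ω → ℝ} {C : ℝ} (hf : Measurable f) (hC : ∀ x, |f x| ≤ C)
    (hh : Integrable h P) : Integrable (fun x => f x * h x) P :=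
  hh.bdd_mul (c := C) hf.aestronglyMeasurable (.of_forall hC)

theorem abs_integral_mul_sub_le {f h h' : Ω → ℝ} {C : ℝ} (hf : Measurable f)
    (hC : ∀ x, |f x| ≤ C) (hh : Integrable h P) (hh' : Integrable h' P) :
    |∫ x, f x * h x ∂P - ∫ x, f x * h' x ∂P| ≤ C * ∫ x, |h x - h' x| ∂P := by
  have hi := integrable_mul_of_abs_le hf hC hh
  have hi' := integrable_mul_of_abs_le hf hC hh'
  have hsub : Integrable (fun x => |h x - h' x|) P := (hh.sub hh').abs
  rw [← integral_sub hi hi', ← integral_const_mul]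
  refine abs_integral_le_integral_abs.trans (integral_mono (hi.sub hi').abs
    (hsub.const_mul C) fun x => ?_)
  simp only [← mul_sub, abs_mul]
  exact mul_le_mul_of_nonneg_right (hC x) (abs_nonneg _)

theorem tendsto_integral_mul_of_forall_simpleFunc {f : ℕ → Ω → ℝ} {w : Ω → ℝ} {C : ℝ}
    [IsFiniteMeasure P] (hf : ∀ n, Measurable (f n)) (hw : Measurable w)
    (hfC : ∀ n x, |f n x| ≤ C) (hwC : ∀ x, |w x| ≤ C)
    (hlim : ∀ g : SimpleFunc Ω ℝ,
      Tendsto (fun n => ∫ x, f n x * g x ∂P) atTop (nhds (∫ x, w x * g x ∂P)))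
    {h : Ω → ℝ} (hm : Measurable h) (hh : Integrable h P) :
    Tendsto (fun n => ∫ x, f n x * h x ∂P) atTop (nhds (∫ x, w x * h x ∂P)) := by
  let g : ℕ → SimpleFunc Ω ℝ := SimpleFunc.approxOn h hm (Set.range h ∪ {0}) 0 (by simp)
  have hg (k) : Integrable (g k) P := SimpleFunc.integrable_of_isFiniteMeasure _
  have hgh : Tendsto (fun k => C * ∫ x, |g k x - h x| ∂P) atTop (nhds 0) := by
    simpa only [mul_zero, Real.norm_eq_abs] using
      (tendsto_integral_norm_approxOn_sub hm hh).const_mul C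
  refine TendstoUniformly.tendsto_of_eventually_tendsto (p := atTop)
    (F := fun k n => ∫ x, f n x * g k x ∂P) (L := fun k => ∫ x, w x * g k x ∂P)
    (Metric.tendstoUniformly_iff.2 fun ε hε => ?_) (.of_forall fun k => hlim (g k)) ?_
  · filter_upwards [hgh.eventually (gt_mem_nhds hε)] with k hk n
    rw [dist_comm, Real.dist_eq]
    exact (abs_integral_mul_sub_le (hf n) (hfC n) (hg k) hh).trans_lt hk
  · exact tendsto_iff_dist_tendsto_zero.2 (squeeze_zero (fun _ => dist_nonneg)
      (fun k => abs_integral_mul_sub_le hw hwC (hg k) hh) hgh)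

theorem exists_tendsto_ae_convexCombination_of_tendsto_inner {E : Type*} [NormedAddCommGroup E]
    [InnerProductSpace ℝ E] [CompleteSpace E] {f : ℕ → Ω → E} (hf : ∀ n, MemLp (f n) 2 P)
    {W : Lp E 2 P} (hW : ∀ y : Lp E 2 P,
      Tendsto (fun n => inner ℝ ((hf n).toLp (f n)) y) atTop (nhds (inner ℝ W y))) :
    ∃ (L : ℕ → ℕ) (a : ∀ N, Fin (L N) → ℝ) (t : ∀ N, Fin (L N) → ℕ),
      (∀ N, a N ∈ stdSimplex ℝ (Fin (L N))) ∧ (∀ N k, N ≤ t N k) ∧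
      ∀ᵐ x ∂P, Tendsto (fun N => ∑ k, a N k • f (t N k) x) atTop (nhds (W x)) := by
  obtain ⟨L, a, t, ha, ht, hlim⟩ := exists_tendsto_convexCombination_of_tendsto_inner hW
  obtain ⟨ns, hns, hae⟩ := (tendstoInMeasure_of_tendsto_Lp hlim).exists_seq_tendsto_ae
  have coeFn_sum (N) : ⇑(∑ k, a N k • (hf (t N k)).toLp (f (t N k))) =ᵐ[P]
      fun x => ∑ k, a N k • f (t N k) x := by
    refine (Lp.coeFn_finsetSum _ _).trans ?_
    filter_upwards [ae_all_iff.2 fun k => Lp.coeFn_smul (a N k) ((hf (t N k)).toLp (f (t N k))),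
      ae_all_iff.2 fun k => (hf (t N k)).coeFn_toLp] with x hsmul hcoe
    simp only [Finset.sum_apply, hsmul, Pi.smul_apply, hcoe]
  refine ⟨L ∘ ns, fun N => a (ns N), fun N => t (ns N), fun N => ha _,
    fun N k => (hns.id_le N).trans (ht _ k), ?_⟩
  filter_upwards [hae, ae_all_iff.2 coeFn_sum] with x hx hsum
  exact hx.congr fun N => hsum _

variable {ι : Type*}

theorem norm_toLp_le_of_abs_le [Fintype ι] {z : ι → ℝ} {C : ℝ} (hC₀ : 0 ≤ C) (hz : ∀ i, |z i| ≤ C) :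
    ‖WithLp.toLp 2 z‖ ≤ √(Fintype.card ι) * C := by
  rw [EuclideanSpace.norm_eq, ← Real.sqrt_sq hC₀, ← Real.sqrt_mul (Nat.cast_nonneg _)]
  refine Real.sqrt_le_sqrt ((Finset.sum_le_card_nsmul _ _ (C ^ 2) fun i _ => ?_).trans_eq
    (by rw [Finset.card_univ, nsmul_eq_mul]))
  exact pow_le_pow_left₀ (norm_nonneg _) (hz i) 2

theorem memLp_toLp_of_abs_le [Fintype ι] [IsFiniteMeasure P] {f : ι → Ω → ℝ} {C : ℝ}
    (hC₀ : 0 ≤ C) (hf : ∀ i, Measurable (f i)) (hC : ∀ i x, |f i x| ≤ C) :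
    MemLp (fun x => WithLp.toLp 2 fun i => f i x) 2 P :=
  .of_bound ((WithLp.measurable_toLp 2 _).comp (measurable_pi_lambda _ hf)).aestronglyMeasurable _
    (.of_forall fun x => norm_toLp_le_of_abs_le hC₀ fun i => hC i x)

theorem inner_toLp_single [Fintype ι] [DecidableEq ι] {W : Lp (EuclideanSpace ℝ ι) 2 P}
    {w : ι → Ω → ℝ} (hw : ∀ᵐ x ∂P, ∀ i, W x i = w i x) (i : ι) (g : SimpleFunc Ω ℝ)
    (hg : MemLp (fun x => EuclideanSpace.single i (g x)) 2 P) :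
    inner ℝ W (hg.toLp _) = ∫ x, w i x * g x ∂P := by
  rw [L2.inner_def]
  refine integral_congr_ae ?_
  filter_upwards [hw, hg.coeFn_toLp] with x hx hgx
  rw [hgx, EuclideanSpace.inner_single_right, hx]
  exact mul_comm _ _

theorem exists_abs_le_ae_eq {W : ι → Ω → ℝ} {f : ℕ → ι → Ω → ℝ} {C : ℝ}
    (hC₀ : 0 ≤ C) (hW : ∀ i, Measurable (W i)) (hC : ∀ n i x, |f n i x| ≤ C)
    (hlim : ∀ᵐ x ∂P, ∀ i, Tendsto (fun n => f n i x) atTop (nhds (W i x))) :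
    ∃ w : ι → Ω → ℝ, (∀ i, Measurable (w i)) ∧ (∀ i x, |w i x| ≤ C) ∧
      ∀ᵐ x ∂P, ∀ i, W i x = w i x := by
  refine ⟨fun i x => max (-C) (min (W i x) C),
    fun i => measurable_const.max ((hW i).min measurable_const),
    fun i x => abs_le.2 ⟨le_max_left _ _, max_le (by linarith) (min_le_right _ _)⟩, ?_⟩
  filter_upwards [hlim] with x hx i
  have := abs_le.1 (le_of_tendsto (hx i).abs (.of_forall fun n => hC n i x))
  rw [min_eq_left this.2, max_eq_right this.1]

theorem exists_subseq_tendsto_integral_mul_and_convexCombination [Finite ι]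
    [IsFiniteMeasure P] {f : ℕ → ι → Ω → ℝ} {C : ℝ} (hC₀ : 0 ≤ C) (hf : ∀ n i, Measurable (f n i))
    (hC : ∀ n i x, |f n i x| ≤ C) :
    ∃ (σ : ℕ → ℕ) (w : ι → Ω → ℝ), StrictMono σ ∧ (∀ i, Measurable (w i)) ∧
      (∀ i x, |w i x| ≤ C) ∧
      (∀ i (h : Ω → ℝ), Measurable h → Integrable h P →
        Tendsto (fun n => ∫ x, f (σ n) i x * h x ∂P) atTop (nhds (∫ x, w i x * h x ∂P))) ∧
      ∃ (L : ℕ → ℕ) (a : ∀ N, Fin (L N) → ℝ) (t : ∀ N, Fin (L N) → ℕ),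
        (∀ N, a N ∈ stdSimplex ℝ (Fin (L N))) ∧ (∀ N k, N ≤ t N k) ∧
        ∀ᵐ x ∂P, ∀ i, Tendsto (fun N => ∑ k, a N k * f (σ (t N k)) i x) atTop
          (nhds (w i x)) := by
  classical
  have := Fintype.ofFinite ι
  have hmem (n) := memLp_toLp_of_abs_le (P := P) hC₀ (hf n) (hC n)
  obtain ⟨σ, W, hσ, hW⟩ := exists_subseq_tendsto_inner fun n =>
    Lp.norm_le_of_ae_bound (f := (hmem n).toLp _) (C := √(Fintype.card ι) * C) (by positivity) (by
      filter_upwards [(hmem n).coeFn_toLp] with x hx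
      exact hx ▸ norm_toLp_le_of_abs_le hC₀ fun i => hC n i x)
  obtain ⟨L, a, t, ha, ht, hae⟩ :=
    exists_tendsto_ae_convexCombination_of_tendsto_inner (fun n => hmem (σ n)) hW
  have hae' : ∀ᵐ x ∂P, ∀ i, Tendsto (fun N => ∑ k, a N k * f (σ (t N k)) i x) atTop
      (nhds (W x i)) := by
    filter_upwards [hae] with x hx i
    have := ((EuclideanSpace.proj (𝕜 := ℝ) i).continuous.tendsto (W x)).comp hx
    simpa [Function.comp_def] using this
  obtain ⟨w, hwm, hwC, hWw⟩ := exists_abs_le_ae_eq hC₀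
    (fun i => (EuclideanSpace.proj (𝕜 := ℝ) i).continuous.measurable.comp
      (Lp.stronglyMeasurable W).measurable)
    (fun N i x => abs_sum_mul_le_of_forall_abs_le (ha N) fun k => hC _ i x) hae'
  refine ⟨σ, w, hσ, hwm, hwC, fun i h hm hh => ?_, L, a, t, ha, ht, ?_⟩
  · refine tendsto_integral_mul_of_forall_simpleFunc (fun n => hf _ i) (hwm i) (fun n => hC _ i)
      (hwC i) (fun g => ?_) hm hh
    have hg : MemLp (fun x => EuclideanSpace.single i (g x)) 2 P :=
      (g.map (EuclideanSpace.single i)).memLp_of_isFiniteMeasure 2 P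
    have := hW (hg.toLp _)
    rw [inner_toLp_single hWw] at this
    refine this.congr fun n => inner_toLp_single ?_ i g hg
    filter_upwards [(hmem (σ n)).coeFn_toLp] with x hx j
    rw [hx]
  · filter_upwards [hae', hWw] with x hx hxw i
    exact hxw i ▸ hx i

end BoundedSequences

/-! ### Finite partitions capturing a family of densities -/

section CountablyGenerated

theorem countablyGenerated_iSup {ι S : Type*} [Countable ι] {m : ι → MeasurableSpace S}
    (hm : ∀ i, @MeasurableSpace.CountablyGenerated S (m i)) :
    @MeasurableSpace.CountablyGenerated S (⨆ i, m i) := by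
  choose b hb hmb using fun i => (hm i).isCountablyGenerated
  refine @MeasurableSpace.CountablyGenerated.mk S (⨆ i, m i)
    ⟨⋃ i, b i, Set.countable_iUnion hb, ?_⟩
  rw [iSup_congr hmb, MeasurableSpace.iSup_generateFrom]

variable {S T Y : Type*} [mS : MeasurableSpace S] [MeasurableSpace T] [MeasurableSpace Y]

theorem exists_countablyGenerated_measurableSet_section {E : Set (S × T)}
    (hE : MeasurableSet E) :
    ∃ m ≤ mS, @MeasurableSpace.CountablyGenerated S m ∧
      ∀ t, MeasurableSet[m] {s | (s, t) ∈ E} := by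
  rw [← generateFrom_prod] at hE
  induction E, hE using MeasurableSpace.generateFrom_induction with
  | hC E hE _ =>
    obtain ⟨A, hA, D, -, rfl⟩ := hE
    refine ⟨.generateFrom {A}, MeasurableSpace.generateFrom_le fun _ h => h ▸ hA,
      @MeasurableSpace.CountablyGenerated.mk _ (.generateFrom {A})
        ⟨{A}, Set.countable_singleton A, rfl⟩, fun t => ?_⟩
    by_cases ht : t ∈ D
    · simpa only [Set.mem_prod, ht, and_true, Set.ofPred_mem_eq] using
        MeasurableSpace.measurableSet_generateFrom (Set.mem_singleton A)
    · simp only [Set.mem_prod, ht, and_false, Set.ofPred_false, MeasurableSet.empty]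
  | empty =>
    exact ⟨⊥, bot_le, @MeasurableSpace.CountablyGenerated.mk _ ⊥
      ⟨∅, Set.countable_empty, MeasurableSpace.generateFrom_empty.symm⟩,
      fun _ => @MeasurableSet.empty _ ⊥⟩
  | compl E _ ih =>
    obtain ⟨m, hm, hcg, h⟩ := ih
    exact ⟨m, hm, hcg, fun t => (h t).compl⟩
  | iUnion E _ ih =>
    choose m hm hcg h using ih
    refine ⟨⨆ n, m n, iSup_le hm, countablyGenerated_iSup hcg, fun t => ?_⟩
    simp only [Set.mem_iUnion, Set.ofPred_exists]
    exact .iUnion fun n => le_iSup m n _ (h n t)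

theorem exists_countablyGenerated_measurable_section [MeasurableSpace.CountablyGenerated Y]
    {F : S × T → Y} (hF : Measurable F) :
    ∃ m ≤ mS, @MeasurableSpace.CountablyGenerated S m ∧
      ∀ t, Measurable[m] fun s => F (s, t) := by
  choose m hm hcg h using fun n => exists_countablyGenerated_measurableSet_section
    (hF (MeasurableSpace.measurableSet_natGeneratingSequence (α := Y) n))
  refine ⟨⨆ n, m n, iSup_le hm, countablyGenerated_iSup hcg, fun t => ?_⟩
  rw [← MeasurableSpace.generateFrom_natGeneratingSequence Y]
  refine @measurable_generateFrom _ _ (⨆ n, m n) _ _ ?_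
  rintro _ ⟨n, rfl⟩
  exact le_iSup m n _ (h n t)

theorem exists_countablyGenerated_aestronglyMeasurable {μ : Measure S} {S₁ : Set S}
    (hS₁ : S₁ᶜ.Countable) (hsing : ∀ s ∈ S₁ᶜ, MeasurableSet {s}) {ι : Type*} [Fintype ι]
    {q : T → S → ℝ} {qj : ι → S × T → ℝ} {ρ : ι → S → ℝ} (hqj : ∀ j, Measurable (qj j))
    (hρ : ∀ j, AEStronglyMeasurable (ρ j) (μ.restrict S₁))
    (hq : ∀ t, ∀ s ∈ S₁, q t s = ∑ j, qj j (s, t) * ρ j s) :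
    ∃ m ≤ mS, @MeasurableSpace.CountablyGenerated S m ∧
      ∀ t, AEStronglyMeasurable[m] (q t) μ := by
  classical
  choose m₁ hm₁ hcg₁ h₁ using fun j => exists_countablyGenerated_measurable_section (hqj j)
  let m₂ (j : ι) : MeasurableSpace S := .comap ((hρ j).mk (ρ j)) inferInstance
  let m₃ : MeasurableSpace S := .generateFrom ((fun s => {s}) '' S₁ᶜ)
  let m := (⨆ j, m₁ j ⊔ m₂ j) ⊔ m₃
  have hm₃ (D : Set S) (hD : D ⊆ S₁ᶜ) : MeasurableSet[m] D := by
    rw [← Set.biUnion_of_singleton D]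
    exact .biUnion (hS₁.mono hD) fun s hs => (le_sup_right : m₃ ≤ m) _
      (MeasurableSpace.measurableSet_generateFrom ⟨s, hD hs, rfl⟩)
  have hle (j : ι) : m₁ j ⊔ m₂ j ≤ m := (le_iSup (fun j => m₁ j ⊔ m₂ j) j).trans le_sup_left
  have hmS : MeasurableSet[mS] S₁ := by
    rw [← compl_compl S₁, ← Set.biUnion_of_singleton S₁ᶜ]
    exact (MeasurableSet.biUnion hS₁ hsing).compl
  have hcg₂ (j : ι) : @MeasurableSpace.CountablyGenerated S (m₁ j ⊔ m₂ j) :=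
    .sup (hcg₁ j) (.comap _)
  have hcg₃ : @MeasurableSpace.CountablyGenerated S m₃ :=
    @MeasurableSpace.CountablyGenerated.mk _ m₃ ⟨_, hS₁.image _, rfl⟩
  refine ⟨m, sup_le (iSup_le fun j => sup_le (hm₁ j) ?_) ?_,
    .sup (countablyGenerated_iSup hcg₂) hcg₃, fun t =>
    ⟨S₁.piecewise (fun s => ∑ j, qj j (s, t) * (hρ j).mk (ρ j) s) (q t), ?_, ?_⟩⟩
  · exact (hρ j).stronglyMeasurable_mk.measurable.comap_le
  · exact MeasurableSpace.generateFrom_le (Set.forall_mem_image.2 hsing)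
  · refine Measurable.stronglyMeasurable (mα := m) fun D hD => ?_
    rw [Set.piecewise_preimage, Set.ite]
    refine .union (.inter ?_ (compl_compl S₁ ▸ (hm₃ _ subset_rfl).compl))
      (hm₃ _ fun s hs => hs.2)
    refine (Finset.measurable_sum _ fun j _ => ?_ : Measurable[m] _) hD
    exact ((h₁ j t).mono (le_sup_left.trans (hle j)) le_rfl).mul
      ((comap_measurable _).mono (le_sup_right.trans (hle j)) le_rfl)
  · filter_upwards [(ae_restrict_iff' hmS).1 (ae_all_iff.2 fun j => (hρ j).ae_eq_mk)] with s hs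
    by_cases h : s ∈ S₁
    · simp only [Set.piecewise_eq_of_mem _ _ _ h, hq t s h, hs h]
    · rw [Set.piecewise_eq_of_notMem _ _ _ h]

end CountablyGenerated

section Martingale

variable {S : Type*} {m mS : MeasurableSpace S} {μ : Measure S}

theorem exists_filtration_comap_of_countablyGenerated
    (hcg : @MeasurableSpace.CountablyGenerated S m) (hm : m ≤ mS) :
    ∃ (ℱ : Filtration ℕ mS) (π : ∀ n, S → (Fin n → Prop)),
      (∀ n, ℱ n = MeasurableSpace.comap (π n) inferInstance) ∧ m ≤ ⨆ n, ℱ n := by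
  let B := @MeasurableSpace.natGeneratingSequence S m hcg
  let π : ∀ n, S → (Fin n → Prop) := fun n s k => s ∈ B k
  have hB (k : ℕ) : MeasurableSet[m] (B k) :=
    @MeasurableSpace.measurableSet_natGeneratingSequence S m hcg k
  let ℱ : Filtration ℕ mS :=
    { seq n := MeasurableSpace.comap (π n) inferInstance
      mono' n n' h := by
        rintro _ ⟨D, hD, rfl⟩
        exact ⟨(fun x k => x (Fin.castLE h k)) ⁻¹' D,
          (measurable_pi_lambda _ fun k => measurable_pi_apply _) hD, rfl⟩
      le' n := Measurable.comap_le <|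
        measurable_pi_lambda (π n) fun k => measurableSet_setOfPred.1 (hm _ (hB k)) }
  refine ⟨ℱ, π, fun n => rfl, ?_⟩
  rw [← @MeasurableSpace.generateFrom_natGeneratingSequence S m hcg]
  refine MeasurableSpace.generateFrom_le ?_
  rintro _ ⟨k, rfl⟩
  exact le_iSup (fun n => ℱ n) (k + 1) _ ⟨{x | x (Fin.last k)},
    measurableSet_setOfPred.2 (measurable_pi_apply _), rfl⟩

theorem tendsto_integral_abs_condExp_sub [IsFiniteMeasure μ] {ℱ : Filtration ℕ mS} {g : S → ℝ}
    (hg : Integrable g μ) (hgm : AEStronglyMeasurable[⨆ n, ℱ n] g μ) :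
    Tendsto (fun n => ∫ s, |(μ[g|ℱ n]) s - g s| ∂μ) atTop (nhds 0) := by
  have h := (hg.congr hgm.ae_eq_mk).tendsto_eLpNorm_condExp hgm.stronglyMeasurable_mk
  refine ((ENNReal.tendsto_toReal ENNReal.zero_ne_top).comp h).congr fun n => ?_
  rw [Function.comp_apply, eLpNorm_one_eq_lintegral_enorm, ← integral_norm_eq_lintegral_enorm
    (integrable_condExp.sub (hg.congr hgm.ae_eq_mk)).aestronglyMeasurable]
  refine integral_congr_ae ?_
  filter_upwards [condExp_congr_ae (m := ℱ n) hgm.ae_eq_mk, hgm.ae_eq_mk] with s hs hs'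
  rw [Pi.sub_apply, Real.norm_eq_abs, hs, hs']

theorem integral_mul_eq_integral_mul_condExp [IsFiniteMeasure μ] (hm : m ≤ mS) {v y h : S → ℝ}
    {C : ℝ} (hv : Measurable v) (hvC : ∀ s, |v s| ≤ C) (hy : Measurable[m] y)
    (hyC : ∀ s, |y s| ≤ C) (hh : Integrable h μ)
    (havg : ∀ D, MeasurableSet[m] D → ∫ s in D, y s ∂μ = ∫ s in D, v s ∂μ) :
    ∫ s, y s * h s ∂μ = ∫ s, v s * (μ[h|m]) s ∂μ := by
  have hvi : Integrable v μ := .of_bound hv.aestronglyMeasurable C (.of_forall hvC)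
  have hyi : Integrable y μ :=
    .of_bound (hy.mono hm le_rfl).aestronglyMeasurable C (.of_forall hyC)
  have hyv : y =ᵐ[μ] μ[v|m] := ae_eq_condExp_of_forall_setIntegral_eq hm hvi
    (fun _ _ _ => hyi.integrableOn) (fun D hD _ => havg D hD)
    hy.stronglyMeasurable.aestronglyMeasurable
  have hleft := condExp_mul_of_stronglyMeasurable_left hy.stronglyMeasurable
    (integrable_mul_of_abs_le (hy.mono hm le_rfl) hyC hh) hh
  have hright := condExp_mul_of_stronglyMeasurable_right (g := μ[h|m])
    stronglyMeasurable_condExp (integrable_mul_of_abs_le hv hvC integrable_condExp) hvi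
  calc ∫ s, y s * h s ∂μ = ∫ s, y s * (μ[h|m]) s ∂μ := by
        rw [← integral_condExp hm]
        exact integral_congr_ae hleft
    _ = ∫ s, (μ[v|m]) s * (μ[h|m]) s ∂μ := by
        refine integral_congr_ae ?_
        filter_upwards [hyv] with s hs
        rw [hs]
    _ = ∫ s, v s * (μ[h|m]) s ∂μ := by
        rw [← integral_condExp hm (f := fun s => v s * (μ[h|m]) s)]
        exact (integral_congr_ae hright).symm

theorem exists_partitions_tendsto_condExp [IsFiniteMeasure μ]
    (hcg : @MeasurableSpace.CountablyGenerated S m) (hm : m ≤ mS) :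
    ∃ π : ∀ n, S → (Fin n → Prop), (∀ n, Measurable (π n)) ∧
      ∀ g : S → ℝ, Integrable g μ → AEStronglyMeasurable[m] g μ →
        Tendsto (fun n => ∫ s, |(μ[g|MeasurableSpace.comap (π n) inferInstance]) s - g s| ∂μ)
          atTop (nhds 0) := by
  obtain ⟨ℱ, π, hπ, hmℱ⟩ := exists_filtration_comap_of_countablyGenerated hcg hm
  refine ⟨π, fun n => measurable_iff_comap_le.2 (hπ n ▸ ℱ.le n), fun g hg hgm => ?_⟩
  simpa only [hπ] using tendsto_integral_abs_condExp_sub (ℱ := ℱ) hg (hgm.mono hmℱ)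

end Martingale

/-! ### Approximate equilibria of a static game -/

section StaticGame

theorem tendsto_integral_of_tendsto_of_tendstoUniformly {Z : Type*} [TopologicalSpace Z]
    [CompactSpace Z] [MeasurableSpace Z] [OpensMeasurableSpace Z] {μ : ℕ → ProbabilityMeasure Z}
    {ν : ProbabilityMeasure Z} (hμ : Tendsto μ atTop (nhds ν)) {h : ℕ → Z → ℝ} {k : Z → ℝ}
    (hh : ∀ n, Continuous (h n)) (hk : Continuous k) (hu : TendstoUniformly h k atTop) :
    Tendsto (fun n => ∫ z, h n z ∂(μ n : Measure Z)) atTop (nhds (∫ z, k z ∂(ν : Measure Z))) := by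
  have hint {g : Z → ℝ} (hg : Continuous g) (n : ℕ) : Integrable g (μ n : Measure Z) :=
    (BoundedContinuousFunction.mkOfCompact ⟨g, hg⟩).integrable _
  have hlim : Tendsto (fun n => ∫ z, k z ∂(μ n : Measure Z)) atTop
      (nhds (∫ z, k z ∂(ν : Measure Z))) :=
    ProbabilityMeasure.tendsto_iff_forall_integral_tendsto.1 hμ
      (BoundedContinuousFunction.mkOfCompact ⟨k, hk⟩)
  have hdiff : Tendsto (fun n => ∫ z, h n z ∂(μ n : Measure Z) - ∫ z, k z ∂(μ n : Measure Z)) atTop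
      (nhds 0) := by
    refine Metric.tendsto_nhds.2 fun ε hε => ?_
    filter_upwards [Metric.tendstoUniformly_iff.1 hu (ε / 2) (half_pos hε)] with n hn
    rw [dist_zero_right, ← integral_sub (hint (hh n) n) (hint hk n)]
    refine (norm_integral_le_of_norm_le_const (C := ε / 2) (ae_of_all _ fun z => ?_)).trans_lt ?_
    · rw [← dist_eq_norm, dist_comm]
      exact (hn z).le
    · rw [probReal_univ, mul_one]
      exact half_lt_self hε
  simpa only [sub_add_cancel, zero_add] using hdiff.add hlim

theorem tendstoUniformly_comp_of_uniformContinuous {α β γ : Type*} [UniformSpace β]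
    [PseudoMetricSpace γ] {l : Filter ℕ} {h : ℕ → β → γ} {h₀ : β → γ} {g : ℕ → α → β} {g₀ : α → β}
    (hh : TendstoUniformly h h₀ l) (hh₀ : UniformContinuous h₀) (hg : TendstoUniformly g g₀ l) :
    TendstoUniformly (fun n x => h n (g n x)) (fun x => h₀ (g₀ x)) l := by
  refine Metric.tendstoUniformly_iff.2 fun ε hε => ?_
  filter_upwards [Metric.tendstoUniformly_iff.1 hh (ε / 2) (half_pos hε),
    Metric.tendstoUniformly_iff.1 (hh₀.comp_tendstoUniformly hg) (ε / 2) (half_pos hε)]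
    with n hn hn' x
  calc dist (h₀ (g₀ x)) (h n (g n x))
      ≤ dist (h₀ (g₀ x)) (h₀ (g n x)) + dist (h₀ (g n x)) (h n (g n x)) := dist_triangle _ _ _
    _ < ε / 2 + ε / 2 := add_lt_add (hn' x) (hn (g n x))
    _ = ε := add_halves ε

theorem tendstoUniformly_update {ι : Type*} [Finite ι] [DecidableEq ι] {X : ι → Type*}
    [∀ i, PseudoMetricSpace (X i)] {i : ι} {a : ℕ → X i} {a₀ : X i}
    (ha : Tendsto a atTop (nhds a₀)) :
    TendstoUniformly (fun n (x : ∀ j, X j) => Function.update x i (a n))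
      (fun x => Function.update x i a₀) atTop := by
  have := Fintype.ofFinite ι
  refine Metric.tendstoUniformly_iff.2 fun δ hδ => ?_
  filter_upwards [Metric.tendsto_nhds.1 ha δ hδ] with n hn x
  rw [dist_comm, dist_pi_lt_iff hδ]
  intro j
  rcases eq_or_ne j i with rfl | hj
  · simpa only [Function.update_self] using hn
  · simpa only [Function.update_of_ne hj, dist_self] using hδ

variable {ι : Type*} [Fintype ι] [DecidableEq ι] {X : ι → Type*} [∀ i, MeasurableSpace (X i)]

theorem mixedPayoff_sub {A : ι → Type*} [∀ i, Fintype (A i)] (p : ∀ j, A j → ℝ)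
    (U V : (∀ j, A j) → ℝ) :
    mixedPayoff p U - mixedPayoff p V = mixedPayoff p fun b => U b - V b := by
  simp only [mixedPayoff, mul_sub, Finset.sum_sub_distrib]

theorem exists_probabilityMeasure_integral_eq_mixedPayoff {T : ι → Type*} [∀ i, Fintype (T i)]
    {p : ∀ i, T i → ℝ} (hp₀ : ∀ i a, 0 ≤ p i a) (hp₁ : ∀ i, ∑ a, p i a = 1) (g : ∀ i, T i → X i) :
    ∃ f : ∀ i, ProbabilityMeasure (X i),
      (∀ i (k : X i → ℝ), Measurable k →
        ∫ x, k x ∂(f i : Measure (X i)) = ∑ a, p i a * k (g i a)) ∧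
      ∀ h : (∀ i, X i) → ℝ, Measurable h →
        ∫ x, h x ∂Measure.pi (fun i => (f i : Measure (X i))) =
          mixedPayoff p fun b => h fun j => g j (b j) := by
  let _ : ∀ i, MeasurableSpace (T i) := fun _ => ⊤
  have : ∀ i, MeasurableSingletonClass (T i) := fun _ => ⟨fun _ => trivial⟩
  let P (i) : PMF (T i) := PMF.ofFintype (fun a => ENNReal.ofReal (p i a)) <| by
    rw [← ENNReal.ofReal_sum_of_nonneg fun a _ => hp₀ i a, hp₁, ENNReal.ofReal_one]
  have hP (i a) : (P i).toMeasure.real {a} = p i a := by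
    rw [measureReal_def, PMF.toMeasure_apply_singleton _ _ (measurableSet_singleton a)]
    exact ENNReal.toReal_ofReal (hp₀ i a)
  have hg (i) : Measurable (g i) := measurable_from_top
  have hmap (i) : IsProbabilityMeasure ((P i).toMeasure.map (g i)) :=
    Measure.isProbabilityMeasure_map (hg i).aemeasurable
  refine ⟨fun i => ⟨(P i).toMeasure.map (g i), hmap i⟩, fun i k hk => ?_, fun h hh => ?_⟩
  · rw [ProbabilityMeasure.coe_mk, integral_map (hg i).aemeasurable hk.aestronglyMeasurable,
      integral_fintype .of_finite]
    simp only [hP, smul_eq_mul]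
  · have hpi : Measurable fun (b : ∀ i, T i) i => g i (b i) :=
      measurable_pi_lambda _ fun i => (hg i).comp (measurable_pi_apply i)
    simp only [ProbabilityMeasure.coe_mk]
    rw [← Measure.pi_map_pi fun i => (hg i).aemeasurable,
      integral_map hpi.aemeasurable hh.aestronglyMeasurable, integral_fintype .of_finite]
    refine Finset.sum_congr rfl fun b _ => ?_
    rw [measureReal_def, Measure.pi_singleton, ENNReal.toReal_prod]
    simp only [← measureReal_def, hP, smul_eq_mul]

/-- `f` is a mixed-strategy Nash equilibrium with payoffs `v` of the one-shot game in which
player `i` chooses an action in `A i` and receives `h i`. -/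
structure IsNash (A : ∀ i, Set (X i)) (h : ι → (∀ j, X j) → ℝ)
    (f : ∀ i, ProbabilityMeasure (X i)) (v : ι → ℝ) : Prop where
  measure_eq_one : ∀ i, (f i : Measure (X i)) (A i) = 1
  eq_integral : ∀ i, v i = ∫ x, h i x ∂Measure.pi fun j => (f j : Measure (X j))
  integral_update_le : ∀ i, ∀ a ∈ A i,
    ∫ x, h i (Function.update x i a) ∂Measure.pi (fun j => (f j : Measure (X j))) ≤ v i

variable [∀ i, MetricSpace (X i)]

/-- A weakening of `IsNash` by an error `ε` that a profile supported on a finite grid can satisfy: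
strategies only charge actions close to `A i` on average, and optimality is only tested against
actions close to those of `A i`. -/
structure IsApproxNash (ε : ℝ) (A : ∀ i, Set (X i)) (h : ι → (∀ j, X j) → ℝ)
    (f : ∀ i, ProbabilityMeasure (X i)) (v : ι → ℝ) : Prop where
  integral_infDist_le : ∀ i, ∫ x, Metric.infDist x (A i) ∂(f i : Measure (X i)) ≤ ε
  abs_sub_integral_le : ∀ i, |v i - ∫ x, h i x ∂Measure.pi fun j => (f j : Measure (X j))| ≤ ε
  exists_integral_update_le : ∀ i, ∀ a ∈ A i, ∃ a', dist a' a < ε ∧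
    ∫ x, h i (Function.update x i a') ∂Measure.pi (fun j => (f j : Measure (X j))) ≤ v i + ε

theorem measure_eq_one_of_integral_infDist_eq_zero {Z : Type*} [MetricSpace Z]
    [CompactSpace Z] [MeasurableSpace Z] [BorelSpace Z] {μ : ProbabilityMeasure Z} {B : Set Z}
    (hB : IsClosed B) (hne : B.Nonempty) (h : ∫ x, Metric.infDist x B ∂(μ : Measure Z) = 0) :
    (μ : Measure Z) B = 1 := by
  have hcont : Continuous fun x => Metric.infDist x B := Metric.continuous_infDist_pt B
  rw [integral_eq_zero_iff_of_nonneg (fun _ => Metric.infDist_nonneg)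
    ((BoundedContinuousFunction.mkOfCompact ⟨_, hcont⟩).integrable _)] at h
  refine (mem_ae_iff_prob_eq_one hB.measurableSet).1 ?_
  filter_upwards [h] with x hx
  exact (hB.mem_iff_infDist_zero hne).2 hx

theorem IsNash.of_tendsto_isApproxNash [∀ i, CompactSpace (X i)] [∀ i, BorelSpace (X i)]
    {A : ∀ i, Set (X i)} (hA : ∀ i, IsClosed (A i)) (hne : ∀ i, (A i).Nonempty) {ε : ℕ → ℝ}
    {h : ℕ → ι → (∀ i, X i) → ℝ} {f : ℕ → ∀ i, ProbabilityMeasure (X i)} {v : ℕ → ι → ℝ}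
    (H : ∀ n, IsApproxNash (ε n) A (h n) (f n) (v n)) (hε : Tendsto ε atTop (nhds 0))
    {h₀ : ι → (∀ i, X i) → ℝ} {f₀ : ∀ i, ProbabilityMeasure (X i)} {v₀ : ι → ℝ}
    (hh : ∀ n i, Continuous (h n i)) (hh₀ : ∀ i, Continuous (h₀ i))
    (hlim : ∀ i, TendstoUniformly (fun n => h n i) (h₀ i) atTop)
    (hf : Tendsto f atTop (nhds f₀)) (hv : ∀ i, Tendsto (fun n => v n i) atTop (nhds (v₀ i))) :
    IsNash A h₀ f₀ v₀ := by
  have hpi : Tendsto (fun n => ProbabilityMeasure.pi (f n)) atTop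
      (nhds (ProbabilityMeasure.pi f₀)) :=
    (ProbabilityMeasure.continuous_pi.tendsto f₀).comp hf
  refine ⟨fun i => ?_, fun i => ?_, fun i a ha => ?_⟩
  · refine measure_eq_one_of_integral_infDist_eq_zero (hA i) (hne i)
      (le_antisymm ?_ (integral_nonneg fun _ => Metric.infDist_nonneg))
    have hcont := Metric.continuous_infDist_pt (A i)
    exact le_of_tendsto_of_tendsto'
      (ProbabilityMeasure.tendsto_iff_forall_integral_tendsto.1 (tendsto_pi_nhds.1 hf i)
        (BoundedContinuousFunction.mkOfCompact ⟨_, hcont⟩))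
      hε fun n => (H n).integral_infDist_le i
  · have hint := tendsto_integral_of_tendsto_of_tendstoUniformly hpi (fun n => hh n i) (hh₀ i)
      (hlim i)
    exact sub_eq_zero.1 (tendsto_nhds_unique ((hv i).sub hint)
      (squeeze_zero_norm (fun n => (H n).abs_sub_integral_le i) hε))
  · choose a' ha' hle using fun n => (H n).exists_integral_update_le i a ha
    have hlim_a : Tendsto a' atTop (nhds a) := tendsto_iff_dist_tendsto_zero.2
      (squeeze_zero (fun _ => dist_nonneg) (fun n => (ha' n).le) hε)
    have hupd (b : X i) : Continuous fun x : ∀ j, X j => Function.update x i b := by fun_prop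
    have hint := tendsto_integral_of_tendsto_of_tendstoUniformly hpi
      (fun n => (hh n i).comp (hupd (a' n))) ((hh₀ i).comp (hupd a))
      (tendstoUniformly_comp_of_uniformContinuous (h := fun n => h n i) (h₀ := h₀ i) (hlim i)
        (CompactSpace.uniformContinuous_of_continuous (hh₀ i))
        (tendstoUniformly_update hlim_a))
    refine le_of_tendsto_of_tendsto' hint ?_ hle
    simpa only [add_zero] using (hv i).add hε

theorem isApproxNash_of_grid [∀ i, OpensMeasurableSpace (X i)]
    [∀ i, SecondCountableTopology (X i)] {T : ι → Type*} [∀ i, Fintype (T i)]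
    {p : ∀ i, T i → ℝ} (hp₀ : ∀ i a, 0 ≤ p i a)
    (hp₁ : ∀ i, ∑ a, p i a = 1) {g : ∀ i, T i → X i} {f : ∀ i, ProbabilityMeasure (X i)}
    (hf : ∀ i (k : X i → ℝ), Measurable k →
      ∫ x, k x ∂(f i : Measure (X i)) = ∑ a, p i a * k (g i a))
    (hpi : ∀ h : (∀ i, X i) → ℝ, Measurable h →
      ∫ x, h x ∂Measure.pi (fun i => (f i : Measure (X i))) =
        mixedPayoff p fun b => h fun j => g j (b j))
    {ε : ℝ} {A : ∀ i, Set (X i)} (hgrid : ∀ i x, ∃ a, dist (g i a) x < ε)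
    (hp : ∀ i a, ¬(A i ∩ Metric.ball (g i a) ε).Nonempty → p i a = 0)
    {h : ι → (∀ i, X i) → ℝ} (hh : ∀ i, Continuous (h i)) {U : ι → (∀ i, T i) → ℝ} {δ : ℝ}
    (hU : ∀ i b, |U i b - h i fun j => g j (b j)| ≤ δ) (hδ : 0 ≤ δ) (hδε : δ + δ ≤ ε) {v : ι → ℝ}
    (hv : ∀ i, v i = mixedPayoff p (U i))
    (hopt : ∀ i a, (A i ∩ Metric.ball (g i a) ε).Nonempty →
      mixedPayoff p (fun b => U i (Function.update b i a)) ≤ v i + δ) :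
    IsApproxNash ε A h f v := by
  refine ⟨fun i => ?_, fun i => ?_, fun i a ha => ?_⟩
  · rw [hf i _ (Metric.continuous_infDist_pt _).measurable]
    calc ∑ a, p i a * Metric.infDist (g i a) (A i) ≤ ∑ a, p i a * ε := by
          refine Finset.sum_le_sum fun a _ => ?_
          by_cases hfeas : (A i ∩ Metric.ball (g i a) ε).Nonempty
          · obtain ⟨x, hxA, hx⟩ := hfeas
            refine mul_le_mul_of_nonneg_left ?_ (hp₀ i a)
            exact (Metric.infDist_le_dist_of_mem hxA).trans (Metric.mem_ball'.1 hx).le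
          · simp only [hp i a hfeas, zero_mul, le_refl]
      _ = ε := by rw [← Finset.sum_mul, hp₁, one_mul]
  · rw [hv, hpi _ (hh i).measurable, mixedPayoff_sub]
    exact (abs_mixedPayoff_le hp₀ hp₁ (hU i)).trans (by linarith)
  · obtain ⟨k, hk⟩ := hgrid i a
    have hupd (b : ∀ j, T j) : Function.update (fun j => g j (b j)) i (g i k) =
        fun j => g j (Function.update b i k j) := by
      funext j
      exact (Function.apply_update g b i k j).symm
    have hcont : Continuous fun x : ∀ j, X j => h i (Function.update x i (g i k)) :=
      (hh i).comp (by fun_prop)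
    refine ⟨g i k, hk, ?_⟩
    have hclose := abs_mixedPayoff_le hp₀ hp₁ fun b => hU i (Function.update b i k)
    rw [hpi _ hcont.measurable]
    simp only [hupd]
    rw [← mixedPayoff_sub, abs_le] at hclose
    linarith [hclose.1, hopt i k ⟨a, ha, Metric.mem_ball'.2 hk⟩]

end StaticGame

/-! ### Discretising the state space -/

section Discretisation

variable {S : Type*} [mS : MeasurableSpace S] {μ : Measure S} {D T : Type*}

theorem exists_finite_quantization {I : Type*} [Finite I] {r : S → I → ℝ} {C η : ℝ}
    (hr : ∀ j, Measurable fun s => r s j) (hC : ∀ s j, |r s j| ≤ C) (hη : 0 < η) :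
    ∃ (n : ℕ) (c : S → Fin n) (rep : Fin n → S), Measurable c ∧
      ∀ s j, |r (rep (c s)) j - r s j| < η := by
  let code (s : S) (j : I) : ℤ := ⌊r s j / η⌋
  have hcode : Measurable code :=
    measurable_pi_lambda _ fun j => Int.measurable_floor.comp ((hr j).div_const η)
  have hfin : (Set.range code).Finite := by
    refine (Set.Finite.pi' fun _ => Set.finite_Icc ⌊-C / η⌋ ⌊C / η⌋).subset ?_
    rintro _ ⟨s, rfl⟩ j
    have hs := abs_le.1 (hC s j)
    exact ⟨Int.floor_mono (by gcongr; exact hs.1), Int.floor_mono (by gcongr; exact hs.2)⟩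
  have := hfin.to_subtype
  let e := Finite.equivFin (Set.range code)
  choose rep hrep using fun t => (e.symm t).2
  refine ⟨_, fun s => e ⟨code s, s, rfl⟩, rep, (measurable_of_finite e).comp hcode.subtype_mk,
    fun s j => ?_⟩
  have hcell : code (rep (e ⟨code s, s, rfl⟩)) = code s := by rw [hrep, Equiv.symm_apply_apply]
  have hlt := Int.abs_sub_lt_one_of_floor_eq_floor (congrFun hcell j)
  rwa [← sub_div, abs_div, abs_of_pos hη, div_lt_one hη] at hlt

variable [MeasurableSpace D] [MeasurableSingletonClass D]

theorem integral_comp_mul_eq_sum [Fintype D] {π : S → D} (hπ : Measurable π) (Y : D → ℝ)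
    {h : S → ℝ} (hh : Integrable h μ) :
    ∫ s, Y (π s) * h s ∂μ = ∑ d, Y d * ∫ s in π ⁻¹' {d}, h s ∂μ := by
  have hmeas (d : D) : MeasurableSet (π ⁻¹' {d}) := hπ (measurableSet_singleton d)
  have hcell (d : D) : Set.EqOn (fun s => Y (π s) * h s) (fun s => Y d * h s) (π ⁻¹' {d}) :=
    fun s hs => by simp only [show π s = d from hs]
  rw [← setIntegral_univ, ← Set.preimage_univ (f := π), ← Set.iUnion_of_singleton,
    Set.preimage_iUnion, integral_iUnion_fintype hmeas (pairwise_disjoint_fiber π)]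
  · exact Finset.sum_congr rfl fun d _ => by
      rw [setIntegral_congr_fun (hmeas d) (hcell d), integral_const_mul]
  · exact fun d => ((hh.const_mul (Y d)).integrableOn.congr_fun (hcell d).symm (hmeas d))

theorem integrable_comp_of_finite [Finite D] [IsFiniteMeasure μ] {π : S → D} (hπ : Measurable π)
    (Y : D → ℝ) : Integrable (fun s => Y (π s)) μ :=
  (Integrable.of_finite (μ := μ.map π) (f := Y)).comp_measurable hπ

theorem setIntegral_preimage_eq_of_forall_singleton [Finite D] {π : S → D} (hπ : Measurable π)
    {f g : S → ℝ} (hf : Integrable f μ) (hg : Integrable g μ)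
    (h : ∀ d, ∫ s in π ⁻¹' {d}, f s ∂μ = ∫ s in π ⁻¹' {d}, g s ∂μ) (E : Set D) :
    ∫ s in π ⁻¹' E, f s ∂μ = ∫ s in π ⁻¹' E, g s ∂μ := by
  have hsum {k : S → ℝ} (hk : Integrable k μ) :
      ∫ s in π ⁻¹' E, k s ∂μ = ∑ d ∈ E.toFinite.toFinset, ∫ s in π ⁻¹' {d}, k s ∂μ := by
    rw [← integral_biUnion_finset _ (fun d _ => hπ (measurableSet_singleton d))
      (fun _ _ _ _ hne => pairwise_disjoint_fiber π hne) fun _ _ => hk.integrableOn,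
      ← Finset.set_biUnion_coe, Set.Finite.coe_toFinset, Set.biUnion_preimage_singleton]
  rw [hsum hf, hsum hg]
  exact Finset.sum_congr rfl fun d _ => h d

theorem exists_cell_weights [Finite D] [IsFiniteMeasure μ] [Fintype T] [MeasurableSpace T]
    [MeasurableSingletonClass T] {π : S → D} (hπ : Measurable π) {c : S → T} (hc : Measurable c) :
    ∃ α : D → T → ℝ, (∀ d t, 0 ≤ α d t) ∧ (∀ d, ∑ t, α d t ≤ 1) ∧ ∀ (V : T → ℝ) (E : Set D),
      ∫ s in π ⁻¹' E, ∑ t, α (π s) t * V t ∂μ = ∫ s in π ⁻¹' E, V (c s) ∂μ := by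
  have hmeas (d : D) : MeasurableSet (π ⁻¹' {d}) := hπ (measurableSet_singleton d)
  have hmeas' (t : T) : MeasurableSet (c ⁻¹' {t}) := hc (measurableSet_singleton t)
  let P (d : D) : Measure S := ProbabilityTheory.cond μ (π ⁻¹' {d})
  have hsum (d : D) : ∑ t, (P d).real (c ⁻¹' {t}) = (P d).real Set.univ := by
    rw [sum_measureReal_preimage_singleton _ fun t _ => hmeas' t, Finset.coe_univ,
      Set.preimage_univ]
  refine ⟨fun d t => (P d).real (c ⁻¹' {t}), fun d t => measureReal_nonneg,
    fun d => (hsum d).trans_le measureReal_le_one, fun V =>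
    setIntegral_preimage_eq_of_forall_singleton hπ
      (integrable_comp_of_finite hπ fun d => ∑ t, (P d).real (c ⁻¹' {t}) * V t)
      (integrable_comp_of_finite hc V) fun d => ?_⟩
  calc ∫ s in π ⁻¹' {d}, ∑ t, (P (π s)).real (c ⁻¹' {t}) * V t ∂μ
      = ∫ _ in π ⁻¹' {d}, ∑ t, (P d).real (c ⁻¹' {t}) * V t ∂μ :=
        setIntegral_congr_fun (hmeas d) fun s hs => by simp only [show π s = d from hs]
    _ = ∑ t, V t * (μ.restrict (π ⁻¹' {d})).real (c ⁻¹' {t}) := by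
        rw [setIntegral_const, smul_eq_mul, Finset.mul_sum]
        refine Finset.sum_congr rfl fun t _ => ?_
        rw [measureReal_restrict_apply (hmeas' t), Set.inter_comm, measureReal_def (s := _ ∩ _),
          ← ProbabilityTheory.cond_mul_eq_inter (hmeas d), ENNReal.toReal_mul]
        simp only [P, measureReal_def]
        ring
    _ = ∫ s in π ⁻¹' {d}, V (c s) ∂μ := by
        have := integral_comp_mul_eq_sum (μ := μ.restrict (π ⁻¹' {d})) hc V
          (integrable_const (1 : ℝ))
        simpa only [mul_one, setIntegral_const, smul_eq_mul] using this.symm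

end Discretisation

/-! ### Discounted stochastic games -/

/-- A discounted stochastic game with players `ι`, state space `S` and action spaces `X i`. The
transition probability at state `s` under the action profile `x` has the density `density s x`
with respect to `μ`. -/
structure DiscountedGame {S : Type*} [MeasurableSpace S] (μ : Measure S) {ι : Type*}
    (X : ι → Type*) [∀ i, MetricSpace (X i)] where
  feasible : ∀ i, S → Set (X i)
  nonempty_feasible : ∀ i s, (feasible i s).Nonempty
  isClosed_feasible : ∀ i s, IsClosed (feasible i s)
  measurableSet_feasible :
    ∀ i (U : Set (X i)), IsOpen U → MeasurableSet {s | (feasible i s ∩ U).Nonempty}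
  bound : ℝ
  bound_nonneg : 0 ≤ bound
  payoff : ι → S → (∀ j, X j) → ℝ
  abs_payoff_le : ∀ i s x, |payoff i s x| ≤ bound
  measurable_payoff : ∀ i x, Measurable fun s => payoff i s x
  continuous_payoff : ∀ i s, Continuous (payoff i s)
  discount : ι → ℝ
  discount_mem : ∀ i, discount i ∈ Set.Icc (0 : ℝ) 1
  density : S → (∀ j, X j) → S → ℝ
  density_nonneg : ∀ s x s₁, 0 ≤ density s x s₁
  measurable_density : ∀ s x, Measurable (density s x)
  integral_density : ∀ s x, ∫ s₁, density s x s₁ ∂μ = 1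
  measurable_setIntegral_density :
    ∀ x (E : Set S), MeasurableSet E → Measurable fun s => ∫ s₁ in E, density s x s₁ ∂μ
  tendsto_density : ∀ s (xs : ℕ → ∀ j, X j) (x : ∀ j, X j), Tendsto xs atTop (nhds x) →
    Tendsto (fun n => ∫ s₁, |density s (xs n) s₁ - density s x s₁| ∂μ) atTop (nhds 0)

namespace DiscountedGame

variable {S : Type*} [MeasurableSpace S] {μ : Measure S} {ι : Type*} {X : ι → Type*}
  [∀ i, MetricSpace (X i)] (Γ : DiscountedGame μ X)

/-- The payoff of player `i` in the one-shot game at state `s` whose continuation values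
are `w`. -/
noncomputable def auxPayoff (w : ι → S → ℝ) (i : ι) (s : S) (x : ∀ j, X j) : ℝ :=
  (1 - Γ.discount i) * Γ.payoff i s x + Γ.discount i * ∫ s₁, w i s₁ * Γ.density s x s₁ ∂μ

theorem integrable_density (s : S) (x : ∀ j, X j) : Integrable (Γ.density s x) μ := by
  by_contra h
  exact zero_ne_one ((integral_undef h).symm.trans (Γ.integral_density s x))

theorem tendsto_integral_abs_density_sub [Countable ι] (s : S) (x : ∀ j, X j) :
    Tendsto (fun y => ∫ s₁, |Γ.density s x s₁ - Γ.density s y s₁| ∂μ) (nhds x) (nhds 0) := by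
  refine tendsto_iff_seq_tendsto.2 fun y hy => (Γ.tendsto_density s y x hy).congr fun n => ?_
  simp only [Function.comp_apply, abs_sub_comm]

theorem equicontinuous_integral_mul_density [Countable ι] {K : Type*} {w : K → S → ℝ}
    (hw : ∀ k, Measurable (w k)) {C : ℝ} (hC : ∀ k s, |w k s| ≤ C) (s : S) :
    Equicontinuous fun k x => ∫ s₁, w k s₁ * Γ.density s x s₁ ∂μ := by
  intro x
  refine Metric.equicontinuousAt_of_continuity_modulus _
    (by simpa only [mul_zero] using (Γ.tendsto_integral_abs_density_sub s x).const_mul C) _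
    (.of_forall fun y k => ?_)
  exact abs_integral_mul_sub_le (hw k) (hC k) (Γ.integrable_density s x) (Γ.integrable_density s y)

theorem continuous_auxPayoff [Countable ι] {w : ι → S → ℝ} {C : ℝ} {i : ι} (hw : Measurable (w i))
    (hC : ∀ s, |w i s| ≤ C) (s : S) : Continuous (Γ.auxPayoff w i s) :=
  ((Γ.continuous_payoff i s).const_mul _).add
    (((Γ.equicontinuous_integral_mul_density (K := Unit) (fun _ => hw) (fun _ => hC) s).continuous
      ()).const_mul _)

theorem tendstoUniformly_auxPayoff [Countable ι] [∀ i, CompactSpace (X i)] {w : ℕ → ι → S → ℝ}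
    {w₀ : ι → S → ℝ} {C : ℝ} {i : ι} (hw : ∀ n, Measurable (w n i))
    (hC : ∀ n s, |w n i s| ≤ C) {s : S}
    (hlim : ∀ x, Tendsto (fun n => ∫ s₁, w n i s₁ * Γ.density s x s₁ ∂μ) atTop
      (nhds (∫ s₁, w₀ i s₁ * Γ.density s x s₁ ∂μ))) :
    TendstoUniformly (fun n => Γ.auxPayoff (w n) i s) (Γ.auxPayoff w₀ i s) atTop := by
  have hlim' := UniformFun.tendsto_iff_tendstoUniformly.1
    (((Γ.equicontinuous_integral_mul_density hw hC s).tendsto_uniformFun_iff_pi _ _).2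
      (tendsto_pi_nhds.2 hlim))
  refine Metric.tendstoUniformly_iff.2 fun ε hε => ?_
  filter_upwards [Metric.tendstoUniformly_iff.1 hlim' ε hε] with n hn x
  obtain ⟨hβ₀, hβ₁⟩ := Γ.discount_mem i
  refine lt_of_le_of_lt ?_ (hn x)
  rw [auxPayoff, auxPayoff, dist_add_left, Real.dist_eq, ← mul_sub, abs_mul, abs_of_nonneg hβ₀]
  exact mul_le_of_le_one_left (abs_nonneg _) hβ₁

end DiscountedGame

namespace DiscountedGame

variable {S : Type*} [MeasurableSpace S] {μ : Measure S} {ι : Type*} {X : ι → Type*}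
  [∀ i, MetricSpace (X i)] (Γ : DiscountedGame μ X)

theorem auxPayoff_comp {D : Type*} [Fintype D] [MeasurableSpace D] [MeasurableSingletonClass D]
    {π : S → D} (hπ : Measurable π) (Y : ι → D → ℝ) (i : ι) (s : S) (x : ∀ j, X j) :
    Γ.auxPayoff (fun i s => Y i (π s)) i s x = (1 - Γ.discount i) * Γ.payoff i s x +
      Γ.discount i * ∑ d, Y i d * ∫ s₁ in π ⁻¹' {d}, Γ.density s x s₁ ∂μ := by
  rw [auxPayoff, integral_comp_mul_eq_sum hπ (Y i) (Γ.integrable_density s x)]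

theorem abs_auxPayoff_comp_sub_le {D : Type*} [Fintype D] [MeasurableSpace D]
    [MeasurableSingletonClass D] {π : S → D} (hπ : Measurable π) {Y : ι → D → ℝ} {i : ι}
    {C η : ℝ} (hY : ∀ d, |Y i d| ≤ C) {s s' : S} {x : ∀ j, X j}
    (hu : |Γ.payoff i s' x - Γ.payoff i s x| ≤ η)
    (hq : ∀ d, |∫ s₁ in π ⁻¹' {d}, Γ.density s' x s₁ ∂μ -
      ∫ s₁ in π ⁻¹' {d}, Γ.density s x s₁ ∂μ| ≤ η) :
    |Γ.auxPayoff (fun i s => Y i (π s)) i s' x - Γ.auxPayoff (fun i s => Y i (π s)) i s x| ≤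
      η * (1 + Fintype.card D * C) := by
  obtain ⟨hβ₀, hβ₁⟩ := Γ.discount_mem i
  simp only [Γ.auxPayoff_comp hπ]
  set m := fun s d => ∫ s₁ in π ⁻¹' {d}, Γ.density s x s₁ ∂μ
  have hsum : |∑ d, Y i d * m s' d - ∑ d, Y i d * m s d| ≤ Fintype.card D * (C * η) := by
    rw [← Finset.sum_sub_distrib, ← nsmul_eq_mul, ← Finset.card_univ, ← Finset.sum_const]
    refine (Finset.abs_sum_le_sum_abs _ _).trans (Finset.sum_le_sum fun d _ => ?_)
    rw [← mul_sub, abs_mul]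
    exact mul_le_mul (hY d) (hq d) (abs_nonneg _) ((abs_nonneg _).trans (hY d))
  calc _ = |(1 - Γ.discount i) * (Γ.payoff i s' x - Γ.payoff i s x) +
        Γ.discount i * (∑ d, Y i d * m s' d - ∑ d, Y i d * m s d)| := by
        congr 1
        ring
    _ ≤ (1 - Γ.discount i) * η + Γ.discount i * (Fintype.card D * (C * η)) := by
        refine (abs_add_le _ _).trans ?_
        rw [abs_mul, abs_mul, abs_of_nonneg hβ₀, abs_of_nonneg (sub_nonneg.2 hβ₁)]
        gcongr
    _ ≤ 1 * η + 1 * (Fintype.card D * (C * η)) := by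
        gcongr
        · exact (abs_nonneg _).trans hu
        · linarith
        · exact (abs_nonneg _).trans hsum
    _ = η * (1 + Fintype.card D * C) := by ring

variable [Finite ι]

theorem exists_state_discretization {D : Type*} [Finite D] [MeasurableSpace D]
    [MeasurableSingletonClass D] {π : S → D} (hπ : Measurable π) {T : ι → Type*}
    [∀ i, Finite (T i)] (g : ∀ i, T i → X i) (ε : ℝ) {η : ℝ} (hη : 0 < η) :
    ∃ (n : ℕ) (c : S → Fin n) (rep : Fin n → S), Measurable c ∧
      (∀ s i (b : ∀ j, T j), |Γ.payoff i (rep (c s)) (fun j => g j (b j)) -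
        Γ.payoff i s (fun j => g j (b j))| ≤ η) ∧
      (∀ s (b : ∀ j, T j) d, |∫ s₁ in π ⁻¹' {d}, Γ.density (rep (c s)) (fun j => g j (b j)) s₁ ∂μ -
        ∫ s₁ in π ⁻¹' {d}, Γ.density s (fun j => g j (b j)) s₁ ∂μ| ≤ η) ∧
      ∀ s i a, (Γ.feasible i (rep (c s)) ∩ Metric.ball (g i a) ε).Nonempty ↔
        (Γ.feasible i s ∩ Metric.ball (g i a) ε).Nonempty := by
  let meets (i : ι) (a : T i) : Set S := {s | (Γ.feasible i s ∩ Metric.ball (g i a) ε).Nonempty}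
  let r (s : S) : (ι × ∀ j, T j) ⊕ ((∀ j, T j) × D) ⊕ (Σ i, T i) → ℝ :=
    Sum.elim (fun p => Γ.payoff p.1 s fun j => g j (p.2 j)) <|
      Sum.elim (fun p => ∫ s₁ in π ⁻¹' {p.2}, Γ.density s (fun j => g j (p.1 j)) s₁ ∂μ)
        fun p => (meets p.1 p.2).indicator 1 s
  have hr (j) : Measurable fun s => r s j := by
    rcases j with p | p | p
    · exact Γ.measurable_payoff _ _
    · exact Γ.measurable_setIntegral_density _ _ (hπ (measurableSet_singleton _))
    · exact measurable_one.indicator (Γ.measurableSet_feasible _ _ Metric.isOpen_ball)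
  have hrC (s j) : |r s j| ≤ max Γ.bound 1 := by
    rcases j with p | p | p
    · exact (Γ.abs_payoff_le _ _ _).trans (le_max_left _ _)
    · refine le_max_of_le_right ?_
      have hmass := setIntegral_le_integral (s := π ⁻¹' {p.2})
        (Γ.integrable_density s fun j => g j (p.1 j)) (.of_forall (Γ.density_nonneg s _))
      rw [Γ.integral_density] at hmass
      exact (abs_of_nonneg (integral_nonneg (Γ.density_nonneg s _))).trans_le hmass
    · refine le_max_of_le_right ?_
      change |(meets p.1 p.2).indicator (1 : S → ℝ) s| ≤ 1
      by_cases hs : s ∈ meets p.1 p.2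
      · rw [Set.indicator_of_mem hs, Pi.one_apply, abs_one]
      · rw [Set.indicator_of_notMem hs, abs_zero]
        exact zero_le_one
  obtain ⟨n, c, rep, hc, hrep⟩ := exists_finite_quantization hr hrC (lt_min hη one_pos)
  refine ⟨n, c, rep, hc, fun s i b => ?_, fun s b d => ?_, fun s i a => ?_⟩
  · exact ((hrep s (.inl (i, b))).trans_le (min_le_left _ _)).le
  · exact ((hrep s (.inr (.inl (b, d)))).trans_le (min_le_left _ _)).le
  · have hlt := (hrep s (.inr (.inr ⟨i, a⟩))).trans_le (min_le_right _ _)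
    change |(meets i a).indicator (1 : S → ℝ) (rep (c s)) - (meets i a).indicator 1 s| < 1 at hlt
    change rep (c s) ∈ meets i a ↔ s ∈ meets i a
    by_cases hs : s ∈ meets i a <;> by_cases hs' : rep (c s) ∈ meets i a <;>
      simp_all only [Set.indicator_of_mem, Set.indicator_of_notMem, not_false_eq_true,
        Pi.one_apply, sub_zero, zero_sub, abs_neg, abs_one, lt_self_iff_false]

end DiscountedGame

theorem exists_finite_grid (Z : Type*) [MetricSpace Z] [CompactSpace Z] {ε : ℝ} (hε : 0 < ε) :
    ∃ (N : ℕ) (g : Fin N → Z), ∀ x, ∃ a, dist (g a) x < ε := by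
  obtain ⟨t, -, htfin, ht⟩ := finite_cover_balls_of_compact (isCompact_univ (X := Z)) hε
  have := htfin.to_subtype
  refine ⟨_, fun a => (Finite.equivFin t).symm a, fun x => ?_⟩
  obtain ⟨z, hz, hx⟩ := Set.mem_iUnion₂.1 (ht (Set.mem_univ x))
  refine ⟨Finite.equivFin t ⟨z, hz⟩, ?_⟩
  simpa only [Equiv.symm_apply_apply] using Metric.mem_ball'.1 hx

namespace DiscountedGame

variable {S : Type*} [MeasurableSpace S] {μ : Measure S} {ι : Type*} {X : ι → Type*}
  [∀ i, MetricSpace (X i)] (Γ : DiscountedGame μ X)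

section

variable {D T : Type*} [Fintype D] {π : S → D}

/-- The transition weights of the finite game with states `T` obtained from `Γ` by representing
the state `t` by `rep t`, and by moving to `t` with weight `α d t` once the cell `d` of `π` has been
reached. -/
noncomputable def cellTransition (π : S → D) (α : D → T → ℝ) (rep : T → S) (t : T) (x : ∀ j, X j)
    (t' : T) : ℝ :=
  ∑ d, (∫ s₁ in π ⁻¹' {d}, Γ.density (rep t) x s₁ ∂μ) * α d t'

theorem cellTransition_nonneg {α : D → T → ℝ} (hα : ∀ d t, 0 ≤ α d t) (rep : T → S) (t : T)
    (x : ∀ j, X j) (t' : T) : 0 ≤ Γ.cellTransition π α rep t x t' :=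
  Finset.sum_nonneg fun d _ =>
    mul_nonneg (integral_nonneg (Γ.density_nonneg _ _)) (hα d t')

variable [MeasurableSpace D] [MeasurableSingletonClass D]

theorem sum_cellTransition_le_one [Fintype T] (hπ : Measurable π) {α : D → T → ℝ}
    (hα : ∀ d, ∑ t, α d t ≤ 1) (rep : T → S) (t : T) (x : ∀ j, X j) :
    ∑ t', Γ.cellTransition π α rep t x t' ≤ 1 := by
  have hone := integral_comp_mul_eq_sum hπ 1 (Γ.integrable_density (rep t) x)
  simp only [Pi.one_apply, one_mul, Γ.integral_density] at hone
  simp only [cellTransition]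
  rw [Finset.sum_comm, hone]
  refine Finset.sum_le_sum fun d _ => ?_
  rw [← Finset.mul_sum]
  exact mul_le_of_le_one_right (integral_nonneg (Γ.density_nonneg _ _)) (hα d)

theorem finitePayoff_cellTransition [Fintype T] (hπ : Measurable π) (α : D → T → ℝ) (rep : T → S)
    {A : ι → Type*} (g : ∀ i, A i → X i) (V : ι → T → ℝ) (i : ι) (t : T) (b : ∀ j, A j) :
    finitePayoff Γ.discount (fun i t b => Γ.payoff i (rep t) fun j => g j (b j))
        (fun t b => Γ.cellTransition π α rep t fun j => g j (b j)) V i t b =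
      Γ.auxPayoff (fun i s => ∑ t', α (π s) t' * V i t') i (rep t) fun j => g j (b j) := by
  rw [Γ.auxPayoff_comp hπ (fun i d => ∑ t', α d t' * V i t'), finitePayoff]
  simp only [cellTransition, Finset.sum_mul]
  rw [Finset.sum_comm]
  congr 2
  refine Finset.sum_congr rfl fun d _ => ?_
  exact Finset.sum_congr rfl fun t' _ => by ring

end

variable [Fintype ι] [DecidableEq ι] [∀ i, CompactSpace (X i)] [∀ i, MeasurableSpace (X i)]
  [∀ i, BorelSpace (X i)]

theorem exists_isApproxNash_of_partition [IsFiniteMeasure μ] {D : Type*} [Finite D]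
    [MeasurableSpace D] [MeasurableSingletonClass D] {π : S → D} (hπ : Measurable π) {ε : ℝ}
    (hε : 0 < ε) :
    ∃ (n : ℕ) (c : S → Fin n) (V : ι → Fin n → ℝ) (Y : ι → D → ℝ)
      (f : Fin n → ∀ i, ProbabilityMeasure (X i)), Measurable c ∧
      (∀ i t, |V i t| ≤ Γ.bound) ∧ (∀ i d, |Y i d| ≤ Γ.bound) ∧
      (∀ i E, ∫ s in π ⁻¹' E, Y i (π s) ∂μ = ∫ s in π ⁻¹' E, V i (c s) ∂μ) ∧
      ∀ s, IsApproxNash ε (fun i => Γ.feasible i s)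
        (fun i => Γ.auxPayoff (fun i s => Y i (π s)) i s) (f (c s)) fun i => V i (c s) := by
  classical
  have := Fintype.ofFinite D
  choose N g hg using fun i => exists_finite_grid (X i) hε
  let G (b : ∀ i, Fin (N i)) : ∀ i, X i := fun j => g j (b j)
  have hden : 0 < 1 + Fintype.card D * Γ.bound := by have := Γ.bound_nonneg; positivity
  obtain ⟨n, c, rep, hc, hu, hq, hfeas⟩ := Γ.exists_state_discretization hπ g ε
    (div_pos (half_pos hε) hden)
  obtain ⟨α, hα₀, hα₁, hα⟩ := exists_cell_weights hπ hc (μ := μ)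
  let F (t : Fin n) (i : ι) : Finset (Fin (N i)) :=
    {a | (Γ.feasible i (rep t) ∩ Metric.ball (g i a) ε).Nonempty}
  have hF (t i) : (F t i).Nonempty := by
    obtain ⟨x, hx⟩ := Γ.nonempty_feasible i (rep t)
    obtain ⟨a, ha⟩ := hg i x
    exact ⟨a, (Finset.mem_filter_univ _).2 ⟨x, hx, Metric.mem_ball'.2 ha⟩⟩
  obtain ⟨p, V, hp₀, hp₁, hpF, hVC, hV, hopt⟩ := exists_approx_equilibrium Γ.discount_mem
    Γ.bound_nonneg (fun i t b => Γ.abs_payoff_le i (rep t) (G b))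
    (fun t b => Γ.cellTransition_nonneg (π := π) hα₀ rep t (G b))
    (fun t b => Γ.sum_cellTransition_le_one hπ hα₁ rep t (G b)) hF (half_pos hε)
  choose f hf hpi using fun t => exists_probabilityMeasure_integral_eq_mixedPayoff (hp₀ t) (hp₁ t) g
  have hYC (i d) : |∑ t, α d t * V i t| ≤ Γ.bound :=
    (abs_sum_mul_le_sum_mul (hα₀ d) (hVC i)).trans
      (mul_le_of_le_one_left Γ.bound_nonneg (hα₁ d))
  refine ⟨n, c, V, fun i d => ∑ t, α d t * V i t, f, hc, hVC, hYC, fun i => hα (V i),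
    fun s => ?_⟩
  have hfeas' (i a) : a ∈ F (c s) i ↔ (Γ.feasible i s ∩ Metric.ball (g i a) ε).Nonempty :=
    (Finset.mem_filter_univ _).trans (hfeas s i a)
  refine isApproxNash_of_grid (hp₀ _) (hp₁ _) (hf _) (hpi _) hg
    (fun i a ha => hpF _ _ _ (mt (hfeas' i a).1 ha)) ?_ (δ := ε / 2) ?_ (half_pos hε).le
    (add_halves ε).le (fun i => hV i (c s)) fun i a ha => hopt i _ a ((hfeas' i a).2 ha)
  · exact fun i => Γ.continuous_auxPayoff
      ((measurable_of_finite fun d => ∑ t, α d t * V i t).comp hπ) (fun s => hYC i (π s)) s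
  · intro i b
    rw [Γ.finitePayoff_cellTransition hπ]
    refine (Γ.abs_auxPayoff_comp_sub_le hπ (Y := fun i d => ∑ t, α d t * V i t) (hYC i) (hu s i b)
      (hq s b)).trans_eq ?_
    exact div_mul_cancel₀ _ hden.ne'

end DiscountedGame

/-! ### Measurable limits of convex combinations -/

section MeasurableClusterPoint

variable {S K : Type*} [MeasurableSpace S] [MetricSpace K] [CompactSpace K] [MeasurableSpace K]
  [BorelSpace K]

theorem exists_measurable_frequently_dist_lt_and {g : ℕ → S → K} {c : S → K}
    {r r' : ℝ} (hg : ∀ n, Measurable (g n)) (hc : Measurable c)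
    (h : ∀ s, ∃ᶠ n in atTop, dist (g n s) (c s) < r) (hr' : 0 < r') :
    ∃ c' : S → K, Measurable c' ∧
      ∀ s, ∃ᶠ n in atTop, dist (g n s) (c s) < r ∧ dist (g n s) (c' s) < r' := by
  classical
  rcases isEmpty_or_nonempty S with hS | ⟨⟨s⟩⟩
  · exact ⟨c, hc, isEmptyElim⟩
  have : Nonempty K := ⟨c s⟩
  let d := TopologicalSpace.denseSeq K
  let near : ℕ → ℕ → Set S := fun j n => {s | dist (g n s) (c s) < r ∧ dist (g n s) (d j) < r'}
  have measurableSet_near (j n) : MeasurableSet (near j n) :=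
    (measurableSet_lt ((hg n).dist hc) measurable_const).inter
      (measurableSet_lt ((hg n).dist measurable_const) measurable_const)
  have exists_frequently (s) : ∃ j, s ∈ limsup (near j) atTop := by
    simp only [mem_limsup_iff_frequently_mem]
    have : (atTop ⊓ 𝓟 {n | dist (g n s) (c s) < r}).NeBot := frequently_mem_iff_neBot.1 (h s)
    obtain ⟨y, hy⟩ := exists_clusterPt_of_compactSpace
      (map (g · s) (atTop ⊓ 𝓟 {n | dist (g n s) (c s) < r}))
    obtain ⟨j, hj⟩ := (TopologicalSpace.denseRange_denseSeq K).exists_dist_lt y hr'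
    have hfreq := (mapClusterPt_iff_frequently.1 hy) _ (Metric.isOpen_ball.mem_nhds hj)
    exact ⟨j, (frequently_inf_principal.1 hfreq).mono fun n hn => hn⟩
  let j : S → ℕ := fun s => Nat.find (exists_frequently s)
  have hj : Measurable j := measurable_find exists_frequently fun j =>
    MeasurableSet.measurableSet_limsup (measurableSet_near j)
  exact ⟨d ∘ j, (measurable_of_countable d).comp hj, fun s =>
    mem_limsup_iff_frequently_mem.1 (Nat.find_spec (exists_frequently s))⟩

/-- A Kuratowski–Ryll-Nardzewski selection: `φ` is the uniform limit of measurable maps `c k`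
such that `g n s` is frequently `r k`-close to `c k s`. -/
theorem exists_measurable_mapClusterPt {g : ℕ → S → K} (hg : ∀ n, Measurable (g n)) :
    ∃ φ : S → K, Measurable φ ∧ ∀ s, MapClusterPt (φ s) atTop fun n => g n s := by
  let r : ℕ → ℝ := fun k => (Metric.diam (Set.univ : Set K) + 1) * (1 / 2) ^ k
  have hr (k) : 0 < r k := by positivity
  have hr₀ : Tendsto r atTop (nhds 0) := by
    simpa only [mul_zero] using (tendsto_pow_atTop_nhds_zero_of_lt_one (r := (1 / 2 : ℝ))
      (by norm_num) (by norm_num)).const_mul (Metric.diam (Set.univ : Set K) + 1)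
  let IsCenter : ℕ → (S → K) → Prop := fun k c =>
    Measurable c ∧ ∀ s, ∃ᶠ n in atTop, dist (g n s) (c s) < r k
  have init : IsCenter 0 (g 0) :=
    ⟨hg 0, fun s => .of_forall fun n => by
      have := Metric.dist_le_diam_of_mem isCompact_univ.isBounded (Set.mem_univ (g n s))
        (Set.mem_univ (g 0 s))
      simp only [r, pow_zero, mul_one]
      linarith⟩
  choose next measurable_next frequently_next using fun k (c : {c // IsCenter k c}) =>
    exists_measurable_frequently_dist_lt_and hg c.2.1 c.2.2 (hr (k + 1))
  let c : ∀ k, {c // IsCenter k c} := fun k => k.rec ⟨_, init⟩ fun k c =>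
    ⟨next k c, measurable_next k c, fun s => (frequently_next k c s).mono fun _ => And.right⟩
  have dist_succ (s k) : dist ((c k).1 s) ((c (k + 1)).1 s) ≤
      2 * (Metric.diam (Set.univ : Set K) + 1) * (1 / 2) ^ k := by
    obtain ⟨n, hn, hn'⟩ := (frequently_next k (c k) s).exists
    have : r (k + 1) = r k / 2 := by simp only [r, pow_succ]; ring
    calc _ ≤ r k + r (k + 1) := (dist_triangle_left _ _ (g n s)).trans (add_le_add hn.le hn'.le)
      _ ≤ 2 * r k := by linarith [hr k]
      _ = _ := (mul_assoc _ _ _).symm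
  choose φ hφ using fun s => cauchySeq_tendsto_of_complete
    (cauchySeq_of_le_geometric (1 / 2) _ (by norm_num) (dist_succ s))
  refine ⟨φ, measurable_of_tendsto_metrizable (fun k => (c k).2.1) (tendsto_pi_nhds.2 hφ),
    fun s => mapClusterPt_iff_frequently.2 fun U hU => ?_⟩
  obtain ⟨ε, hε, hball⟩ := Metric.mem_nhds_iff.1 hU
  obtain ⟨k, hk, hk'⟩ := ((hr₀.eventually (gt_mem_nhds (half_pos hε))).and
    (Metric.tendsto_nhds.1 (hφ s) (ε / 2) (half_pos hε))).exists
  refine ((c k).2.2 s).mono fun n hn => hball (Metric.mem_ball.2 ?_)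
  linarith [dist_triangle (g n s) ((c k).1 s) (φ s)]

end MeasurableClusterPoint

section ConvexCombination

theorem exists_convexCombination_card_add_one {ι κ : Type*} [Fintype ι] [Fintype κ] {c : κ → ℝ}
    (hc : c ∈ stdSimplex ℝ κ) (P : κ → ι → ℝ) :
    ∃ w ∈ stdSimplex ℝ (Fin (Fintype.card ι + 1)), ∃ l : Fin (Fintype.card ι + 1) → κ,
      ∀ i, ∑ k, w k * P (l k) i = ∑ l, c l * P l i := by
  have hx : ∑ l, c l • P l ∈ convexHull ℝ (Set.range P) :=
    (convex_convexHull ℝ _).sum_mem (fun l _ => hc.1 l) hc.2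
      fun l _ => subset_convexHull ℝ _ ⟨l, rfl⟩
  obtain ⟨κ', _, z, w, hz, hind, hw₀, hw₁, hwz⟩ := eq_pos_convex_span_of_mem_convexHull hx
  choose l hl using fun a => hz ⟨a, rfl⟩
  have hcard : Fintype.card κ' ≤ Fintype.card (Fin (Fintype.card ι + 1)) := by
    have := Submodule.finrank_le (vectorSpan ℝ (Set.range z))
    rw [Module.finrank_fintype_fun_eq_card] at this
    rw [Fintype.card_fin]
    exact hind.card_le_finrank_succ.trans (Nat.succ_le_succ this)
  obtain ⟨e⟩ := Function.Embedding.nonempty_of_card_le hcard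
  have extend_of_notMem (k) (hk : k ∉ Set.range e) : Function.extend e w 0 k = 0 :=
    Function.extend_apply' w (0 : Fin _ → ℝ) k hk
  have : Nonempty κ := by
    by_contra h
    rw [not_nonempty_iff] at h
    exact zero_ne_one ((Fintype.sum_empty c).symm.trans hc.2)
  refine ⟨Function.extend e w 0, ⟨fun k => ?_, ?_⟩,
    Function.extend e l fun _ => Classical.arbitrary κ, fun i => ?_⟩
  · by_cases hk : k ∈ Set.range e
    · obtain ⟨a, rfl⟩ := hk
      exact (hw₀ a).le.trans_eq (e.injective.extend_apply w 0 a).symm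
    · exact (extend_of_notMem k hk).ge
  · rw [← hw₁]
    exact (Fintype.sum_of_injective e e.injective _ _ extend_of_notMem
      fun a => (e.injective.extend_apply w 0 a).symm).symm
  · have hwz' := congrFun hwz i
    simp only [Finset.sum_apply, Pi.smul_apply, smul_eq_mul] at hwz'
    rw [← hwz']
    refine (Fintype.sum_of_injective e e.injective _ _ (fun k hk => ?_) fun a => ?_).symm
    · rw [extend_of_notMem k hk, zero_mul]
    · rw [e.injective.extend_apply, e.injective.extend_apply, hl]

end ConvexCombination

section MeasurableLimit

variable {S ι Z : Type*} [MeasurableSpace S] [Fintype ι] [TopologicalSpace Z] [CompactSpace Z]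
  [TopologicalSpace.MetrizableSpace Z]

/-- The subsequence `N` depends on the point `s` while the limits `b` and `φ` are measurable in it:
Carathéodory's theorem bounds the number of terms of the convex combinations, so that they range
over a fixed compact space. -/
theorem exists_measurable_limit_convexCombination {T : ℕ → Type*} [∀ n, Finite (T n)]
    [∀ n, MeasurableSpace (T n)] [∀ n, MeasurableSingletonClass (T n)] {c : ∀ n, S → T n}
    (hc : ∀ n, Measurable (c n)) (z : ∀ n, T n → Z) {val : Z → ι → ℝ} (hval : Continuous val)
    {L : ℕ → ℕ} {a : ∀ N, Fin (L N) → ℝ} {t : ∀ N, Fin (L N) → ℕ}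
    (ha : ∀ N, a N ∈ stdSimplex ℝ (Fin (L N))) (ht : ∀ N l, N ≤ t N l) :
    ∃ (b : S → Fin (Fintype.card ι + 1) → ℝ) (φ : Fin (Fintype.card ι + 1) → S → Z),
      Measurable b ∧ (∀ s, b s ∈ stdSimplex ℝ (Fin (Fintype.card ι + 1))) ∧
      (∀ k, Measurable[_, borel Z] (φ k)) ∧
      ∀ s, ∃ (N : ℕ → ℕ) (τ : Fin (Fintype.card ι + 1) → ℕ → ℕ), StrictMono N ∧
        (∀ k r, N r ≤ τ k r) ∧
        (∀ k, Tendsto (fun r => z (τ k r) (c (τ k r) s)) atTop (nhds (φ k s))) ∧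
        ∀ i, Tendsto (fun r => ∑ l, a (N r) l * val (z (t (N r) l) (c (t (N r) l) s)) i) atTop
          (nhds (∑ k, b s k * val (φ k s) i)) := by
  let _ : MetricSpace Z := TopologicalSpace.metrizableSpaceMetric Z
  let _ : MeasurableSpace Z := borel Z
  have : BorelSpace Z := ⟨rfl⟩
  choose w hw l hl using fun N (x : ∀ l : Fin (L N), T (t N l)) =>
    exists_convexCombination_card_add_one (ha N) fun l => val (z (t N l) (x l))
  let x N (s : S) (l : Fin (L N)) : T (t N l) := c (t N l) s
  let g N (x : ∀ l : Fin (L N), T (t N l)) :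
      stdSimplex ℝ (Fin (Fintype.card ι + 1)) × (Fin (Fintype.card ι + 1) → Z) :=
    (⟨w N x, hw N x⟩, fun k => z (t N (l N x k)) (x (l N x k)))
  have hg N : Measurable fun s => g N (x N s) :=
    (measurable_of_finite (g N)).comp (measurable_pi_lambda _ fun l => hc _)
  obtain ⟨φ, hφ, hclus⟩ := exists_measurable_mapClusterPt hg
  have hval' (i) : Continuous fun p : stdSimplex ℝ (Fin (Fintype.card ι + 1)) ×
      (Fin (Fintype.card ι + 1) → Z) => ∑ k, p.1.1 k * val (p.2 k) i :=
    continuous_finsetSum _ fun k _ => ((continuous_apply k).comp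
      (continuous_subtype_val.comp continuous_fst)).mul ((continuous_apply i).comp
        (hval.comp ((continuous_apply k).comp continuous_snd)))
  refine ⟨fun s => (φ s).1.1, fun k s => (φ s).2 k, measurable_subtype_coe.comp hφ.fst,
    fun s => (φ s).1.2, fun k => (measurable_pi_apply k).comp hφ.snd, fun s => ?_⟩
  obtain ⟨N, hN, hlim⟩ := MapClusterPt.tendsto_subseq (hclus s)
  refine ⟨N, fun k r => t (N r) (l (N r) (x (N r) s) k), hN, fun k r => ht _ _, fun k => ?_,
    fun i => ?_⟩
  · exact tendsto_pi_nhds.1 ((continuous_snd.tendsto (φ s)).comp hlim) k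
  · exact (((hval' i).tendsto (φ s)).comp hlim).congr fun r => hl (N r) (x (N r) s) i

end MeasurableLimit

theorem measurable_borel_probabilityMeasure_apply {Z : Type*} [TopologicalSpace Z]
    [HasOuterApproxClosed Z] [MeasurableSpace Z] [BorelSpace Z] {B : Set Z}
    (hB : MeasurableSet B) :
    Measurable[borel _, _] fun P : ProbabilityMeasure Z => (P : Measure Z) B := by
  let _ : MeasurableSpace (ProbabilityMeasure Z) := borel _
  have : BorelSpace (ProbabilityMeasure Z) := ⟨rfl⟩
  refine (Measure.measurable_coe hB).comp
    (Measurable.measure_of_isPiSystem_of_isProbabilityMeasure (BorelSpace.measurable_eq.trans rfl)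
      isPiSystem_isOpen fun U hU => LowerSemicontinuous.measurable ?_)
  exact lowerSemicontinuous_iff_le_liminf.2 fun P =>
    ProbabilityMeasure.le_liminf_measure_open_of_tendsto tendsto_id hU

/-! ### Passing to the limit in the discretised games -/

theorem tendsto_apply_of_tendsto_integral_mul {S : Type*} [MeasurableSpace S] {μ : Measure S}
    [IsFiniteMeasure μ] {g : ℕ → S → ℝ} {w : S → ℝ}
    (hlim : ∀ h : S → ℝ, Measurable h → Integrable h μ →
      Tendsto (fun n => ∫ x, g n x * h x ∂μ) atTop (nhds (∫ x, w x * h x ∂μ)))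
    {s : S} (hs : MeasurableSet {s}) (hμ : μ {s} ≠ 0) :
    Tendsto (fun n => g n s) atTop (nhds (w s)) := by
  have hind (v : S → ℝ) :
      ∫ x, v x * Set.indicator {s} 1 x ∂μ = μ.real {s} * v s := by
    have hv : (fun x => v x * Set.indicator {s} 1 x) = Set.indicator {s} fun _ => v s := by
      ext x
      by_cases hx : x = s
      · simp only [hx, Set.mem_singleton_iff, Set.indicator_of_mem, Pi.one_apply, mul_one]
      · simp only [Set.mem_singleton_iff, hx, not_false_eq_true, Set.indicator_of_notMem, mul_zero]
    rw [hv, integral_indicator hs, setIntegral_const, smul_eq_mul]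
  have hμ' : μ.real {s} ≠ 0 := ENNReal.toReal_ne_zero.2 ⟨hμ, measure_ne_top _ _⟩
  have h := (hlim (Set.indicator {s} 1) (measurable_one.indicator hs)
    ((integrable_const 1).indicator hs)).const_mul (μ.real {s})⁻¹
  simpa only [hind, inv_mul_cancel_left₀ hμ'] using h

namespace DiscountedGame

variable {S : Type*} {m mS : MeasurableSpace S} {μ : Measure S} {ι : Type*} {X : ι → Type*}
  [Fintype ι] [DecidableEq ι] [∀ i, MetricSpace (X i)] [∀ i, MeasurableSpace (X i)]

/-- A sequence of approximate equilibria of finer and finer discretisations of the game: the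
strategies and their values are constant on the cells of a finite partition, and the continuation
values average the values over the cells of a coarser partition. -/
structure ApproxEquilibriumSeq (Γ : DiscountedGame μ X) where
  card : ℕ → ℕ
  cell : ∀ n, S → Fin (card n)
  value : ∀ n, ι → Fin (card n) → ℝ
  continuation : ℕ → ι → S → ℝ
  strategy : ∀ n, Fin (card n) → ∀ i, ProbabilityMeasure (X i)
  measurable_cell : ∀ n, Measurable (cell n)
  abs_value_le : ∀ n i t, |value n i t| ≤ Γ.bound
  measurable_continuation : ∀ n i, Measurable (continuation n i)
  abs_continuation_le : ∀ n i s, |continuation n i s| ≤ Γ.bound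
  tendsto_integral_sub : ∀ i s x,
    Tendsto (fun n => ∫ s₁, continuation n i s₁ * Γ.density s x s₁ ∂μ -
      ∫ s₁, value n i (cell n s₁) * Γ.density s x s₁ ∂μ) atTop (nhds 0)
  isApproxNash : ∀ (n : ℕ) s, IsApproxNash (1 / (n + 1)) (fun i => Γ.feasible i s)
    (fun i => Γ.auxPayoff (continuation n) i s) (strategy n (cell n s))
    fun i => value n i (cell n s)

/-- `w` is almost everywhere the mixture with weights `b` of the payoffs `y k` of equilibria `F k`
of the one-shot games with continuation values `w`, and equals each `y k` at the atoms. -/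
structure IsEquilibriumMixture (Γ : DiscountedGame μ X) {K : Type*} [Fintype K] (w : ι → S → ℝ)
    (b : S → K → ℝ) (y : K → ι → S → ℝ) (F : K → S → ∀ i, ProbabilityMeasure (X i)) : Prop where
  measurable_continuation : ∀ i, Measurable (w i)
  abs_continuation_le : ∀ i s, |w i s| ≤ Γ.bound
  measurable_weight : Measurable b
  weight_mem : ∀ s, b s ∈ stdSimplex ℝ K
  measurable_value : ∀ k i, Measurable (y k i)
  abs_value_le : ∀ k i s, |y k i s| ≤ Γ.bound
  measurable_strategy :
    ∀ k i B, MeasurableSet B → Measurable fun s => (F k s i : Measure (X i)) B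
  isNash : ∀ k s, IsNash (fun i => Γ.feasible i s) (fun i => Γ.auxPayoff w i s) (F k s)
    fun i => y k i s
  ae_eq_sum : ∀ᵐ s ∂μ, ∀ i, w i s = ∑ k, b s k * y k i s
  value_eq_of_atom : ∀ s, MeasurableSet {s} → μ {s} ≠ 0 → ∀ k i, y k i s = w i s

theorem nonempty_approxEquilibriumSeq [∀ i, CompactSpace (X i)] [∀ i, BorelSpace (X i)]
    [IsFiniteMeasure μ] (Γ : DiscountedGame μ X) (hm : m ≤ mS)
    (hcg : @MeasurableSpace.CountablyGenerated S m)
    (hq : ∀ s x, AEStronglyMeasurable[m] (Γ.density s x) μ) :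
    Nonempty Γ.ApproxEquilibriumSeq := by
  obtain ⟨π, hπ, hlim⟩ := exists_partitions_tendsto_condExp (μ := μ) hcg hm
  choose T c V Y f hc hV hY havg hf using fun n =>
    Γ.exists_isApproxNash_of_partition (hπ n) (ε := 1 / (n + 1)) Nat.one_div_pos_of_nat
  have hVm (n i) : Measurable fun s => V n i (c n s) := (measurable_of_finite (V n i)).comp (hc n)
  refine ⟨T, c, V, fun n i s => Y n i (π n s), f, hc, hV,
    fun n i => (measurable_of_finite (Y n i)).comp (hπ n), fun n i s => hY n i _,
    fun i s x => ?_, hf⟩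
  refine squeeze_zero_norm (fun n => ?_) (by
    simpa only [mul_zero] using (hlim _ (Γ.integrable_density s x) (hq s x)).const_mul Γ.bound)
  have hcond : ∫ s₁, Y n i (π n s₁) * Γ.density s x s₁ ∂μ = ∫ s₁, V n i (c n s₁) *
      (μ[Γ.density s x|MeasurableSpace.comap (π n) inferInstance]) s₁ ∂μ :=
    integral_mul_eq_integral_mul_condExp (measurable_iff_comap_le.1 (hπ n)) (hVm n i)
      (fun s => hV n i _) ((measurable_of_finite (Y n i)).comp (comap_measurable _))
      (fun s => hY n i _) (Γ.integrable_density s x) (by rintro _ ⟨E, _, rfl⟩; exact havg n i E)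
  simp only [hcond]
  exact abs_integral_mul_sub_le (hVm n i) (fun s => hV n i _) integrable_condExp
    (Γ.integrable_density s x)

namespace ApproxEquilibriumSeq

variable {Γ : DiscountedGame μ X}

theorem measurable_value_cell (E : Γ.ApproxEquilibriumSeq) (n : ℕ) (i : ι) :
    Measurable fun s => E.value n i (E.cell n s) :=
  (measurable_of_finite (E.value n i)).comp (E.measurable_cell n)

theorem tendsto_integral_continuation (E : Γ.ApproxEquilibriumSeq) {σ : ℕ → ℕ}
    (hσ : Tendsto σ atTop atTop) {i : ι} {s : S} {x : ∀ j, X j} {r : ℝ}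
    (hlim : Tendsto (fun n => ∫ s₁, E.value (σ n) i (E.cell (σ n) s₁) * Γ.density s x s₁ ∂μ) atTop
      (nhds r)) :
    Tendsto (fun n => ∫ s₁, E.continuation (σ n) i s₁ * Γ.density s x s₁ ∂μ) atTop (nhds r) := by
  simpa only [Function.comp_apply, sub_add_cancel, zero_add] using
    ((E.tendsto_integral_sub i s x).comp hσ).add hlim

theorem isNash_of_tendsto [∀ i, CompactSpace (X i)] [∀ i, BorelSpace (X i)]
    (E : Γ.ApproxEquilibriumSeq) {w : ι → S → ℝ} {C : ℝ} (hw : ∀ i, Measurable (w i))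
    (hC : ∀ i s, |w i s| ≤ C) {τ : ℕ → ℕ} (hτ : Tendsto τ atTop atTop) {s : S}
    (hlim : ∀ i x, Tendsto (fun n => ∫ s₁, E.continuation (τ n) i s₁ * Γ.density s x s₁ ∂μ)
      atTop (nhds (∫ s₁, w i s₁ * Γ.density s x s₁ ∂μ)))
    {f₀ : ∀ i, ProbabilityMeasure (X i)} {v₀ : ι → ℝ}
    (hf : Tendsto (fun n => E.strategy (τ n) (E.cell (τ n) s)) atTop (nhds f₀))
    (hv : ∀ i, Tendsto (fun n => E.value (τ n) i (E.cell (τ n) s)) atTop (nhds (v₀ i))) :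
    IsNash (fun i => Γ.feasible i s) (fun i => Γ.auxPayoff w i s) f₀ v₀ :=
  IsNash.of_tendsto_isApproxNash (fun i => Γ.isClosed_feasible i s)
    (fun i => Γ.nonempty_feasible i s) (fun n => E.isApproxNash (τ n) s)
    (tendsto_one_div_add_atTop_nhds_zero_nat.comp hτ)
    (fun n i => Γ.continuous_auxPayoff (E.measurable_continuation (τ n) i)
      (E.abs_continuation_le (τ n) i) s)
    (fun i => Γ.continuous_auxPayoff (hw i) (hC i) s)
    (fun i => Γ.tendstoUniformly_auxPayoff (fun n => E.measurable_continuation (τ n) i)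
      (fun n => E.abs_continuation_le (τ n) i) (hlim i)) hf hv

theorem exists_measurable_limit [∀ i, CompactSpace (X i)] [∀ i, BorelSpace (X i)]
    (E : Γ.ApproxEquilibriumSeq) (σ : ℕ → ℕ) {L : ℕ → ℕ} {a : ∀ N, Fin (L N) → ℝ}
    {t : ∀ N, Fin (L N) → ℕ} (ha : ∀ N, a N ∈ stdSimplex ℝ (Fin (L N)))
    (ht : ∀ N l, N ≤ t N l) :
    ∃ (b : S → Fin (Fintype.card ι + 1) → ℝ) (y : Fin (Fintype.card ι + 1) → ι → S → ℝ)
      (F : Fin (Fintype.card ι + 1) → S → ∀ i, ProbabilityMeasure (X i)),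
      Measurable b ∧ (∀ s, b s ∈ stdSimplex ℝ (Fin (Fintype.card ι + 1))) ∧
      (∀ k i, Measurable (y k i)) ∧ (∀ k i s, |y k i s| ≤ Γ.bound) ∧
      (∀ k i B, MeasurableSet B → Measurable fun s => (F k s i : Measure (X i)) B) ∧
      ∀ s, ∃ (N : ℕ → ℕ) (τ : Fin (Fintype.card ι + 1) → ℕ → ℕ), Tendsto N atTop atTop ∧
        (∀ k, Tendsto (τ k) atTop atTop) ∧
        (∀ k i, Tendsto (fun r => E.value (σ (τ k r)) i (E.cell (σ (τ k r)) s)) atTop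
          (nhds (y k i s))) ∧
        (∀ k, Tendsto (fun r => E.strategy (σ (τ k r)) (E.cell (σ (τ k r)) s)) atTop
          (nhds (F k s))) ∧
        ∀ i, Tendsto (fun r => ∑ l, a (N r) l *
          E.value (σ (t (N r) l)) i (E.cell (σ (t (N r) l)) s)) atTop
          (nhds (∑ k, b s k * y k i s)) := by
  let Z := (ι → Set.Icc (-Γ.bound) Γ.bound) × ∀ i, ProbabilityMeasure (X i)
  have hval (i) : Continuous fun p : Z => (p.1 i : ℝ) :=
    continuous_subtype_val.comp ((continuous_apply i).comp continuous_fst)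
  have hstr (i) : Continuous fun p : Z => p.2 i := (continuous_apply i).comp continuous_snd
  obtain ⟨b, φ, hb, hb', hφ, hlim⟩ := exists_measurable_limit_convexCombination
    (fun n => E.measurable_cell (σ n))
    (fun n x => ((fun i => ⟨E.value (σ n) i x, abs_le.1 (E.abs_value_le _ _ _)⟩,
      E.strategy (σ n) x) : Z)) (continuous_pi hval) ha ht
  refine ⟨b, fun k i s => (φ k s).1 i, fun k s => (φ k s).2, hb, hb',
    fun k i => (hval i).borel_measurable.comp (hφ k), fun k i s => abs_le.2 ((φ k s).1 i).2,
    fun k i B hB => (measurable_borel_probabilityMeasure_apply hB).comp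
      ((hstr i).borel_measurable.comp (hφ k)), fun s => ?_⟩
  obtain ⟨N, τ, hN, hτ, hφlim, hsum⟩ := hlim s
  exact ⟨N, τ, hN.tendsto_atTop, fun k => tendsto_atTop_mono (hτ k) hN.tendsto_atTop,
    fun k i => ((hval i).tendsto _).comp (hφlim k),
    fun k => (continuous_snd.tendsto _).comp (hφlim k), hsum⟩

end ApproxEquilibriumSeq

theorem exists_isEquilibriumMixture [∀ i, CompactSpace (X i)] [∀ i, BorelSpace (X i)]
    [IsFiniteMeasure μ] (Γ : DiscountedGame μ X) (hm : m ≤ mS)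
    (hcg : @MeasurableSpace.CountablyGenerated S m)
    (hq : ∀ s x, AEStronglyMeasurable[m] (Γ.density s x) μ) :
    ∃ w b y F, Γ.IsEquilibriumMixture (K := Fin (Fintype.card ι + 1)) w b y F := by
  obtain ⟨E⟩ := Γ.nonempty_approxEquilibriumSeq hm hcg hq
  obtain ⟨σ, w, hσ, hw, hwC, htest, L, a, t, ha, ht, hae⟩ :=
    exists_subseq_tendsto_integral_mul_and_convexCombination (P := μ) Γ.bound_nonneg
      E.measurable_value_cell fun n i _ => E.abs_value_le n i _
  obtain ⟨b, y, F, hb, hb', hy, hyC, hF, hlim⟩ := E.exists_measurable_limit σ ha ht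
  refine ⟨w, b, y, F, hw, hwC, hb, hb', hy, hyC, hF, fun k s => ?_, ?_, fun s hs hμs k i => ?_⟩
  · obtain ⟨N, τ, -, hτ, hval, hstr, -⟩ := hlim s
    exact E.isNash_of_tendsto hw hwC (hσ.tendsto_atTop.comp (hτ k))
      (fun i x => (E.tendsto_integral_continuation hσ.tendsto_atTop (htest i _
        (Γ.measurable_density s x) (Γ.integrable_density s x))).comp (hτ k)) (hstr k) (hval k)
  · filter_upwards [hae] with s hs i
    obtain ⟨N, τ, hN, -, -, -, hsum⟩ := hlim s
    exact tendsto_nhds_unique ((hs i).comp hN) (hsum i)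
  · obtain ⟨N, τ, -, hτ, hval, -, -⟩ := hlim s
    exact tendsto_nhds_unique (hval k i)
      ((tendsto_apply_of_tendsto_integral_mul (htest i) hs hμs).comp (hτ k))

end DiscountedGame

/-! ### Equilibria of the stochastic game -/

section BestReply

variable {ι : Type*} [Fintype ι] [DecidableEq ι] {X : ι → Type*} [∀ i, MeasurableSpace (X i)]

theorem measurePreserving_update (f : ∀ i, Measure (X i)) [∀ i, IsProbabilityMeasure (f i)]
    (i : ι) : MeasurePreserving (fun p : (∀ j, X j) × X i => Function.update p.1 i p.2)
      ((Measure.pi f).prod (f i)) (Measure.pi f) := by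
  refine ⟨measurable_update', (Measure.pi_eq fun B hB => ?_).symm⟩
  have hpre : (fun p : (∀ j, X j) × X i => Function.update p.1 i p.2) ⁻¹' Set.univ.pi B =
      Set.univ.pi (Function.update B i Set.univ) ×ˢ B i := by
    ext p
    simp only [Set.mem_preimage, Set.mem_prod, Set.mem_univ_pi]
    rw [Function.forall_update_iff p.1 fun j x => x ∈ B j,
      Function.forall_update_iff B fun j D => p.1 j ∈ D]
    simp only [Set.mem_univ, true_and, and_comm]
  rw [Measure.map_apply measurable_update' (.univ_pi hB), hpre, Measure.prod_prod, Measure.pi_pi,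
    ← Finset.mul_prod_erase _ _ (Finset.mem_univ i), Function.update_self, measure_univ, one_mul,
    mul_comm, ← Finset.mul_prod_erase _ (fun j => f j (B j)) (Finset.mem_univ i)]
  refine congrArg _ (Finset.prod_congr rfl fun j hj => ?_)
  rw [Function.update_of_ne (Finset.ne_of_mem_erase hj)]

theorem IsNash.isGreatest {A : ∀ i, Set (X i)} {h : ι → (∀ j, X j) → ℝ}
    {f : ∀ i, ProbabilityMeasure (X i)} {v : ι → ℝ} (H : IsNash A h f v) {i : ι}
    (hA : MeasurableSet (A i))
    (hh : Integrable (h i) (Measure.pi fun j => (f j : Measure (X j)))) :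
    IsGreatest ((fun a => ∫ x, h i (Function.update x i a)
      ∂Measure.pi fun j => (f j : Measure (X j))) '' A i) (v i) := by
  refine ⟨?_, Set.forall_mem_image.2 (H.integral_update_le i)⟩
  have hp := measurePreserving_update (fun j => (f j : Measure (X j))) i
  have hint := hp.integrable_comp_of_integrable hh
  obtain ⟨a, ha, hle⟩ := exists_notMem_null_integral_le hint.integral_prod_right
    ((prob_compl_eq_zero_iff hA).2 (H.measure_eq_one i))
  have ha' : a ∈ A i := Set.notMem_compl_iff.1 ha
  refine ⟨a, ha', (H.integral_update_le i a ha').antisymm (le_of_eq_of_le ?_ hle)⟩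
  have hmap := integral_map (f := h i) hp.aemeasurable
    (by rw [hp.map_eq]; exact hh.aestronglyMeasurable)
  rw [hp.map_eq] at hmap
  rw [H.eq_integral, hmap]
  exact integral_prod_symm _ hint

end BestReply

theorem setIntegral_compl_eq_of_forall_atom {S : Type*} [MeasurableSpace S] {μ : Measure S}
    {S₁ : Set S} (hS₁ : S₁ᶜ.Countable) (hsing : ∀ s ∈ S₁ᶜ, MeasurableSet {s}) {g h : S → ℝ}
    (hgh : ∀ s ∈ S₁ᶜ, μ {s} ≠ 0 → g s = h s) :
    ∫ s in S₁ᶜ, g s ∂μ = ∫ s in S₁ᶜ, h s ∂μ := by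
  have hnull : μ (⋃ s ∈ {s ∈ S₁ᶜ | μ {s} = 0}, {s}) = 0 :=
    (measure_biUnion_null_iff (hS₁.mono fun s hs => hs.1)).2 fun s hs => hs.2
  have hmeas : MeasurableSet S₁ᶜ := by
    rw [← Set.biUnion_of_singleton S₁ᶜ]
    exact .biUnion hS₁ hsing
  refine setIntegral_congr_ae hmeas ?_
  filter_upwards [compl_mem_ae_iff.2 hnull] with s hs hs₁
  refine hgh s hs₁ fun hμ => hs ?_
  exact Set.mem_biUnion (x := s) ⟨hs₁, hμ⟩ (Set.mem_singleton s)

namespace DiscountedGame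

variable {S : Type*} {mS : MeasurableSpace S} {μ : Measure S} {ι : Type*} {X : ι → Type*}
  [Fintype ι] [DecidableEq ι] [∀ i, MetricSpace (X i)] [∀ i, MeasurableSpace (X i)]

/-- The stationary Markov strategies `f` form a Markov perfect equilibrium with continuation
values `v`. -/
structure IsStationaryEquilibrium (Γ : DiscountedGame μ X) (f : S → ∀ i, ProbabilityMeasure (X i))
    (v : ι → S → ℝ) : Prop where
  measurable_strategy : ∀ i B, MeasurableSet B → Measurable fun s => (f s i : Measure (X i)) B
  measurable_value : ∀ i, Measurable (v i)
  abs_value_le : ∀ i s, |v i s| ≤ Γ.bound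
  isNash : ∀ s, IsNash (fun i => Γ.feasible i s) (fun i => Γ.auxPayoff v i s) (f s) fun i => v i s

variable {Γ : DiscountedGame μ X} {S₁ : Set S}

theorem IsStationaryEquilibrium.isGreatest [∀ i, CompactSpace (X i)] [∀ i, BorelSpace (X i)]
    {f : S → ∀ i, ProbabilityMeasure (X i)} {v : ι → S → ℝ}
    (H : Γ.IsStationaryEquilibrium f v) (i : ι) (s : S) :
    IsGreatest ((fun a => ∫ x, Γ.auxPayoff v i s (Function.update x i a)
      ∂Measure.pi fun j => (f s j : Measure (X j))) '' Γ.feasible i s) (v i s) :=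
  (H.isNash s).isGreatest (Γ.isClosed_feasible i s).measurableSet <|
    (BoundedContinuousFunction.mkOfCompact ⟨_, Γ.continuous_auxPayoff (H.measurable_value i)
      (H.abs_value_le i) s⟩).integrable _

theorem IsEquilibriumMixture.auxPayoff_selection {K : Type*} [Fintype K] [MeasurableSpace K]
    [MeasurableSingletonClass K] {w : ι → S → ℝ} {b : S → K → ℝ} {y : K → ι → S → ℝ}
    {F : K → S → ∀ i, ProbabilityMeasure (X i)} (H : Γ.IsEquilibriumMixture w b y F)
    (hS₁ : MeasurableSet S₁) (hcount : S₁ᶜ.Countable) (hsing : ∀ s ∈ S₁ᶜ, MeasurableSet {s})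
    {κ : S → K} (hκ : Measurable κ)
    (hint : ∀ i s x, ∫ s₁ in S₁, y (κ s₁) i s₁ * Γ.density s x s₁ ∂μ =
      ∫ s₁ in S₁, (∑ k, b s₁ k * y k i s₁) * Γ.density s x s₁ ∂μ) :
    Γ.auxPayoff (fun i s => y (κ s) i s) = Γ.auxPayoff w := by
  ext i s x
  have hae : ∫ s₁ in S₁, (∑ k, b s₁ k * y k i s₁) * Γ.density s x s₁ ∂μ =
      ∫ s₁ in S₁, w i s₁ * Γ.density s x s₁ ∂μ := by
    refine integral_congr_ae ?_
    filter_upwards [ae_restrict_of_ae H.ae_eq_sum] with s₁ hs₁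
    rw [hs₁ i]
  have hatom : ∫ s₁ in S₁ᶜ, y (κ s₁) i s₁ * Γ.density s x s₁ ∂μ =
      ∫ s₁ in S₁ᶜ, w i s₁ * Γ.density s x s₁ ∂μ :=
    setIntegral_compl_eq_of_forall_atom hcount hsing fun s₁ hs₁ hμ => by
      rw [H.value_eq_of_atom s₁ (hsing s₁ hs₁) hμ]
  rw [auxPayoff, auxPayoff, ← integral_add_compl hS₁ (integrable_mul_of_abs_le
      (measurable_apply_selection (fun k => H.measurable_value k i) hκ)
      (fun s₁ => H.abs_value_le _ i s₁) (Γ.integrable_density s x)), hint, hae, hatom,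
    integral_add_compl hS₁ (integrable_mul_of_abs_le (H.measurable_continuation i)
      (H.abs_continuation_le i) (Γ.integrable_density s x))]

theorem exists_isStationaryEquilibrium [∀ i, CompactSpace (X i)] [∀ i, BorelSpace (X i)]
    [IsFiniteMeasure μ] {W : Type*} {G mW : MeasurableSpace W} {e : W → S}
    (he : MeasurableEmbedding e) (hcount : (Set.range e)ᶜ.Countable)
    (hsing : ∀ s ∈ (Set.range e)ᶜ, MeasurableSet {s}) {J : Type*} [Fintype J]
    {qj : J → S → S → (∀ j, X j) → ℝ} {ρ : J → S → ℝ}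
    (hqj : ∀ j, Measurable fun p : S × S × (∀ j, X j) => qj j p.1 p.2.1 p.2.2)
    (hdec : IsDecomposableCoarser (Θ := S × ∀ j, X j) G (μ.comap e)
      (fun θ s₁ => Γ.density θ.1 θ.2 (e s₁)) (fun j θ s₁ => qj j (e s₁) θ.1 θ.2)
      fun j s₁ => ρ j (e s₁)) :
    ∃ f v, Γ.IsStationaryEquilibrium f v := by
  have hρ (j) : AEStronglyMeasurable (ρ j) (μ.restrict (Set.range e)) := by
    rw [← he.map_comap, he.aestronglyMeasurable_map_iff]
    exact (hdec.integrable j).aestronglyMeasurable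
  obtain ⟨w, b, y, F, H⟩ : ∃ w b y F,
      Γ.IsEquilibriumMixture (K := Fin (Fintype.card ι + 1)) w b y F := by
    obtain ⟨m, hm, hcg, hq⟩ := exists_countablyGenerated_aestronglyMeasurable hcount hsing hqj hρ
      (q := fun θ => Γ.density θ.1 θ.2) fun θ => Set.forall_mem_range.2 (hdec.eq_sum θ)
    exact Γ.exists_isEquilibriumMixture hm hcg fun s x => hq (s, x)
  obtain ⟨κ, hκ, hint⟩ := exists_selection_setIntegral_range_eq
    (q := fun (θ : S × ∀ j, X j) => Γ.density θ.1 θ.2) (qj := fun j θ s₁ => qj j s₁ θ.1 θ.2)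
    (ρ := ρ) he hdec
    H.measurable_value H.abs_value_le H.measurable_weight H.weight_mem
  refine ⟨fun s => F (κ s) s, fun i s => y (κ s) i s,
    fun i B hB => measurable_apply_selection (fun k => H.measurable_strategy k i B hB) hκ,
    fun i => measurable_apply_selection (fun k => H.measurable_value k i) hκ,
    fun i s => H.abs_value_le _ i s, fun s => ?_⟩
  rw [H.auxPayoff_selection he.measurableSet_range hcount hsing hκ fun i s x => hint (s, x) i]
  exact H.isNash (κ s) s

end DiscountedGame

theorem integral_withDensity_ofReal {S : Type*} [MeasurableSpace S] {μ : Measure S} {q : S → ℝ}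
    (hq : Measurable q) (hq₀ : ∀ s, 0 ≤ q s) (g : S → ℝ) :
    ∫ s, g s ∂μ.withDensity (fun s => ENNReal.ofReal (q s)) = ∫ s, g s * q s ∂μ := by
  rw [integral_withDensity_eq_integral_toReal_smul hq.ennreal_ofReal
    (ae_of_all _ fun _ => ENNReal.ofReal_lt_top)]
  simp only [ENNReal.toReal_ofReal (hq₀ _), smul_eq_mul, mul_comm]

theorem setIntegral_eq_measureReal_withDensity_ofReal {S : Type*} [MeasurableSpace S]
    {μ : Measure S} {q : S → ℝ} (hq : Measurable q) (hq₀ : ∀ s, 0 ≤ q s) {E : Set S}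
    (hE : MeasurableSet E) :
    ∫ s in E, q s ∂μ = (μ.withDensity fun s => ENNReal.ofReal (q s)).real E := by
  rw [integral_eq_lintegral_of_nonneg_ae (ae_of_all _ hq₀) hq.aestronglyMeasurable,
    measureReal_def, withDensity_apply _ hE]

/-- **Proposition 1 (He–Sun)**: every discounted stochastic game with a decomposable
coarser transition kernel on the atomless part has a stationary Markov perfect
equilibrium. -/
theorem exists_stationary_markov_perfect_equilibrium_of_decomposable_coarser_kernel_atomless_part
    {m : ℕ} {S : Type*} [mS : MeasurableSpace S]
    (lam : Measure S) [IsProbabilityMeasure lam]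
    -- `S` splits into the atomless part `S₁` and the purely atomic part `S₂`,
    -- where `S₂` is countable and each of its points is measurable
    (S₁ S₂ : Set S) (hS₁ : MeasurableSet S₁) (hS₂ : MeasurableSet S₂)
    (h_disj : Disjoint S₁ S₂) (h_union : S₁ ∪ S₂ = Set.univ)
    (hS₂_cnt : S₂.Countable) (hS₂_sing : ∀ s ∈ S₂, MeasurableSet ({s} : Set S))
    (h_atomless₁ : ∀ D ⊆ S₁, MeasurableSet D → 0 < lam D →
      ∃ D₀ ⊆ D, MeasurableSet D₀ ∧ 0 < lam D₀ ∧ lam D₀ < lam D)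
    -- compact metric action spaces
    (X : Fin m → Type*) [∀ i, MetricSpace (X i)] [∀ i, CompactSpace (X i)]
    [∀ i, Nonempty (X i)] [∀ i, MeasurableSpace (X i)] [∀ i, BorelSpace (X i)]
    -- feasible-action correspondences
    (A : ∀ i, S → Set (X i))
    (hA_ne : ∀ i s, (A i s).Nonempty)
    (hA_cp : ∀ i s, IsCompact (A i s))
    (hA_meas : ∀ i (U : Set (X i)), IsOpen U → MeasurableSet {s | (A i s ∩ U).Nonempty})
    -- stage payoffs, bounded by `C`, measurable in `s`, continuous in `x`
    (C : ℝ) (u : Fin m → S → (∀ j, X j) → ℝ)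
    (hu_bd : ∀ i s x, |u i s x| ≤ C)
    (hu_meas : ∀ i x, Measurable fun s => u i s x)
    (hu_cont : ∀ i s, Continuous (u i s))
    -- discount factors
    (β : Fin m → ℝ) (hβ : ∀ i, β i ∈ Set.Ico (0 : ℝ) 1)
    -- transition probability
    (Q : S → (∀ j, X j) → Measure S)
    (hQ_prob : ∀ s x, IsProbabilityMeasure (Q s x))
    (hQ_meas : ∀ E : Set S, MeasurableSet E →
      Measurable fun p : S × (∀ j, X j) => Q p.1 p.2 E)
    -- transition kernel (Radon–Nikodym derivative with respect to `lam`)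
    (q : S → (∀ j, X j) → S → ℝ)
    (hq_nonneg : ∀ s x s₁, 0 ≤ q s x s₁)
    (hq_meas : ∀ s x, Measurable (q s x))
    (hQq : ∀ s x, Q s x = lam.withDensity fun s₁ => ENNReal.ofReal (q s x s₁))
    -- L¹-norm continuity of the kernel in the action variable
    (hq_cont : ∀ s (xs : ℕ → ∀ j, X j) (x0 : ∀ j, X j), Tendsto xs atTop (nhds x0) →
      Tendsto (fun n => ∫ s₁, |q s (xs n) s₁ - q s x0 s₁| ∂lam) atTop (nhds 0))
    -- on the atomless part, the kernel decomposes as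
    -- `q(s₁|s,x) = ∑ⱼ qj j (s₁,s,x) * rho j s₁` for `s₁ ∈ S₁`
    (J : ℕ) (hJ : 0 < J)
    (qj : Fin J → S → S → (∀ j, X j) → ℝ) (rho : Fin J → S → ℝ)
    (hqj_nonneg : ∀ j s₁ s x, 0 ≤ qj j s₁ s x)
    (hqj_meas : ∀ j, Measurable fun p : S × S × (∀ j, X j) => qj j p.1 p.2.1 p.2.2)
    (hrho_nonneg : ∀ j s₁, 0 ≤ rho j s₁)
    (hrho_int : ∀ j, Integrable (rho j) (lam.restrict S₁))
    (hq_decomp : ∀ s x, ∀ s₁ ∈ S₁, q s x s₁ = ∑ j, qj j s₁ s x * rho j s₁)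
    -- decomposable coarser transition kernel on the atomless part: for some
    -- sub-σ-algebra `G` of the trace σ-algebra on `S₁`, each `qj j (·,s,x)` is
    -- `G`-measurable on `S₁` and the trace σ-algebra has no `G`-atom under `lam`
    (G : MeasurableSpace ↥S₁) (hG : G ≤ Subtype.instMeasurableSpace)
    (hqj_G : ∀ j s x, Measurable[G] fun s₁ : ↥S₁ => qj j s₁.val s x)
    (h_no_atom : ∀ D : Set ↥S₁, MeasurableSet[Subtype.instMeasurableSpace] D →
      ¬ IsGAtom Subtype.instMeasurableSpace G
        (@Measure.comap ↥S₁ S Subtype.instMeasurableSpace mS Subtype.val lam) D) :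
    ∃ (f : ∀ i, S → Measure (X i)) (v : Fin m → S → ℝ),
      -- `f` is a stationary Markov strategy profile
      (∀ i s, IsProbabilityMeasure (f i s)) ∧
      (∀ i (B : Set (X i)), MeasurableSet B → Measurable fun s => f i s B) ∧
      (∀ i s, f i s (A i s) = 1) ∧
      -- `v` are the (essentially bounded measurable) continuation values of `f`
      (∀ i, Measurable (v i)) ∧ (∀ i s, |v i s| ≤ C) ∧
      (∀ i s, v i s = ∫ x, ((1 - β i) * u i s x
        + β i * ∫ s₁, v i s₁ ∂(Q s x)) ∂(Measure.pi fun j => f j s)) ∧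
      -- `f` is a stationary Markov perfect equilibrium: for all `i` and `s`,
      -- `v i s` is the maximum over `a ∈ A i s` of the expected payoff
      (∀ i s, IsGreatest ((fun a => ∫ x, ((1 - β i) * u i s (Function.update x i a)
        + β i * ∫ s₁, v i s₁ ∂(Q s (Function.update x i a))) ∂(Measure.pi fun j => f j s))
        '' (A i s)) (v i s)) := by
  have hcompl : S₁ᶜ = S₂ := IsCompl.compl_eq ⟨h_disj, codisjoint_iff.2 h_union⟩
  have he := MeasurableEmbedding.subtype_coe hS₁
  have hden (s x) {E} (hE : MeasurableSet E) : ∫ s₁ in E, q s x s₁ ∂lam = (Q s x).real E :=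
    hQq s x ▸ setIntegral_eq_measureReal_withDensity_ofReal (hq_meas s x) (hq_nonneg s x) hE
  let Γ : DiscountedGame lam X :=
    { feasible := A, nonempty_feasible := hA_ne, isClosed_feasible i s := (hA_cp i s).isClosed,
      measurableSet_feasible := hA_meas, payoff := u, bound := |C|, bound_nonneg := abs_nonneg C,
      abs_payoff_le i s x := (hu_bd i s x).trans (le_abs_self C), measurable_payoff := hu_meas,
      continuous_payoff := hu_cont, discount := β,
      discount_mem i := Set.Ico_subset_Icc_self (hβ i), density := q, density_nonneg := hq_nonneg,
      measurable_density := hq_meas, tendsto_density := hq_cont,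
      integral_density s x := by rw [← setIntegral_univ, hden s x .univ, probReal_univ],
      measurable_setIntegral_density x E hE := by
        simp only [hden _ x hE]
        exact ((hQ_meas E hE).comp measurable_prodMk_right).ennreal_toReal }
  obtain ⟨f, v, H⟩ := Γ.exists_isStationaryEquilibrium he (by rwa [Subtype.range_coe, hcompl])
    (by rwa [Subtype.range_coe, hcompl]) hqj_meas
    { le := hG, not_isGAtom := h_no_atom, measurable j θ := hqj_G j θ.1 θ.2,
      integrable j := (integrableOn_iff_comap_subtypeVal hS₁).1 (hrho_int j),
      nonneg j θ s₁ := hqj_nonneg j s₁ θ.1 θ.2, nonneg' j s₁ := hrho_nonneg j s₁,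
      integrable_density θ :=
        (integrableOn_iff_comap_subtypeVal hS₁).1 (Γ.integrable_density θ.1 θ.2).integrableOn,
      eq_sum θ s₁ := hq_decomp θ.1 θ.2 s₁ s₁.2 }
  have hpayoff (i s x) :
      (1 - β i) * u i s x + β i * ∫ s₁, v i s₁ ∂(Q s x) = Γ.auxPayoff v i s x := by
    rw [hQq, integral_withDensity_ofReal (hq_meas s x) (hq_nonneg s x), DiscountedGame.auxPayoff]
  refine ⟨fun i s => f s i, v, inferInstance, H.measurable_strategy,
    fun i s => (H.isNash s).measure_eq_one i, H.measurable_value,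
    fun i s => (H.abs_value_le i s).trans_eq <| abs_of_nonneg <| (abs_nonneg _).trans <|
      hu_bd i s fun _ => Classical.arbitrary _, ?_⟩
  simp only [hpayoff]
  exact ⟨fun i s => (H.isNash s).eq_integral i, H.isGreatest⟩
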